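/- arXiv:1007.4584 — 3 statements merged into one kernel-verified Lean document; each statement's English description precedes it below -/
import Mathlib

section
/- For n ≥ 1 and n-1 ≤ k ≤ 2n-3, the number of non-crossing connected graphs on 2n vertices (in convex position) with 2k or 2k-1 edges that are invariant under rotation by π (i.e., under the antipodal map i ↦ i+n mod 2n), summed over these two edge counts, equals binom(3n-1, n+k)*binom(k-1, n-1). -/
/-- Two chords of the circle (with vertices `0 < 1 < ⋯ < n-1` in convex position)
cross iff their endpoints interleave. -/
def Crosses {n : ℕ} (e f : Sym2 (Fin n)) : Prop :=
  ∃ a b c d : Fin n, e = s(a, b) ∧ f = s(c, d) ∧ a < c ∧ c < b ∧ b < d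

/-- A set of edges is non-crossing (and has no loops). -/
def IsNC {n : ℕ} (E : Finset (Sym2 (Fin n))) : Prop :=
  (∀ e ∈ E, ¬ e.IsDiag) ∧ ∀ e ∈ E, ∀ f ∈ E, ¬ Crosses e f

/-- The simple graph on `Fin n` determined by an edge set. -/
def graphOf {n : ℕ} (E : Finset (Sym2 (Fin n))) : SimpleGraph (Fin n) :=
  SimpleGraph.fromEdgeSet (↑E)

/-- Non-crossing connected graph. -/
def IsNCC {n : ℕ} (E : Finset (Sym2 (Fin n))) : Prop :=
  IsNC E ∧ (graphOf E).Connected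

/-- Number of non-crossing connected graphs on `n` vertices with `k` edges. -/
noncomputable def ncc (n k : ℕ) : ℕ :=
  Nat.card {E : Finset (Sym2 (Fin n)) // IsNCC E ∧ E.card = k}

/-- The edge set contains the edge `{1, n}` (in `Fin n` coordinates, `{0, n-1}`). -/
def HasEdge1n {n : ℕ} (E : Finset (Sym2 (Fin n))) : Prop :=
  ∃ a b : Fin n, (a : ℕ) = 0 ∧ (b : ℕ) = n - 1 ∧ s(a, b) ∈ E

/-- Number of non-crossing connected graphs on `n` vertices with `k` edges
containing the edge `{1, n}`. -/
noncomputable def nccEdge (n k : ℕ) : ℕ :=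
  Nat.card {E : Finset (Sym2 (Fin n)) // IsNCC E ∧ E.card = k ∧ HasEdge1n E}

/-- Rotation of the circle of `n` vertices by `m` positions. -/
def rotMap (n m : ℕ) : Fin n → Fin n := fun i => ⟨(i.1 + m) % n, Nat.mod_lt _ i.pos⟩

/-- The edge set is fixed under rotation by `m` positions. -/
def RotInv (n m : ℕ) (E : Finset (Sym2 (Fin n))) : Prop :=
  ∀ e ∈ E, Sym2.map (rotMap n m) e ∈ E

/-- Number of non-crossing connected graphs on `n` vertices with `k` edges fixed
under rotation by `m` positions. -/
noncomputable def nccRot (n k m : ℕ) : ℕ :=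
  Nat.card {E : Finset (Sym2 (Fin n)) // IsNCC E ∧ E.card = k ∧ RotInv n m E}

/-!
Lift an invariant graph `F` to `ℤ` and call a vertex visible if no arc spanning at most half of the
circle passes strictly over it. Cutting `F` at a visible vertex `v` gives a connected non-crossing
graph on `n + 1` points of a line, with one arc per antipodal pair of edges, and wrapping such a
graph around the circle gives `F` back. If `F` has `m` visible vertices up to the half-turn, then
the graph on the line has `m + 1` visible points, so counting the pairs `(F, v)` in two ways gives
`m * #{F with m visible vertices} = n * N n k m`, where `N n k m` is the number of graphs on the
line with `k` arcs and `m + 1` visible points.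

To compute `N`, remove the longest arc at the root `0`. Either the rest is connected, or it splits
in two at a gap, whose ends are then merged. The resulting recurrence is solved by
`N (n + 1) (k + 1) m = m / (n + 1) * choose k n * choose (3 * n + 2 - m) (n + k + 1)`, and summing
over `m` is the hockey-stick identity.
-/

open Finset

section Rank

variable {α : Type*} [LinearOrder α]

/-- The number of elements of `V` above `b`: the position of `b` in `V`, counted from the top. -/
def cardAbove (V : Finset α) (b : α) : ℕ := #{v ∈ V | b < v}

lemma strictAntiOn_cardAbove (V : Finset α) : StrictAntiOn (cardAbove V) V := by
  intro b _ c hc hbc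
  refine card_lt_card ((ssubset_iff_of_subset fun v => ?_).2 ⟨c, ?_, ?_⟩)
  · simp only [mem_filter]
    exact fun hv => ⟨hv.1, hbc.trans hv.2⟩
  · exact mem_filter.2 ⟨hc, hbc⟩
  · simp

lemma cardAbove_lt_card {V : Finset α} {b : α} (hb : b ∈ V) : cardAbove V b < #V :=
  card_lt_card (filter_ssubset.2 ⟨b, hb, lt_irrefl b⟩)

lemma image_cardAbove (V : Finset α) : V.image (cardAbove V) = range #V := by
  refine eq_of_subset_of_card_le (image_subset_iff.2 fun b hb => ?_) ?_
  · exact mem_range.2 (cardAbove_lt_card hb)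
  · rw [card_range, card_image_of_injOn (strictAntiOn_cardAbove V).injOn]

lemma card_filter_cardAbove_eq (V : Finset α) (m : ℕ) :
    #{b ∈ V | cardAbove V b = m} = if m < #V then 1 else 0 := by
  split_ifs with hm
  · rw [← mem_range, ← image_cardAbove V, mem_image] at hm
    obtain ⟨b, hb, rfl⟩ := hm
    refine card_eq_one.2 ⟨b, ?_⟩
    ext c
    rw [mem_filter, mem_singleton]
    constructor
    · exact fun hc => (strictAntiOn_cardAbove V).injOn hc.1 hb hc.2
    · rintro rfl
      exact ⟨hb, rfl⟩
  · rw [card_eq_zero, filter_eq_empty_iff]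
    rintro b hb rfl
    exact hm (cardAbove_lt_card hb)

lemma card_filter_le_add_cardAbove (V : Finset α) (b : α) :
    #{v ∈ V | v ≤ b} + cardAbove V b = #V := by
  simpa only [cardAbove, not_le] using card_filter_add_card_filter_not (s := V) (· ≤ b)

lemma cardAbove_congr {V W : Finset α} {b : α} (h : ∀ v, b < v → (v ∈ V ↔ v ∈ W)) :
    cardAbove V b = cardAbove W b := by
  refine congrArg card (Finset.ext fun v => ?_)
  simp only [mem_filter]
  exact and_congr_left (h v)

lemma card_pairs_cardAbove_eq (V : Finset α) (m : ℕ) :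
    #{p ∈ V ×ˢ V | cardAbove V p.2 = m ∧ p.1 ≤ p.2} = #V - m := by
  rcases lt_or_ge m #V with hm | hm
  · obtain ⟨b, hb, rfl⟩ : ∃ b ∈ V, cardAbove V b = m := by
      rwa [← mem_range, ← image_cardAbove V, mem_image] at hm
    have hpairs : {p ∈ V ×ˢ V | cardAbove V p.2 = cardAbove V b ∧ p.1 ≤ p.2}
        = {g ∈ V | g ≤ b} ×ˢ {b} := by
      ext ⟨g, c⟩
      simp only [mem_filter, mem_product, mem_singleton]
      constructor
      · rintro ⟨⟨hg, hc⟩, heq, hgc⟩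
        obtain rfl := (strictAntiOn_cardAbove V).injOn hc hb heq
        exact ⟨⟨hg, hgc⟩, rfl⟩
      · rintro ⟨⟨hg, hgb⟩, rfl⟩
        exact ⟨⟨hg, hb⟩, rfl, hgb⟩
    rw [hpairs, card_product, card_singleton, ← card_filter_le_add_cardAbove V b]
    omega
  · rw [Nat.sub_eq_zero_of_le hm, card_eq_zero, filter_eq_empty_iff]
    rintro ⟨g, b⟩ hp ⟨rfl, -⟩
    exact hm.not_gt (cardAbove_lt_card (mem_product.1 hp).2)

end Rank

section ConnectedArcs

/-- Exactly one end of the arc `(a, b)`, where `a < b`, lies in the interval `[x, y]`. -/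
abbrev Leaves {α : Type*} [LinearOrder α] (x y a b : α) : Prop :=
  (x ≤ a ∧ a ≤ y ∧ y < b) ∨ (a < x ∧ x ≤ b ∧ b ≤ y)

/-- `E` is the set of arcs of a connected non-crossing graph on the points `0, …, n` of a line.
Arcs are ordered pairs `a < b`, and connectedness is encoded by the requirement that every proper
subinterval be left by some arc, which is equivalent to it for non-crossing arcs. -/
structure IsConnArcs (n : ℕ) (E : Finset (ℕ × ℕ)) : Prop where
  isArc : ∀ {a b}, (a, b) ∈ E → a < b ∧ b ≤ n
  noncrossing : ∀ {a b c d}, (a, b) ∈ E → (c, d) ∈ E → ¬(a < c ∧ c < b ∧ b < d)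
  exists_leaves : ∀ {x y}, x ≤ y → y ≤ n → 0 < x ∨ y < n → ∃ a b, (a, b) ∈ E ∧ Leaves x y a b

/-- The points of `{0, …, n}` that are visible from above: no arc of `E` passes strictly over
them. -/
def visible (n : ℕ) (E : Finset (ℕ × ℕ)) : Finset ℕ :=
  {v ∈ range (n + 1) | ∀ p ∈ E, ¬(p.1 < v ∧ v < p.2)}

/-- The right end of the longest arc of `E` starting at the root `0` (and `0` if there is none). -/
noncomputable def rootEnd (E : Finset (ℕ × ℕ)) : ℕ := sSup {b | (0, b) ∈ E}

variable {n k m b g : ℕ} {E : Finset (ℕ × ℕ)}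

lemma mem_visible {v : ℕ} :
    v ∈ visible n E ↔ v ≤ n ∧ ∀ a b, (a, b) ∈ E → ¬(a < v ∧ v < b) := by
  simp only [visible, mem_filter, mem_range, Nat.lt_succ_iff, Prod.forall]

lemma zero_mem_visible : 0 ∈ visible n E := by simp [mem_visible]

lemma rootEnd_eq (hb : (0, b) ∈ E) (hmax : ∀ c, (0, c) ∈ E → c ≤ b) : rootEnd E = b :=
  IsGreatest.csSup_eq ⟨hb, hmax⟩

lemma IsConnArcs.isGreatest_rootEnd (h : IsConnArcs (n + 1) E) :
    IsGreatest {b | (0, b) ∈ E} (rootEnd E) := by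
  have hbdd : BddAbove {b | (0, b) ∈ E} := ⟨n + 1, fun _ hb => (h.isArc hb).2⟩
  obtain ⟨a, b, hab, hleaves⟩ := h.exists_leaves (x := 0) (y := 0) le_rfl (by omega) (by omega)
  obtain rfl : a = 0 := by omega
  exact ⟨Nat.sSup_mem ⟨b, hab⟩ hbdd, fun _ hc => le_csSup hbdd hc⟩

lemma IsConnArcs.root_mem (h : IsConnArcs (n + 1) E) : (0, rootEnd E) ∈ E := h.isGreatest_rootEnd.1

lemma IsConnArcs.le_rootEnd (h : IsConnArcs (n + 1) E) (hb : (0, b) ∈ E) : b ≤ rootEnd E :=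
  h.isGreatest_rootEnd.2 hb

lemma IsConnArcs.rootEnd_pos (h : IsConnArcs (n + 1) E) : 0 < rootEnd E := (h.isArc h.root_mem).1

lemma IsConnArcs.rootEnd_mem_visible (h : IsConnArcs (n + 1) E) :
    rootEnd E ∈ visible (n + 1) E := by
  refine mem_visible.2 ⟨(h.isArc h.root_mem).2, fun c d hcd hover => ?_⟩
  rcases Nat.eq_zero_or_pos c with rfl | hc
  · exact (h.le_rootEnd hcd).not_gt hover.2
  · exact h.noncrossing h.root_mem hcd ⟨hc, hover⟩

lemma IsConnArcs.card_visible (h : IsConnArcs (n + 1) E) :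
    #(visible (n + 1) E) = cardAbove (visible (n + 1) E) (rootEnd E) + 2 := by
  have hlow : {v ∈ visible (n + 1) E | v ≤ rootEnd E} = {0, rootEnd E} := by
    ext v
    simp only [mem_filter, mem_insert, mem_singleton]
    constructor
    · rintro ⟨hv, hle⟩
      have := (mem_visible.1 hv).2 _ _ h.root_mem
      omega
    · rintro (rfl | rfl)
      · exact ⟨zero_mem_visible, Nat.zero_le _⟩
      · exact ⟨h.rootEnd_mem_visible, le_rfl⟩
  rw [← card_filter_le_add_cardAbove _ (rootEnd E), hlow, card_pair h.rootEnd_pos.ne, add_comm]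

lemma IsConnArcs.rootEnd_lt_iff (h : IsConnArcs (n + 1) E) (hb : b ∈ visible (n + 1) E) :
    rootEnd E < b ↔ cardAbove (visible (n + 1) E) b + 2 < #(visible (n + 1) E) := by
  rw [h.card_visible, Nat.add_lt_add_iff_right,
    (strictAntiOn_cardAbove _).lt_iff_gt hb h.rootEnd_mem_visible]

lemma isConnArcs_insert (h : IsConnArcs n E) (hb : b ∈ visible n E) (hb0 : 0 < b) :
    IsConnArcs n (insert (0, b) E) where
  isArc hac := by
    rcases mem_insert.1 hac with heq | hac
    · cases heq
      exact ⟨hb0, (mem_visible.1 hb).1⟩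
    · exact h.isArc hac
  noncrossing hac hcd hcross := by
    have hvis := (mem_visible.1 hb).2
    rcases mem_insert.1 hac with heq | hac <;> rcases mem_insert.1 hcd with heq' | hcd
    · cases heq; cases heq'; omega
    · cases heq; exact hvis _ _ hcd hcross.2
    · cases heq'; omega
    · exact h.noncrossing hac hcd hcross
  exists_leaves hxy hy hproper := by
    obtain ⟨a, c, hac, hleaves⟩ := h.exists_leaves hxy hy hproper
    exact ⟨a, c, mem_insert_of_mem hac, hleaves⟩

lemma IsConnArcs.rootEnd_insert (h : IsConnArcs (n + 1) E) (hb : rootEnd E < b) :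
    rootEnd (insert (0, b) E) = b := by
  refine rootEnd_eq (mem_insert_self _ _) fun c hc => ?_
  rcases mem_insert.1 hc with heq | hc
  · cases heq
    exact le_rfl
  · exact (h.le_rootEnd hc).trans hb.le

lemma cardAbove_visible_insert :
    cardAbove (visible n (insert (0, b) E)) b = cardAbove (visible n E) b := by
  refine cardAbove_congr fun v hv => ?_
  simp only [mem_visible, mem_insert, Prod.mk.injEq]
  refine and_congr_right fun _ => ⟨fun h a c hac => h a c (.inr hac), fun h a c hac => ?_⟩
  rcases hac with ⟨rfl, rfl⟩ | hac
  · omega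
  · exact h a c hac

lemma visible_subset_visible_erase (p : ℕ × ℕ) : visible n E ⊆ visible n (E.erase p) :=
  fun _ hv => mem_visible.2
    ⟨(mem_visible.1 hv).1, fun a c hac => (mem_visible.1 hv).2 a c (mem_of_mem_erase hac)⟩

open Classical in
/-- The connected non-crossing arc sets on `0, …, n` with `k` arcs. -/
noncomputable def connArcs (n k : ℕ) : Finset (Finset (ℕ × ℕ)) :=
  {E ∈ (range (n + 1) ×ˢ range (n + 1)).powerset | IsConnArcs n E ∧ #E = k}

/-- The number of connected non-crossing arc sets on `0, …, n` with `k` arcs and `m + 1` visible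
points. These are the graphs that arise by cutting open, at one of its `m` visible vertices, a
graph drawn in an annulus with `n` vertices on its boundary. -/
noncomputable def numConnArcs (n k m : ℕ) : ℕ := #{E ∈ connArcs n k | #(visible n E) = m + 1}

lemma mem_connArcs : E ∈ connArcs n k ↔ IsConnArcs n E ∧ #E = k := by
  simp only [connArcs, mem_filter, mem_powerset, and_iff_right_iff_imp]
  rintro ⟨h, -⟩ ⟨a, b⟩ hab
  have := h.isArc hab
  simp only [mem_product, mem_range]
  omega

open Classical in
lemma card_connArcs_filter_erase_root (n k m : ℕ) :
    #{E ∈ connArcs (n + 1) (k + 1) | #(visible (n + 1) E) = m + 2 ∧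
        IsConnArcs (n + 1) (E.erase (0, rootEnd E))}
      = #((connArcs (n + 1) k).sigma fun E =>
          {b ∈ visible (n + 1) E | cardAbove (visible (n + 1) E) b = m ∧ rootEnd E < b}) := by
  refine card_nbij' (fun E => ⟨E.erase (0, rootEnd E), rootEnd E⟩) (fun p => insert (0, p.2) p.1)
    ?_ ?_ ?_ ?_
  · intro E hE
    simp only [coe_filter, Set.mem_ofPred_eq, mem_connArcs] at hE
    obtain ⟨⟨hE, hk⟩, hvis, herase⟩ := hE
    simp only [coe_sigma, Set.mem_sigma_iff, mem_coe, mem_filter, mem_connArcs]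
    refine ⟨⟨herase, by rw [card_erase_of_mem hE.root_mem, hk, Nat.add_sub_cancel]⟩,
      visible_subset_visible_erase _ hE.rootEnd_mem_visible, ?_, ?_⟩
    · rw [← cardAbove_visible_insert, insert_erase hE.root_mem]
      have := hE.card_visible
      omega
    · have hroot := herase.root_mem
      refine lt_of_le_of_ne (hE.le_rootEnd (mem_of_mem_erase hroot)) fun heq => ?_
      rw [heq] at hroot
      exact notMem_erase _ _ hroot
  · rintro ⟨E, b⟩ hp
    simp only [coe_sigma, Set.mem_sigma_iff, mem_coe, mem_filter, mem_connArcs] at hp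
    obtain ⟨⟨hE, hk⟩, hb, hm, hlt⟩ := hp
    have hins := isConnArcs_insert hE hb (hE.rootEnd_pos.trans hlt)
    have hnot : (0, b) ∉ E := fun hmem => (hE.le_rootEnd hmem).not_gt hlt
    simp only [coe_filter, Set.mem_ofPred_eq, mem_connArcs]
    refine ⟨⟨hins, by rw [card_insert_of_notMem hnot, hk]⟩, ?_, ?_⟩
    · rw [hins.card_visible, hE.rootEnd_insert hlt, cardAbove_visible_insert, hm]
    · rwa [hE.rootEnd_insert hlt, erase_insert hnot]
  · intro E hE
    simp only [coe_filter, Set.mem_ofPred_eq, mem_connArcs] at hE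
    exact insert_erase hE.1.1.root_mem
  · rintro ⟨E, b⟩ hp
    simp only [coe_sigma, Set.mem_sigma_iff, mem_coe, mem_filter, mem_connArcs] at hp
    obtain ⟨⟨hE, -⟩, -, -, hlt⟩ := hp
    have hnot : (0, b) ∉ E := fun hmem => (hE.le_rootEnd hmem).not_gt hlt
    simp only [hE.rootEnd_insert hlt, erase_insert hnot]

lemma IsConnArcs.card_filter_rootEnd_lt (h : IsConnArcs (n + 1) E) (m : ℕ) :
    #{b ∈ visible (n + 1) E | cardAbove (visible (n + 1) E) b = m ∧ rootEnd E < b}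
      = if m + 2 < #(visible (n + 1) E) then 1 else 0 := by
  have hroot : ∀ b ∈ visible (n + 1) E, (cardAbove (visible (n + 1) E) b = m ∧ rootEnd E < b ↔
      cardAbove (visible (n + 1) E) b = m ∧ m + 2 < #(visible (n + 1) E)) := by
    intro b hb
    refine and_congr_right fun hm => ?_
    rw [h.rootEnd_lt_iff hb, hm]
  rw [filter_congr hroot]
  split_ifs with hm
  · simp only [hm, and_true, card_filter_cardAbove_eq]
    exact if_pos (by omega)
  · simp only [hm, and_false, filter_false, card_empty]

/-- No arc of `D` passes over the open interval `(g, g + 1)`. -/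
def IsGap (g : ℕ) (D : Finset (ℕ × ℕ)) : Prop := ∀ c d, (c, d) ∈ D → ¬(c ≤ g ∧ g < d)

/-- The image of an arc when the point `g` is split into the two points `g` and `g + 1`: arcs ending
at or before `g` stay, and all others move one step to the right. -/
def splitArc (g : ℕ) (p : ℕ × ℕ) : ℕ × ℕ := if p.2 ≤ g then p else (p.1 + 1, p.2 + 1)

/-- The arc set obtained from `E` by splitting the visible point `g` and then joining the root `0`
to the new position `b + 1` of the visible point `b ≥ g`. -/
def rootedSplit (g b : ℕ) (E : Finset (ℕ × ℕ)) : Finset (ℕ × ℕ) :=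
  insert (0, b + 1) (E.image (splitArc g))

lemma splitArc_injective (g : ℕ) : Function.Injective (splitArc g) := by
  rintro ⟨a, b⟩ ⟨c, d⟩ h
  simp only [splitArc] at h
  split_ifs at h <;> simp only [Prod.mk.injEq] at h ⊢ <;> omega

lemma mem_image_splitArc {c d : ℕ} :
    (c, d) ∈ E.image (splitArc g) ↔ ∃ c' d', (c', d') ∈ E ∧
      (d' ≤ g ∧ c = c' ∧ d = d' ∨ g < d' ∧ c = c' + 1 ∧ d = d' + 1) := by
  simp only [mem_image, splitArc, Prod.exists]
  refine exists₂_congr fun c' d' => and_congr_right fun _ => ?_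
  split_ifs <;> simp only [Prod.mk.injEq] <;> omega

lemma mem_image_splitArc_of_le {c d : ℕ} (h : (c, d) ∈ E) (hd : d ≤ g) :
    (c, d) ∈ E.image (splitArc g) :=
  mem_image_splitArc.2 ⟨c, d, h, .inl ⟨hd, rfl, rfl⟩⟩

lemma mem_image_splitArc_of_lt {c d : ℕ} (h : (c, d) ∈ E) (hd : g < d) :
    (c + 1, d + 1) ∈ E.image (splitArc g) :=
  mem_image_splitArc.2 ⟨c, d, h, .inr ⟨hd, rfl, rfl⟩⟩

lemma isGap_image_splitArc_iff :
    IsGap g (E.image (splitArc g)) ↔ ∀ c d, (c, d) ∈ E → ¬(c < g ∧ g < d) := by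
  constructor
  · intro h c d hcd hover
    exact h _ _ (mem_image_splitArc_of_lt hcd hover.2) (by omega)
  · intro h c d hcd hover
    obtain ⟨c', d', hcd', hpos⟩ := mem_image_splitArc.1 hcd
    have := h c' d' hcd'
    omega

lemma isGap_image_splitArc (hg : g ∈ visible n E) : IsGap g (E.image (splitArc g)) :=
  isGap_image_splitArc_iff.2 (mem_visible.1 hg).2

lemma exists_image_splitArc_eq {D : Finset (ℕ × ℕ)} (hD : ∀ a b, (a, b) ∈ D → a < b)
    (hgap : IsGap g D) : ∃ E : Finset (ℕ × ℕ), E.image (splitArc g) = D := by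
  suffices ↑D ⊆ Set.range (splitArc g) by
    rw [← Set.image_univ] at this
    obtain ⟨E, -, hE⟩ := subset_set_image_iff.1 this
    exact ⟨E, hE⟩
  rintro ⟨c, d⟩ hcd
  have hlt := hD c d hcd
  have hover := hgap c d hcd
  by_cases hd : d ≤ g
  · exact ⟨(c, d), if_pos hd⟩
  · refine ⟨(c - 1, d - 1), ?_⟩
    rw [splitArc, if_neg (by dsimp only; omega), Prod.mk.injEq]
    omega

lemma root_notMem_image_splitArc (hg : g ∈ visible n E) (hgb : g ≤ b) :
    (0, b + 1) ∉ E.image (splitArc g) :=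
  fun h => isGap_image_splitArc hg _ _ h (by omega)

lemma IsConnArcs.rootedSplit_noncrossing (h : IsConnArcs n E) (hg : g ∈ visible n E)
    (hb : b ∈ visible n E) (hgb : g ≤ b) {a a' c d : ℕ} (ha : (a, a') ∈ rootedSplit g b E)
    (hc : (c, d) ∈ rootedSplit g b E) : ¬(a < c ∧ c < a' ∧ a' < d) := by
  have hgvis := (mem_visible.1 hg).2
  have hbvis := (mem_visible.1 hb).2
  rcases mem_insert.1 ha with heq | ha <;> rcases mem_insert.1 hc with heq' | hc
  · cases heq; cases heq'; omega
  · cases heq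
    obtain ⟨c', d', hc', hpos⟩ := mem_image_splitArc.1 hc
    have := hbvis _ _ hc'
    omega
  · cases heq'; omega
  · obtain ⟨a₀, a₁, ha', hpos⟩ := mem_image_splitArc.1 ha
    obtain ⟨c₀, d₀, hc', hpos'⟩ := mem_image_splitArc.1 hc
    have := h.noncrossing ha' hc'
    have := hgvis _ _ ha'
    have := hgvis _ _ hc'
    omega

lemma IsConnArcs.rootedSplit_exists_leaves (h : IsConnArcs n E) (hg : g ∈ visible n E)
    (hb : b ∈ visible n E) (hgb : g ≤ b) {x y : ℕ} (hxy : x ≤ y) (hy : y ≤ n + 1)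
    (hproper : 0 < x ∨ y < n + 1) : ∃ c d, (c, d) ∈ rootedSplit g b E ∧ Leaves x y c d := by
  have hbn := (mem_visible.1 hb).1
  by_cases hroot : Leaves x y 0 (b + 1)
  · exact ⟨0, b + 1, mem_insert_self _ _, hroot⟩
  -- Pull `[x, y]` back to `E`, extending it to the end of the line if it stops at the gap.
  suffices ∃ x' y', x' ≤ y' ∧ y' ≤ n ∧ (0 < x' ∨ y' < n) ∧ ∀ c d, c < d → d ≤ n →
      Leaves x' y' c d → (d ≤ g → Leaves x y c d) ∧ (g ≤ c → Leaves x y (c + 1) (d + 1)) by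
    obtain ⟨x', y', hxy', hy', hproper', hleaves'⟩ := this
    obtain ⟨c, d, hcd, hleaves⟩ := h.exists_leaves hxy' hy' hproper'
    obtain ⟨hlow, hhigh⟩ := hleaves' c d (h.isArc hcd).1 (h.isArc hcd).2 hleaves
    rcases le_or_gt d g with hd | hd
    · exact ⟨c, d, mem_insert_of_mem (mem_image_splitArc_of_le hcd hd), hlow hd⟩
    · have hgc : g ≤ c := by_contra fun hgc => (mem_visible.1 hg).2 c d hcd ⟨not_le.1 hgc, hd⟩
      exact ⟨c + 1, d + 1, mem_insert_of_mem (mem_image_splitArc_of_lt hcd hd), hhigh hgc⟩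
  have hcases : y < g ∨ g + 1 < x ∨ y = g ∨ x = g + 1 ∨ (x ≤ g ∧ g < y) := by omega
  rcases hcases with hyg | hxg | hyg | hxg | ⟨hxg, hyg⟩
  · exact ⟨x, y, by omega, by omega, by omega, fun c d _ _ _ => by omega⟩
  · exact ⟨x - 1, y - 1, by omega, by omega, by omega, fun c d _ _ _ => by omega⟩
  · exact ⟨x, n, by omega, by omega, by omega, fun c d _ _ _ => by omega⟩
  · exact ⟨0, y - 1, by omega, by omega, by omega, fun c d _ _ _ => by omega⟩
  · exact ⟨x, y - 1, by omega, by omega, by omega, fun c d _ _ _ => by omega⟩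

lemma isConnArcs_rootedSplit (h : IsConnArcs n E) (hg : g ∈ visible n E) (hb : b ∈ visible n E)
    (hgb : g ≤ b) : IsConnArcs (n + 1) (rootedSplit g b E) where
  isArc hcd := by
    have hbn := (mem_visible.1 hb).1
    rcases mem_insert.1 hcd with heq | hcd
    · cases heq; omega
    · obtain ⟨c', d', hcd', hpos⟩ := mem_image_splitArc.1 hcd
      have := h.isArc hcd'
      omega
  noncrossing := h.rootedSplit_noncrossing hg hb hgb
  exists_leaves := h.rootedSplit_exists_leaves hg hb hgb

lemma IsConnArcs.exists_mem_leaves_of_rootedSplit (h : IsConnArcs (n + 1) (rootedSplit g b E))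
    (hgvis : ∀ c d, (c, d) ∈ E → ¬(c < g ∧ g < d)) {x y : ℕ} (hxy : x ≤ y) (hy : y ≤ n + 1)
    (hproper : 0 < x ∨ y < n + 1) (hroot : ¬Leaves x y 0 (b + 1)) : ∃ c d, (c, d) ∈ E ∧
      (d ≤ g ∧ Leaves x y c d ∨ g ≤ c ∧ g < d ∧ Leaves x y (c + 1) (d + 1)) := by
  obtain ⟨c, d, hcd, hleaves⟩ := h.exists_leaves hxy hy hproper
  rcases mem_insert.1 hcd with heq | hcd
  · cases heq
    exact absurd hleaves hroot
  · obtain ⟨c', d', hcd', hpos⟩ := mem_image_splitArc.1 hcd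
    have hover := hgvis _ _ hcd'
    exact ⟨c', d', hcd', by omega⟩

lemma IsConnArcs.lt_and_le_of_rootedSplit (h : IsConnArcs (n + 1) (rootedSplit g b E))
    (hgb : g ≤ b) {c d : ℕ} (hcd : (c, d) ∈ E) : c < d ∧ d ≤ n := by
  have hbn := (h.isArc (mem_insert_self _ _)).2
  rcases le_or_gt d g with hd | hd
  · have := h.isArc (mem_insert_of_mem (mem_image_splitArc_of_le hcd hd))
    omega
  · have := h.isArc (mem_insert_of_mem (mem_image_splitArc_of_lt hcd hd))
    omega

lemma IsConnArcs.not_over_of_rootedSplit (h : IsConnArcs (n + 1) (rootedSplit g b E))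
    (hgb : g ≤ b) {c d : ℕ} (hcd : (c, d) ∈ E) : ¬(c < b ∧ b < d) := by
  intro hover
  exact h.noncrossing (mem_insert_self _ _)
    (mem_insert_of_mem (mem_image_splitArc_of_lt hcd (hgb.trans_lt hover.2))) (by omega)

lemma IsConnArcs.noncrossing_of_rootedSplit (h : IsConnArcs (n + 1) (rootedSplit g b E))
    (hgvis : ∀ c d, (c, d) ∈ E → ¬(c < g ∧ g < d)) {a a' c d : ℕ} (ha : (a, a') ∈ E)
    (hc : (c, d) ∈ E) : ¬(a < c ∧ c < a' ∧ a' < d) := by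
  have hmem : ∀ {p}, p ∈ E.image (splitArc g) → p ∈ rootedSplit g b E :=
    fun hp => mem_insert_of_mem hp
  have hover := hgvis _ _ hc
  rcases le_or_gt a' g with ha' | ha' <;> rcases le_or_gt d g with hd | hd
  · exact h.noncrossing (hmem (mem_image_splitArc_of_le ha ha'))
      (hmem (mem_image_splitArc_of_le hc hd))
  · omega
  · omega
  · have := h.noncrossing (hmem (mem_image_splitArc_of_lt ha ha'))
      (hmem (mem_image_splitArc_of_lt hc hd))
    omega

lemma IsConnArcs.exists_leaves_of_rootedSplit (h : IsConnArcs (n + 1) (rootedSplit g b E))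
    (hgb : g ≤ b) (hgvis : ∀ c d, (c, d) ∈ E → ¬(c < g ∧ g < d)) {x y : ℕ} (hxy : x ≤ y)
    (hy : y ≤ n) (hproper : 0 < x ∨ y < n) : ∃ c d, (c, d) ∈ E ∧ Leaves x y c d := by
  have hbn := (h.isArc (mem_insert_self _ _)).2
  -- Push `[x, y]` forward. Where the root arc would leave the result, use instead the part of it
  -- on one side of the gap, or the stretch between it and the gap.
  suffices ∃ x' y', x' ≤ y' ∧ y' ≤ n + 1 ∧ (0 < x' ∨ y' < n + 1) ∧ ¬Leaves x' y' 0 (b + 1) ∧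
      ∀ c d, c < d → d ≤ n → ¬(c < b ∧ b < d) → (d ≤ g ∧ Leaves x' y' c d ∨
        g ≤ c ∧ g < d ∧ Leaves x' y' (c + 1) (d + 1)) → Leaves x y c d by
    obtain ⟨x', y', hxy', hy', hproper', hroot, hleaves'⟩ := this
    obtain ⟨c, d, hcd, hleaves⟩ :=
      h.exists_mem_leaves_of_rootedSplit hgvis hxy' hy' hproper' hroot
    obtain ⟨hlt, hd⟩ := h.lt_and_le_of_rootedSplit hgb hcd
    exact ⟨c, d, hcd, hleaves' c d hlt hd (h.not_over_of_rootedSplit hgb hcd) hleaves⟩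
  rcases lt_or_ge y g with hyg | hyg
  · rcases Nat.eq_zero_or_pos x with rfl | hx
    · exact ⟨y + 1, g, by omega, by omega, by omega, by omega, fun c d _ _ _ _ => by omega⟩
    · exact ⟨x, y, by omega, by omega, by omega, by omega, fun c d _ _ _ _ => by omega⟩
  rcases lt_or_ge g x with hxg | hxg
  · by_cases hb : x ≤ b ∧ b ≤ y
    · exact ⟨g + 1, x, by omega, by omega, by omega, by omega, fun c d _ _ _ _ => by omega⟩
    · exact ⟨x + 1, y + 1, by omega, by omega, by omega, by omega, fun c d _ _ _ _ => by omega⟩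
  by_cases hxb : 0 < x ∧ b ≤ y
  · exact ⟨x, g, by omega, by omega, by omega, by omega, fun c d _ _ _ _ => by omega⟩
  by_cases hyb : x = 0 ∧ y < b
  · exact ⟨g + 1, y + 1, by omega, by omega, by omega, by omega, fun c d _ _ _ _ => by omega⟩
  · exact ⟨x, y + 1, by omega, by omega, by omega, by omega, fun c d _ _ _ _ => by omega⟩

lemma IsConnArcs.of_rootedSplit (h : IsConnArcs (n + 1) (rootedSplit g b E)) (hgb : g ≤ b)
    (hgap : IsGap g (E.image (splitArc g))) : IsConnArcs n E where
  isArc := h.lt_and_le_of_rootedSplit hgb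
  noncrossing := h.noncrossing_of_rootedSplit (isGap_image_splitArc_iff.1 hgap)
  exists_leaves := h.exists_leaves_of_rootedSplit hgb (isGap_image_splitArc_iff.1 hgap)

lemma IsConnArcs.mem_visible_of_rootedSplit (h : IsConnArcs (n + 1) (rootedSplit g b E))
    (hgb : g ≤ b) (hgap : IsGap g (E.image (splitArc g))) : g ∈ visible n E ∧ b ∈ visible n E := by
  have hbn : b + 1 ≤ n + 1 := (h.isArc (mem_insert_self _ _)).2
  exact ⟨mem_visible.2 ⟨by omega, isGap_image_splitArc_iff.1 hgap⟩,
    mem_visible.2 ⟨by omega, fun _ _ hcd => h.not_over_of_rootedSplit hgb hcd⟩⟩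

lemma rootEnd_rootedSplit (hg : g ∈ visible n E) (hgb : g ≤ b) :
    rootEnd (rootedSplit g b E) = b + 1 := by
  refine rootEnd_eq (mem_insert_self _ _) fun c hc => ?_
  rcases mem_insert.1 hc with heq | hc
  · cases heq
    exact le_rfl
  · have := isGap_image_splitArc hg 0 c hc
    omega

lemma cardAbove_visible_rootedSplit (hg : g ∈ visible n E) (hgb : g ≤ b) :
    cardAbove (visible (n + 1) (rootedSplit g b E)) (b + 1) = cardAbove (visible n E) b := by
  have hvis : ∀ v, b < v → (v + 1 ∈ visible (n + 1) (rootedSplit g b E) ↔ v ∈ visible n E) := by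
    intro v hv
    simp only [mem_visible, Nat.add_le_add_iff_right]
    refine and_congr_right fun _ => ⟨fun h c d hcd hover => ?_, fun h c d hcd hover => ?_⟩
    · exact h _ _ (mem_insert_of_mem (mem_image_splitArc_of_lt hcd (by omega))) (by omega)
    · rcases mem_insert.1 hcd with heq | hcd
      · cases heq; omega
      · obtain ⟨c', d', hcd', hpos⟩ := mem_image_splitArc.1 hcd
        have := (mem_visible.1 hg).2 c' d' hcd'
        have := h c' d' hcd'
        omega
  refine (card_nbij' (· + 1) (· - 1) ?_ ?_ ?_ ?_).symm
  · intro v hv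
    simp only [coe_filter, Set.mem_ofPred_eq] at hv ⊢
    exact ⟨(hvis v hv.2).2 hv.1, by omega⟩
  · intro v hv
    simp only [coe_filter, Set.mem_ofPred_eq] at hv ⊢
    have hbv : b < v - 1 := by omega
    rw [← hvis _ hbv, Nat.sub_add_cancel (by omega)]
    exact ⟨hv.1, hbv⟩
  · exact fun v _ => Nat.add_sub_cancel v 1
  · intro v hv
    simp only [coe_filter, Set.mem_ofPred_eq] at hv
    exact Nat.sub_add_cancel (by omega)

lemma IsConnArcs.eq_of_isGap_image_splitArc (h : IsConnArcs n E) (hg : g ∈ visible n E) {x : ℕ}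
    (hx : x ≤ n) (hgap : IsGap x (E.image (splitArc g))) : x = g := by
  have hgn := (mem_visible.1 hg).1
  rcases lt_trichotomy x g with hlt | heq | hgt
  · obtain ⟨c, d, hcd, hleaves⟩ := h.exists_leaves (x := 0) (y := x) (by omega) hx (by omega)
    have hover := (mem_visible.1 hg).2 c d hcd
    have := hgap c d (mem_image_splitArc_of_le hcd (by omega))
    omega
  · exact heq
  · obtain ⟨c, d, hcd, hleaves⟩ :=
      h.exists_leaves (x := 0) (y := x - 1) (by omega) (by omega) (by omega)
    have := hgap _ _ (mem_image_splitArc_of_lt hcd (by omega))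
    omega

lemma IsConnArcs.not_isGap (h : IsConnArcs (n + 1) E) (hg : g ≤ n) : ¬IsGap g E := by
  intro hgap
  obtain ⟨c, d, hcd, hleaves⟩ := h.exists_leaves (x := 0) (y := g) (by omega) (by omega) (by omega)
  exact hgap c d hcd (by omega)

lemma IsConnArcs.exists_not_leaves_erase (h : IsConnArcs n E) {p : ℕ × ℕ}
    (hnot : ¬IsConnArcs n (E.erase p)) : ∃ x y, x ≤ y ∧ y ≤ n ∧ (0 < x ∨ y < n) ∧
      ∀ a c, (a, c) ∈ E.erase p → ¬Leaves x y a c := by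
  by_contra! hcut
  exact hnot ⟨fun hac => h.isArc (mem_of_mem_erase hac),
    fun hac hcd => h.noncrossing (mem_of_mem_erase hac) (mem_of_mem_erase hcd), hcut _ _⟩

lemma IsConnArcs.exists_isGap_erase_root (h : IsConnArcs (n + 1) E)
    (hnot : ¬IsConnArcs (n + 1) (E.erase (0, rootEnd E))) :
    ∃ g < rootEnd E, IsGap g (E.erase (0, rootEnd E)) := by
  obtain ⟨x, y, hxy, hy, hproper, huncut⟩ := h.exists_not_leaves_erase hnot
  have hroot : Leaves x y 0 (rootEnd E) := by
    obtain ⟨a, c, hac, hleaves⟩ := h.exists_leaves hxy hy hproper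
    by_cases heq : (a, c) = (0, rootEnd E)
    · cases heq
      exact hleaves
    · exact absurd hleaves (huncut a c (mem_erase.2 ⟨heq, hac⟩))
  rcases Nat.eq_zero_or_pos x with rfl | hx
  · refine ⟨y, by omega, fun a c hac hover => ?_⟩
    exact huncut a c hac (by omega)
  rcases hy.eq_or_lt with rfl | hyn
  · refine ⟨x - 1, by omega, fun a c hac hover => huncut a c hac ?_⟩
    have := h.isArc (mem_of_mem_erase hac)
    omega
  obtain ⟨a, c, hac, hleaves⟩ := h.exists_leaves (x := 0) (y := y) (by omega) hy (by omega)
  have hne : (a, c) ≠ (0, rootEnd E) := by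
    rw [Ne, Prod.mk.injEq]
    omega
  have hout := huncut a c (mem_erase.2 ⟨hne, hac⟩)
  rcases Nat.eq_zero_or_pos a with rfl | ha
  · have := h.le_rootEnd hac
    omega
  · have := h.noncrossing h.root_mem hac
    omega

lemma card_rootedSplit (hg : g ∈ visible n E) (hgb : g ≤ b) : #(rootedSplit g b E) = #E + 1 := by
  rw [rootedSplit, card_insert_of_notMem (root_notMem_image_splitArc hg hgb),
    card_image_of_injective _ (splitArc_injective g)]

lemma IsConnArcs.card_visible_rootedSplit (h : IsConnArcs n E) (hg : g ∈ visible n E)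
    (hb : b ∈ visible n E) (hgb : g ≤ b) :
    #(visible (n + 1) (rootedSplit g b E)) = cardAbove (visible n E) b + 2 := by
  rw [(isConnArcs_rootedSplit h hg hb hgb).card_visible, rootEnd_rootedSplit hg hgb,
    cardAbove_visible_rootedSplit hg hgb]

lemma not_isConnArcs_erase_root_rootedSplit (hg : g ∈ visible n E) (hgb : g ≤ b) :
    ¬IsConnArcs (n + 1) ((rootedSplit g b E).erase (0, rootEnd (rootedSplit g b E))) := by
  rw [rootEnd_rootedSplit hg hgb, rootedSplit, erase_insert (root_notMem_image_splitArc hg hgb)]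
  exact fun h => h.not_isGap (mem_visible.1 hg).1 (isGap_image_splitArc hg)

lemma IsConnArcs.rootedSplit_inj {E' : Finset (ℕ × ℕ)} {g' b' : ℕ} (hE' : IsConnArcs n E')
    (hg : g ∈ visible n E) (hgb : g ≤ b) (hg' : g' ∈ visible n E') (hgb' : g' ≤ b')
    (heq : rootedSplit g b E = rootedSplit g' b' E') : E = E' ∧ g = g' ∧ b = b' := by
  obtain rfl : b = b' := by
    rw [← Nat.add_right_cancel_iff (n := 1), ← rootEnd_rootedSplit hg hgb, heq,
      rootEnd_rootedSplit hg' hgb']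
  have himage : E.image (splitArc g) = E'.image (splitArc g') := by
    rw [← erase_insert (root_notMem_image_splitArc hg hgb),
      ← erase_insert (root_notMem_image_splitArc hg' hgb')]
    exact congrArg (·.erase (0, b + 1)) heq
  obtain rfl : g = g' := hE'.eq_of_isGap_image_splitArc hg' (mem_visible.1 hg).1
    (himage ▸ isGap_image_splitArc hg)
  exact ⟨image_injective (splitArc_injective g) himage, rfl, rfl⟩

lemma IsConnArcs.exists_rootedSplit_eq {D : Finset (ℕ × ℕ)} (h : IsConnArcs (n + 1) D)
    (hnot : ¬IsConnArcs (n + 1) (D.erase (0, rootEnd D))) :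
    ∃ E g b, IsConnArcs n E ∧ g ∈ visible n E ∧ b ∈ visible n E ∧ g ≤ b ∧
      rootedSplit g b E = D := by
  obtain ⟨g, hg, hgap⟩ := h.exists_isGap_erase_root hnot
  obtain ⟨b, hroot⟩ := Nat.exists_eq_succ_of_ne_zero h.rootEnd_pos.ne'
  rw [hroot] at hg hgap
  have hgb := Nat.le_of_lt_succ hg
  obtain ⟨E, hE⟩ := exists_image_splitArc_eq
    (fun a c hac => (h.isArc (mem_of_mem_erase hac)).1) hgap
  obtain rfl : rootedSplit g b E = D := by
    rw [rootedSplit, hE, ← Nat.succ_eq_add_one, ← hroot, insert_erase h.root_mem]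
  rw [← hE] at hgap
  obtain ⟨hgvis, hbvis⟩ := h.mem_visible_of_rootedSplit hgb hgap
  exact ⟨E, g, b, h.of_rootedSplit hgb hgap, hgvis, hbvis, hgb, rfl⟩

open Classical in
lemma card_connArcs_filter_not_erase_root (n k m : ℕ) :
    #{E ∈ connArcs (n + 1) (k + 1) | #(visible (n + 1) E) = m + 2 ∧
        ¬IsConnArcs (n + 1) (E.erase (0, rootEnd E))}
      = #((connArcs n k).sigma fun E => {p ∈ visible n E ×ˢ visible n E |
          cardAbove (visible n E) p.2 = m ∧ p.1 ≤ p.2}) := by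
  refine (card_bij (fun p _ => rootedSplit p.2.1 p.2.2 p.1) ?_ ?_ ?_).symm
  · rintro ⟨E, g, b⟩ hp
    simp only [mem_sigma, mem_filter, mem_product, mem_connArcs] at hp
    obtain ⟨⟨hE, rfl⟩, ⟨hg, hb⟩, rfl, hgb⟩ := hp
    simp only [mem_filter, mem_connArcs]
    exact ⟨⟨isConnArcs_rootedSplit hE hg hb hgb, card_rootedSplit hg hgb⟩,
      hE.card_visible_rootedSplit hg hb hgb, not_isConnArcs_erase_root_rootedSplit hg hgb⟩
  · rintro ⟨E, g, b⟩ hp ⟨E', g', b'⟩ hp' heq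
    simp only [mem_sigma, mem_filter, mem_product, mem_connArcs] at hp hp'
    obtain ⟨-, ⟨hg, -⟩, -, hgb⟩ := hp
    obtain ⟨⟨hE', -⟩, ⟨hg', -⟩, -, hgb'⟩ := hp'
    obtain ⟨rfl, rfl, rfl⟩ := hE'.rootedSplit_inj hg hgb hg' hgb' heq
    rfl
  · intro D hD
    simp only [mem_filter, mem_connArcs] at hD
    obtain ⟨⟨hD, hk⟩, hvis, hnot⟩ := hD
    obtain ⟨E, g, b, hE, hg, hb, hgb, rfl⟩ := hD.exists_rootedSplit_eq hnot
    refine ⟨⟨E, g, b⟩, ?_, rfl⟩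
    rw [card_rootedSplit hg hgb, Nat.add_right_cancel_iff] at hk
    rw [hE.card_visible_rootedSplit hg hb hgb, Nat.add_right_cancel_iff] at hvis
    simp only [mem_sigma, mem_filter, mem_product, mem_connArcs]
    exact ⟨⟨hE, hk⟩, ⟨hg, hb⟩, hvis, hgb⟩

theorem numConnArcs_succ (n k m : ℕ) : numConnArcs (n + 1) (k + 1) (m + 1) =
    (∑ E ∈ connArcs (n + 1) k, if m + 2 < #(visible (n + 1) E) then 1 else 0) +
      ∑ E ∈ connArcs n k, (#(visible n E) - m) := by
  classical
  rw [numConnArcs, ← card_filter_add_card_filter_not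
    (fun E => IsConnArcs (n + 1) (E.erase (0, rootEnd E))), filter_filter, filter_filter,
    card_connArcs_filter_erase_root, card_connArcs_filter_not_erase_root, card_sigma, card_sigma]
  refine congrArg₂ _ (sum_congr rfl fun E hE => ?_) (sum_congr rfl fun E _ => ?_)
  · exact (mem_connArcs.1 hE).1.card_filter_rootEnd_lt m
  · exact card_pairs_cardAbove_eq _ m

lemma numConnArcs_eq_sum (n k m : ℕ) :
    (numConnArcs n k m : ℤ) = ∑ E ∈ connArcs n k, if #(visible n E) = m + 1 then 1 else 0 := by
  rw [numConnArcs, card_filter]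
  push_cast
  rfl

theorem numConnArcs_second_difference (n k m : ℕ) :
    (numConnArcs (n + 1) (k + 1) (m + 1) : ℤ) - 2 * numConnArcs (n + 1) (k + 1) (m + 2)
        + numConnArcs (n + 1) (k + 1) (m + 3)
      = numConnArcs (n + 1) k (m + 2) - numConnArcs (n + 1) k (m + 3) + numConnArcs n k m := by
  have hstep (v : ℕ) : ((if m + 2 < v then 1 else 0) - 2 * (if m + 3 < v then 1 else 0)
      + (if m + 4 < v then 1 else 0) : ℤ)
      = (if v = m + 3 then 1 else 0) - (if v = m + 4 then 1 else 0) := by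
    split_ifs <;> omega
  have hramp (v : ℕ) : ((v - m : ℕ) - 2 * (v - (m + 1) : ℕ) + (v - (m + 2) : ℕ) : ℤ)
      = if v = m + 1 then 1 else 0 := by
    split_ifs <;> omega
  have hconn : (numConnArcs (n + 1) k (m + 2) - numConnArcs (n + 1) k (m + 3) : ℤ)
      = (∑ E ∈ connArcs (n + 1) k, if m + 2 < #(visible (n + 1) E) then 1 else 0)
        - 2 * (∑ E ∈ connArcs (n + 1) k, if m + 3 < #(visible (n + 1) E) then 1 else 0)
        + ∑ E ∈ connArcs (n + 1) k, if m + 4 < #(visible (n + 1) E) then 1 else 0 := by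
    rw [numConnArcs_eq_sum, numConnArcs_eq_sum, mul_sum, ← sum_sub_distrib, ← sum_sub_distrib,
      ← sum_add_distrib]
    exact sum_congr rfl fun E _ => (hstep _).symm
  have hsplit : (numConnArcs n k m : ℤ) = (∑ E ∈ connArcs n k, (#(visible n E) - m : ℕ) : ℤ)
      - 2 * ∑ E ∈ connArcs n k, ((#(visible n E) - (m + 1) : ℕ) : ℤ)
      + ∑ E ∈ connArcs n k, ((#(visible n E) - (m + 2) : ℕ) : ℤ) := by
    rw [numConnArcs_eq_sum, mul_sum, ← sum_sub_distrib, ← sum_add_distrib]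
    exact sum_congr rfl fun E _ => (hramp _).symm
  rw [numConnArcs_succ, numConnArcs_succ, numConnArcs_succ]
  push_cast
  linear_combination -hconn - hsplit

lemma numConnArcs_eq_zero_of_lt {m : ℕ} (h : n < m) : numConnArcs n k m = 0 := by
  rw [numConnArcs, card_eq_zero, filter_eq_empty_iff]
  intro E _ hvis
  have : #(visible n E) ≤ n + 1 := (card_filter_le _ _).trans_eq (card_range _)
  omega

lemma numConnArcs_succ_left_zero_right (n k : ℕ) : numConnArcs (n + 1) k 0 = 0 := by
  rw [numConnArcs, card_eq_zero, filter_eq_empty_iff]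
  intro E hE hvis
  have := (mem_connArcs.1 hE).1.card_visible
  omega

lemma numConnArcs_succ_zero (n m : ℕ) : numConnArcs (n + 1) 0 m = 0 := by
  rw [numConnArcs, card_eq_zero, filter_eq_empty_iff]
  intro E hE
  obtain ⟨hE, hk⟩ := mem_connArcs.1 hE
  exact absurd hE.root_mem (card_eq_zero.1 hk ▸ notMem_empty _)

lemma numConnArcs_zero_succ (k m : ℕ) : numConnArcs 0 (k + 1) m = 0 := by
  rw [numConnArcs, card_eq_zero, filter_eq_empty_iff]
  intro E hE
  obtain ⟨hE, hk⟩ := mem_connArcs.1 hE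
  obtain ⟨⟨a, b⟩, hab⟩ := card_pos.1 (k.succ_pos.trans_eq hk.symm)
  have := hE.isArc hab
  omega

lemma numConnArcs_zero_zero (m : ℕ) : numConnArcs 0 0 m = if m = 0 then 1 else 0 := by
  have hempty : connArcs 0 0 = {∅} := by
    ext E
    rw [mem_connArcs, mem_singleton, card_eq_zero]
    refine ⟨And.right, fun h => ⟨?_, h⟩⟩
    subst h
    exact ⟨by simp, by simp, by omega⟩
  have hvis : #(visible 0 ∅) = 1 := by simp [visible]
  rw [numConnArcs, hempty, filter_singleton, hvis]
  split_ifs <;> first | rfl | omega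

end ConnectedArcs

section ClosedForm

/-- The closed form of `numConnArcs (n + 1) (k + 1) m`, with rational values so that the division
is exact. -/
def connArcsFormula (n k m : ℕ) : ℚ :=
  m * k.choose n * (3 * n + 2 - m).choose (n + k + 1) / (n + 1)

lemma connArcsFormula_eq_zero_of_lt {n k m : ℕ} (h : n + 1 < m) : connArcsFormula n k m = 0 := by
  rcases lt_or_ge k n with hk | hk
  · simp [connArcsFormula, Nat.choose_eq_zero_of_lt hk]
  · simp [connArcsFormula, Nat.choose_eq_zero_of_lt (show 3 * n + 2 - m < n + k + 1 by omega)]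

lemma cast_choose_succ_mul (a b : ℕ) :
    (a.choose (b + 1) : ℚ) * (b + 1) = a.choose b * (a - b) := by
  rcases le_or_gt b a with h | h
  · rw [← Nat.cast_sub h]
    exact_mod_cast Nat.choose_succ_right_eq a b
  · simp [Nat.choose_eq_zero_of_lt h, Nat.choose_eq_zero_of_lt (h.trans b.lt_succ_self)]

lemma connArcsFormula_second_difference (n k m : ℕ) :
    connArcsFormula (n + 1) (k + 1) (m + 1) - 2 * connArcsFormula (n + 1) (k + 1) (m + 2)
        + connArcsFormula (n + 1) (k + 1) (m + 3)
      = connArcsFormula (n + 1) k (m + 2) - connArcsFormula (n + 1) k (m + 3)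
        + connArcsFormula n k m := by
  rcases lt_or_ge (n + 1) m with hm | hm
  · rw [connArcsFormula_eq_zero_of_lt, connArcsFormula_eq_zero_of_lt,
      connArcsFormula_eq_zero_of_lt, connArcsFormula_eq_zero_of_lt, connArcsFormula_eq_zero_of_lt,
      connArcsFormula_eq_zero_of_lt] <;> first | omega | norm_num
  obtain ⟨t, ht⟩ : ∃ t, 3 * n + 2 = t + m := ⟨3 * n + 2 - m, by omega⟩
  have ht' : (t : ℚ) = 3 * n + 2 - m := by
    rw [eq_sub_iff_add_eq]
    exact_mod_cast ht.symm
  have hrow := cast_choose_succ_mul t (n + k + 1)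
  have hcol := eq_div_of_mul_eq (by positivity) (cast_choose_succ_mul k n)
  simp only [connArcsFormula, show 3 * (n + 1) + 2 - (m + 1) = t + 2 by omega,
    show 3 * (n + 1) + 2 - (m + 2) = t + 1 by omega, show 3 * (n + 1) + 2 - (m + 3) = t by omega,
    show 3 * n + 2 - m = t by omega, show n + 1 + (k + 1) + 1 = n + k + 1 + 1 + 1 by ring,
    show n + 1 + k + 1 = n + k + 1 + 1 by ring, Nat.choose_succ_succ, Nat.cast_add, hcol]
  push_cast at hrow ⊢
  rw [ht'] at hrow
  field_simp
  linear_combination (-(k.choose n : ℚ)) * hrow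

lemma eq_of_second_difference_eq {R : Type*} [Ring R] {f g : ℕ → R} {M : ℕ}
    (hf : ∀ m, M ≤ m → f m = 0) (hg : ∀ m, M ≤ m → g m = 0)
    (h : ∀ m, f m - 2 * f (m + 1) + f (m + 2) = g m - 2 * g (m + 1) + g (m + 2)) : f = g := by
  suffices ∀ t m, M ≤ m + t → f m = g m from funext fun m => this M m (by omega)
  intro t
  induction t using Nat.strong_induction_on with
  | _ t ih =>
    intro m hm
    rcases le_or_gt M m with hMm | hMm
    · rw [hf m hMm, hg m hMm]
    · have h1 : f (m + 1) = g (m + 1) := ih (t - 1) (by omega) _ (by omega)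
      have h2 : f (m + 2) = g (m + 2) := ih (t - 1) (by omega) _ (by omega)
      simpa [h1, h2] using h m

lemma connArcsFormula_zero_right (n k : ℕ) : connArcsFormula n k 0 = 0 := by
  simp [connArcsFormula]

lemma connArcsFormula_succ_zero (n m : ℕ) : connArcsFormula (n + 1) 0 m = 0 := by
  simp [connArcsFormula]

lemma connArcsFormula_zero_succ (k m : ℕ) : connArcsFormula 0 (k + 1) m = 0 := by
  rcases Nat.eq_zero_or_pos m with rfl | hm
  · exact connArcsFormula_zero_right 0 _
  · simp [connArcsFormula, Nat.choose_eq_zero_of_lt (show 2 - m < k + 1 + 1 by omega)]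

lemma connArcsFormula_zero_zero (m : ℕ) : connArcsFormula 0 0 m = if m = 1 then 1 else 0 := by
  rcases m with _ | _ | m
  · simp [connArcsFormula]
  · simp [connArcsFormula]
  · rw [connArcsFormula_eq_zero_of_lt (by omega), if_neg (by omega)]

lemma numConnArcs_eq_formula_of_second_difference {n k : ℕ}
    (h : ∀ m, (numConnArcs (n + 1) k (m + 2) - numConnArcs (n + 1) k (m + 3)
        + numConnArcs n k m : ℚ) =
      connArcsFormula n k (m + 1) - 2 * connArcsFormula n k (m + 2)
        + connArcsFormula n k (m + 3))
    (m : ℕ) : (numConnArcs (n + 1) (k + 1) m : ℚ) = connArcsFormula n k m := by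
  rcases m with _ | m
  · rw [numConnArcs_succ_left_zero_right, connArcsFormula_zero_right, Nat.cast_zero]
  refine congrFun (f := fun m => (numConnArcs (n + 1) (k + 1) (m + 1) : ℚ))
    (g := fun m => connArcsFormula n k (m + 1))
    (eq_of_second_difference_eq (M := n + 1) (fun m hm => ?_) (fun m hm => ?_) fun m => ?_) m
  · rw [numConnArcs_eq_zero_of_lt (by omega), Nat.cast_zero]
  · exact connArcsFormula_eq_zero_of_lt (by omega)
  · rw [← h]
    exact_mod_cast numConnArcs_second_difference n k m

theorem numConnArcs_eq_formula (n k m : ℕ) :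
    (numConnArcs (n + 1) (k + 1) m : ℚ) = connArcsFormula n k m := by
  induction k generalizing n m with
  | zero =>
    refine numConnArcs_eq_formula_of_second_difference (fun m => ?_) m
    rcases n with _ | n
    · simp [numConnArcs_succ_zero, numConnArcs_zero_zero, connArcsFormula_zero_zero]
    · simp [numConnArcs_succ_zero, connArcsFormula_succ_zero]
  | succ k ih =>
    refine numConnArcs_eq_formula_of_second_difference (fun m => ?_) m
    rcases n with _ | n
    · simp [ih, numConnArcs_zero_succ, connArcsFormula_zero_succ,
        connArcsFormula_eq_zero_of_lt]
    · rw [ih, ih, ih, connArcsFormula_second_difference]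

end ClosedForm

section ArcGraph

variable {n : ℕ} {E : Finset (ℕ × ℕ)}

/-- The graph on `ℕ` whose edges are the arcs in `E`. -/
def arcGraph (E : Finset (ℕ × ℕ)) : SimpleGraph ℕ := SimpleGraph.fromRel fun a b => (a, b) ∈ E

lemma IsConnArcs.arcGraph_adj (hE : IsConnArcs n E) {i j : ℕ} (hij : (i, j) ∈ E) :
    (arcGraph E).Adj i j :=
  (SimpleGraph.fromRel_adj _ _ _).2 ⟨(hE.isArc hij).1.ne, Or.inl hij⟩

lemma IsConnArcs.side_iff_of_reachable (hE : IsConnArcs n E) {i j x y : ℕ} (hij : (i, j) ∈ E)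
    (hx : ¬(arcGraph E).Reachable x i) (hxy : (arcGraph E).Reachable x y) :
    i < x ∧ x < j ↔ i < y ∧ y < j := by
  have hji := (hE.arcGraph_adj hij).reachable.symm
  have hne {z} (hz : ¬(arcGraph E).Reachable z i) : z ≠ i ∧ z ≠ j :=
    ⟨by rintro rfl; exact hz .rfl, by rintro rfl; exact hz hji⟩
  obtain ⟨w⟩ := hxy
  induction w with
  | nil => rfl
  | @cons x z _ hadj _ ih =>
    have hz : ¬(arcGraph E).Reachable z i := fun h => hx (hadj.reachable.trans h)
    refine Iff.trans ?_ (ih hz)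
    have hxne := hne hx
    have hzne := hne hz
    rcases ((SimpleGraph.fromRel_adj _ _ _).1 hadj).2 with h | h <;>
    · have := hE.isArc h
      have := hE.noncrossing hij h
      have := hE.noncrossing h hij
      omega

lemma IsConnArcs.reachable (hE : IsConnArcs n E) {x : ℕ} (hx : x ≤ n) :
    (arcGraph E).Reachable 0 x := by
  classical
  induction x using Nat.strong_induction_on with
  | _ x ih =>
    by_contra hx0
    have hpos : 0 < x := Nat.pos_of_ne_zero (by rintro rfl; exact hx0 .rfl)
    have hle {z} (hz : (arcGraph E).Reachable x z) : x ≤ z := by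
      by_contra! hzx
      exact hx0 ((ih z hzx (by omega)).trans hz.symm)
    obtain ⟨y, hxy, hyn, hmax⟩ : ∃ y, (arcGraph E).Reachable x y ∧ y ≤ n ∧
        ∀ z ≤ n, (arcGraph E).Reachable x z → z ≤ y :=
      ⟨_, Nat.findGreatest_spec hx .rfl, Nat.findGreatest_le _,
        fun _ hzn hz => Nat.le_findGreatest hzn hz⟩
    obtain ⟨i, j, hij, hleaves⟩ := hE.exists_leaves (hle hxy) hyn (Or.inl hpos)
    have hadj := (hE.arcGraph_adj hij).reachable
    have hi : ¬(arcGraph E).Reachable x i := fun hi => by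
      have := hle hi
      have := hmax j (hE.isArc hij).2 (hi.trans hadj)
      omega
    have hyi : y ≠ i := by rintro rfl; exact hi hxy
    have hxj : x ≠ j := by rintro rfl; exact hi hadj.symm
    have := hE.side_iff_of_reachable hij hi hxy
    have := hle hxy
    omega

end ArcGraph

section Lift

open scoped Fin.CommRing

variable {N : ℕ} [NeZero N] {F : Finset (Sym2 (Fin N))} {x y a b c d : ℤ}

lemma intCast_fin_eq_iff_dvd_sub : (x : Fin N) = y ↔ (N : ℤ) ∣ x - y := by
  rw [← sub_eq_zero, ← Int.cast_sub, CharP.intCast_eq_zero_iff (Fin N) N]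

lemma intCast_fin_add_mul (q : ℤ) : ((x + q * N : ℤ) : Fin N) = x :=
  intCast_fin_eq_iff_dvd_sub.2 ⟨q, by ring⟩

lemma intCast_fin_val (i : Fin N) : ((i : ℤ) : Fin N) = i := by
  rw [Int.cast_natCast, Fin.cast_val_eq_self]

lemma exists_intCast_fin_eq (x : ℤ) (i : Fin N) : ∃ y : ℤ, x ≤ y ∧ y < x + N ∧ (y : Fin N) = i := by
  have hN : (0 : ℤ) < N := by exact_mod_cast NeZero.pos N
  refine ⟨x + (i - x) % N, ?_, ?_, ?_⟩
  · have := Int.emod_nonneg (i - x) hN.ne'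
    omega
  · have := Int.emod_lt_of_pos (i - x) hN
    omega
  · rw [Int.emod_def, ← intCast_fin_val i, intCast_fin_eq_iff_dvd_sub, intCast_fin_val]
    exact ⟨-((i - x) / N), by ring⟩

/-- The lift to `ℤ`, along the quotient map onto the circle `Fin N`, of the adjacency relation of
the graph with edge set `F`. -/
def LiftAdj (F : Finset (Sym2 (Fin N))) (x y : ℤ) : Prop := s((x : Fin N), (y : Fin N)) ∈ F

lemma LiftAdj.symm (h : LiftAdj F x y) : LiftAdj F y x := by
  rwa [LiftAdj, Sym2.eq_swap]

lemma LiftAdj.add_mul (h : LiftAdj F x y) (p q : ℤ) : LiftAdj F (x + p * N) (y + q * N) := by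
  rwa [LiftAdj, intCast_fin_add_mul, intCast_fin_add_mul]

lemma LiftAdj.turn (h : LiftAdj F x y) : LiftAdj F y (x + N) := by
  simpa using h.symm.add_mul 0 1

lemma LiftAdj.turn_back (h : LiftAdj F x y) : LiftAdj F (y - N) x := by
  simpa [sub_eq_add_neg] using h.symm.add_mul (-1) 0

lemma liftAdj_val {i j : Fin N} (h : s(i, j) ∈ F) : LiftAdj F i j := by
  rwa [LiftAdj, intCast_fin_val, intCast_fin_val]

lemma not_liftAdj_self (h : ∀ e ∈ F, ¬e.IsDiag) : ¬LiftAdj F x x := fun hx => h _ hx (by simp)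

lemma intCast_fin_lt (hx : 0 ≤ x) (hxy : x < y) (hy : y < N) : (x : Fin N) < y := by
  lift x to ℕ using hx
  lift y to ℕ using by omega
  rw [Fin.lt_def, Int.cast_natCast, Int.cast_natCast, Fin.val_natCast, Fin.val_natCast,
    Nat.mod_eq_of_lt (by omega), Nat.mod_eq_of_lt (by omega)]
  omega

lemma IsNC.not_interleave (hF : IsNC F) (hab : LiftAdj F a b) (hcd : LiftAdj F c d)
    (ha : 0 ≤ a) (hd : d < N) : ¬(a < c ∧ c < b ∧ b < d) := fun ⟨hac, hcb, hbd⟩ =>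
  hF.2 _ hab _ hcd ⟨a, b, c, d, rfl, rfl, intCast_fin_lt ha hac (by omega),
    intCast_fin_lt (by omega) hcb (by omega), intCast_fin_lt (by omega) hbd hd⟩

lemma IsNC.add_le_of_interleave (hF : IsNC F) (hab : LiftAdj F a b) (hcd : LiftAdj F c d)
    (hac : a < c) (hcb : c < b) (hbd : b < d) : a + N ≤ d := by
  wlog ha : 0 ≤ a ∧ a < N generalizing a b c d
  · have hN : (0 : ℤ) < N := by exact_mod_cast NeZero.pos N
    have hlow := Int.emod_nonneg a hN.ne'
    have hhigh := Int.emod_lt_of_pos a hN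
    have hmod : a % N = a + -(a / N) * N := by rw [Int.emod_def]; ring
    have := this (hab.add_mul (-(a / N)) (-(a / N))) (hcd.add_mul (-(a / N)) (-(a / N)))
      (by omega) (by omega) (by omega) (by omega)
    omega
  by_contra! hda
  rcases lt_or_ge d N with hd | hd
  · exact hF.not_interleave hab hcd ha.1 hd ⟨hac, hcb, hbd⟩
  rcases lt_or_ge b N with hb | hb
  · exact hF.not_interleave hcd.turn_back hab (by omega) hb (by omega)
  rcases lt_or_ge c N with hc | hc
  · exact hF.not_interleave hab.turn_back hcd.turn_back (by omega) hc (by omega)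
  · exact hF.not_interleave hcd.turn_back.turn_back hab.turn_back (by omega) ha.2 (by omega)

lemma exists_liftAdj_of_connected (hF : (graphOf F).Connected) (hxy : x ≤ y) (hy : y + 1 < x + N) :
    ∃ a b, LiftAdj F a b ∧ x ≤ a ∧ a ≤ y ∧ y < b ∧ b < x + N := by
  by_contra! hclosed
  have hstep : ∀ i j, (graphOf F).Reachable i j →
      (∃ a : ℤ, x ≤ a ∧ a ≤ y ∧ (a : Fin N) = i) → ∃ a : ℤ, x ≤ a ∧ a ≤ y ∧ (a : Fin N) = j := by
    rintro i j ⟨w⟩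
    induction w with
    | nil => exact id
    | @cons i j _ hij _ ih =>
      rintro ⟨a, hxa, hay, rfl⟩
      obtain ⟨b, hxb, hbx, rfl⟩ := exists_intCast_fin_eq x j
      have hab : LiftAdj F a b := ((SimpleGraph.fromEdgeSet_adj _).1 hij).1
      refine ih ⟨b, hxb, ?_, rfl⟩
      by_contra! hyb
      exact (hclosed a b hab hxa hay hyb).not_gt hbx
  obtain ⟨a, hxa, hay, ha⟩ :=
    hstep _ _ (hF.preconnected x ((y + 1 : ℤ) : Fin N)) ⟨x, le_rfl, hxy, rfl⟩
  have := Int.eq_zero_of_abs_lt_dvd (intCast_fin_eq_iff_dvd_sub.1 ha) (by rw [abs_lt]; omega)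
  omega

end Lift

section HalfTurn

open scoped Fin.CommRing

variable {n : ℕ} [NeZero n] {F F' : Finset (Sym2 (Fin (2 * n)))} {x y a b c d : ℤ}

lemma rotMap_intCast (x : ℤ) :
    rotMap (2 * n) n (x : Fin (2 * n)) = ((x + n : ℤ) : Fin (2 * n)) := by
  have hrot (i : Fin (2 * n)) : rotMap (2 * n) n i = ((i + n : ℕ) : Fin (2 * n)) :=
    Fin.ext (Fin.val_natCast _ _).symm
  rw [hrot, Nat.cast_add, Fin.cast_val_eq_self, Int.cast_add, Int.cast_natCast]

lemma rotMap_involutive : Function.Involutive (rotMap (2 * n) n) := fun i => by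
  rw [← intCast_fin_val i, rotMap_intCast, rotMap_intCast, add_assoc, ← two_mul]
  simpa using intCast_fin_add_mul (N := 2 * n) (x := i) 1

lemma RotInv.liftAdj_add (hF : RotInv (2 * n) n F) (h : LiftAdj F x y) :
    LiftAdj F (x + n) (y + n) := by
  simpa only [LiftAdj, Sym2.map_mk, rotMap_intCast] using hF _ h

/-- The edge of `F` from `a` to `b` in the lift, traversed forwards and at most half-way around the
circle. Every edge has such a lift, unique up to a full turn, except that a diameter has two. -/
def ShortArc (F : Finset (Sym2 (Fin (2 * n)))) (a b : ℤ) : Prop :=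
  a < b ∧ b ≤ a + n ∧ LiftAdj F a b

lemma RotInv.shortArc_shift (hF : RotInv (2 * n) n F) (h : ShortArc F a b) (t : ℤ) :
    ShortArc F (a + t * n) (b + t * n) := by
  obtain ⟨hab, hba, hadj⟩ := h
  refine ⟨by omega, by omega, ?_⟩
  obtain ⟨q, rfl | rfl⟩ := t.even_or_odd'
  · convert hadj.add_mul q q using 1 <;> push_cast <;> ring
  · convert (hF.liftAdj_add hadj).add_mul q q using 1 <;> push_cast <;> ring

lemma exists_shortArc (hF : ∀ e ∈ F, ¬e.IsDiag) {e : Sym2 (Fin (2 * n))} (he : e ∈ F) :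
    ∃ a b : ℤ, ShortArc F a b ∧ e = s((a : Fin (2 * n)), (b : Fin (2 * n))) := by
  induction e with
  | _ i j =>
    obtain ⟨b, hib, hbi, rfl⟩ := exists_intCast_fin_eq (i : ℤ) j
    have hadj : LiftAdj F i b := by rwa [LiftAdj, intCast_fin_val]
    have hne : (i : ℤ) ≠ b := by
      rintro rfl
      exact not_liftAdj_self hF hadj
    rcases le_or_gt b (i + n) with hb | hb
    · exact ⟨i, b, ⟨by omega, hb, hadj⟩, by rw [intCast_fin_val]⟩
    · refine ⟨b, i + (2 * n : ℕ), ⟨by omega, by omega, hadj.turn⟩, ?_⟩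
      rw [← one_mul (((2 * n : ℕ) : ℤ)), intCast_fin_add_mul, intCast_fin_val, Sym2.eq_swap]

lemma subset_of_shortArc (hF : ∀ e ∈ F, ¬e.IsDiag)
    (h : ∀ {a b}, ShortArc F a b → ShortArc F' a b) : F ⊆ F' := by
  intro e he
  obtain ⟨a, b, hab, rfl⟩ := exists_shortArc hF he
  exact (h hab).2.2

lemma IsNC.shortArc_noncrossing (hF : IsNC F) (hab : ShortArc F a b) (hcd : ShortArc F c d) :
    ¬(a < c ∧ c < b ∧ b < d) := by
  rintro ⟨hac, hcb, hbd⟩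
  have := hF.add_le_of_interleave hab.2.2 hcd.2.2 hac hcb hbd
  have := hab.2.1
  have := hcd.2.1
  omega

lemma isNC_of_shortArc (hloop : ∀ e ∈ F, ¬e.IsDiag)
    (hF : ∀ {a b c d}, ShortArc F a b → ShortArc F c d → ¬(a < c ∧ c < b ∧ b < d)) : IsNC F := by
  refine ⟨hloop, ?_⟩
  rintro _ hij _ hkl ⟨i, j, k, l, rfl, rfl, hik, hkj, hjl⟩
  have hij := liftAdj_val hij
  have hkl := liftAdj_val hkl
  rw [Fin.lt_def] at hik hkj hjl
  have := l.is_lt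
  rcases le_or_gt (j : ℤ) (i + n) with hj | hj <;> rcases le_or_gt (l : ℤ) (k + n) with hl | hl
  · exact hF ⟨by omega, hj, hij⟩ ⟨by omega, hl, hkl⟩ (by omega)
  · exact hF ⟨by omega, by omega, hkl.turn_back⟩ ⟨by omega, hj, hij⟩ (by omega)
  · exact hF ⟨by omega, hl, hkl⟩ ⟨by omega, by omega, hij.turn⟩ (by omega)
  · exact hF ⟨by omega, by omega, hij.turn⟩ ⟨by omega, by omega, hkl.turn⟩ (by omega)

lemma exists_shortArc_leaves (hF : (graphOf F).Connected) (hxy : x ≤ y) (hy : y + 1 < x + 2 * n) :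
    ∃ a b, ShortArc F a b ∧ Leaves x y a b := by
  obtain ⟨a, b, hab, hxa, hay, hyb, hbx⟩ := exists_liftAdj_of_connected hF hxy (by push_cast; omega)
  rcases le_or_gt b (a + n) with hb | hb
  · exact ⟨a, b, ⟨by omega, hb, hab⟩, by omega⟩
  · exact ⟨_, a, ⟨by omega, by omega, hab.turn_back⟩, by omega⟩

lemma RotInv.exists_shortArc_over (hR : RotInv (2 * n) n F) (hF : (graphOf F).Connected) (x : ℤ) :
    ∃ a b, ShortArc F a b ∧ a ≤ x ∧ x < b := by
  have hn := NeZero.pos n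
  obtain ⟨a, b, hab, hleaves | hleaves⟩ :=
    exists_shortArc_leaves hF (x := x + 1) (y := x + n) (by omega) (by omega)
  · exact ⟨_, _, hR.shortArc_shift hab (-1), by omega, by omega⟩
  · exact ⟨a, b, hab, by omega⟩

lemma exists_shift_of_sym2_eq (hab : a < b) (hba : b ≤ a + n) (hcd : c < d) (hdc : d ≤ c + n)
    (h : s((a : Fin (2 * n)), (b : Fin (2 * n))) = s((c : Fin (2 * n)), (d : Fin (2 * n)))) :
    ∃ t : ℤ, c = a + t * n ∧ d = b + t * n ∧ (Even t ∨ b = a + n) := by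
  simp only [Sym2.eq_iff, intCast_fin_eq_iff_dvd_sub] at h
  rcases h with ⟨hac, hbd⟩ | ⟨had, hbc⟩
  · have hlen := Int.eq_zero_of_abs_lt_dvd (dvd_sub hac hbd) (by rw [abs_lt]; omega)
    obtain ⟨q, hq⟩ := hac
    push_cast at hq
    exact ⟨2 * -q, by linarith, by linarith, Or.inl (even_two_mul _)⟩
  · have hlen := Int.eq_zero_of_abs_lt_dvd (dvd_sub (dvd_sub hbc had) dvd_rfl)
      (by rw [abs_lt]; omega)
    obtain ⟨q, hq⟩ := had
    push_cast at hq hlen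
    exact ⟨2 * -q - 1, by linarith, by linarith, Or.inr (by omega)⟩

end HalfTurn

section Cut

open scoped Fin.CommRing

variable {n : ℕ} [NeZero n] {F : Finset (Sym2 (Fin (2 * n)))} {v a b : ℤ}

/-- The point `u` of the lift is visible from outside: no short arc of `F` passes strictly over
it. -/
def IsVisiblePoint (F : Finset (Sym2 (Fin (2 * n)))) (u : ℤ) : Prop :=
  ∀ ⦃a b⦄, ShortArc F a b → ¬(a < u ∧ u < b)

lemma IsVisiblePoint.shift (hv : IsVisiblePoint F v) (hR : RotInv (2 * n) n F) (t : ℤ) :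
    IsVisiblePoint F (v + t * n) := by
  intro a b hab hover
  have hneg : -t * (n : ℤ) = -(t * n) := neg_mul _ _
  exact hv (hR.shortArc_shift hab (-t)) (by omega)

lemma IsVisiblePoint.add (hv : IsVisiblePoint F v) (hR : RotInv (2 * n) n F) :
    IsVisiblePoint F (v + n) := by
  simpa using hv.shift hR 1

lemma IsNC.exists_isVisiblePoint (hF : IsNC F) (hne : F.Nonempty) : ∃ v, IsVisiblePoint F v := by
  obtain ⟨e, he⟩ := hne
  obtain ⟨a, b, hab, -⟩ := exists_shortArc hF.1 he
  obtain ⟨l, ⟨v, hv⟩, hmax⟩ := Int.exists_greatest_of_bdd (P := fun l => ∃ a, ShortArc F a (a + l))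
    ⟨n, fun l ⟨a, ha⟩ => by linarith [ha.2.1]⟩ ⟨b - a, a, by rwa [add_sub_cancel]⟩
  refine ⟨v, fun c d hcd hover => hF.shortArc_noncrossing hcd hv ⟨hover.1, hover.2, ?_⟩⟩
  have hlong := hmax (d - c) ⟨c, by rwa [add_sub_cancel]⟩
  omega

open Classical in
/-- The arcs of `F` over the half circle `v, …, v + n`, in coordinates starting at `v`. -/
noncomputable def cutAt (v : ℤ) (F : Finset (Sym2 (Fin (2 * n)))) : Finset (ℕ × ℕ) :=
  {p ∈ range (n + 1) ×ˢ range (n + 1) | ShortArc F (v + p.1) (v + p.2)}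

lemma mem_cutAt {i j : ℕ} : (i, j) ∈ cutAt v F ↔ j ≤ n ∧ ShortArc F (v + i) (v + j) := by
  simp only [cutAt, mem_filter, mem_product, mem_range, Nat.lt_succ_iff]
  refine ⟨fun h => ⟨h.1.2, h.2⟩, fun h => ⟨⟨?_, h.1⟩, h.2⟩⟩
  have := h.2.1
  omega

lemma isArc_of_mem_cutAt {i j : ℕ} (h : (i, j) ∈ cutAt v F) : i < j ∧ j ≤ n := by
  obtain ⟨hj, hij, -⟩ := mem_cutAt.1 h
  omega

lemma IsVisiblePoint.exists_mem_cutAt (hv : IsVisiblePoint F v) (hR : RotInv (2 * n) n F)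
    (hab : ShortArc F a b) (hvb : v < b) (hav : a < v + n) :
    ∃ i j : ℕ, (i, j) ∈ cutAt v F ∧ a = v + i ∧ b = v + j := by
  have hleft := hv hab
  have hright := hv.add hR hab
  have hlt := hab.1
  obtain ⟨i, rfl⟩ := Int.le.dest (show v ≤ a by omega)
  obtain ⟨j, rfl⟩ := Int.le.dest (show v ≤ b by omega)
  exact ⟨i, j, mem_cutAt.2 ⟨by omega, hab⟩, rfl, rfl⟩

lemma IsVisiblePoint.exists_shift_mem_cutAt (hv : IsVisiblePoint F v) (hR : RotInv (2 * n) n F)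
    (hab : ShortArc F a b) :
    ∃ (t : ℤ) (i j : ℕ), (i, j) ∈ cutAt v F ∧ a = v + i + t * n ∧ b = v + j + t * n := by
  have hn : (0 : ℤ) < n := by exact_mod_cast NeZero.pos n
  have hlow := Int.emod_nonneg (a - v) hn.ne'
  have hhigh := Int.emod_lt_of_pos (a - v) hn
  have hmod : (a - v) % n = a - v + -((a - v) / n) * n := by rw [Int.emod_def]; ring
  have hlt := hab.1
  obtain ⟨i, j, hij, hi, hj⟩ := hv.exists_mem_cutAt hR
    (hR.shortArc_shift hab (-((a - v) / n))) (by omega) (by omega)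
  exact ⟨(a - v) / n, i, j, hij, by linarith, by linarith⟩

lemma IsVisiblePoint.isConnArcs_cutAt (hv : IsVisiblePoint F v) (hF : IsNCC F)
    (hR : RotInv (2 * n) n F) :
    IsConnArcs n (cutAt v F) := by
  refine ⟨isArc_of_mem_cutAt, fun hab hcd hcross => ?_, fun {x y} hxy hy hproper => ?_⟩
  · exact hF.1.shortArc_noncrossing (mem_cutAt.1 hab).2 (mem_cutAt.1 hcd).2 (by omega)
  suffices ∃ a b, ShortArc F a b ∧ v < b ∧ a < v + n ∧
      ∀ i j : ℕ, a = v + i → b = v + j → i < j ∧ j ≤ n → Leaves x y i j by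
    obtain ⟨a, b, hab, hvb, hav, hleaves⟩ := this
    obtain ⟨i, j, hij, hi, hj⟩ := hv.exists_mem_cutAt hR hab hvb hav
    exact ⟨i, j, hij, hleaves i j hi hj (isArc_of_mem_cutAt hij)⟩
  by_cases hx : x = 0
  · obtain ⟨a, b, hab, hay, hyb⟩ := hR.exists_shortArc_over hF.2 (v + y)
    exact ⟨a, b, hab, by omega, by omega, fun _ _ _ _ _ => by omega⟩
  by_cases hyn : y = n
  · obtain ⟨a, b, hab, hax, hxb⟩ := hR.exists_shortArc_over hF.2 (v + x - 1)
    exact ⟨a, b, hab, by omega, by omega, fun _ _ _ _ _ => by omega⟩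
  · obtain ⟨a, b, hab, hleaves⟩ :=
      exists_shortArc_leaves hF.2 (x := v + x) (y := v + y) (by omega) (by omega)
    exact ⟨a, b, hab, by omega, by omega, fun _ _ _ _ _ => by omega⟩

lemma IsVisiblePoint.mem_visible_cutAt (hv : IsVisiblePoint F v) (hR : RotInv (2 * n) n F)
    {i : ℕ} :
    i ∈ visible n (cutAt v F) ↔ i ≤ n ∧ IsVisiblePoint F (v + i) := by
  rw [mem_visible]
  refine and_congr_right fun hi => ⟨fun h a b hab hover => ?_, fun h a b hab hover => ?_⟩
  · obtain ⟨j, k, hjk, rfl, rfl⟩ := hv.exists_mem_cutAt hR hab (by omega) (by omega)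
    exact h j k hjk (by omega)
  · exact h (mem_cutAt.1 hab).2 (by omega)

open Classical in
/-- The number of visible points of `F` up to half-turn. -/
noncomputable def numVisible (F : Finset (Sym2 (Fin (2 * n)))) : ℕ :=
  #{v ∈ range n | IsVisiblePoint F (v : ℕ)}

lemma RotInv.numVisible_pos (hR : RotInv (2 * n) n F) (hv : IsVisiblePoint F v) :
    0 < numVisible F := by
  classical
  have hn : (0 : ℤ) < n := by exact_mod_cast NeZero.pos n
  have hmod : v + -(v / n) * n = v % n := by rw [Int.emod_def]; ring
  have hvis := hmod ▸ hv.shift hR (-(v / n))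
  have hhigh := Int.emod_lt_of_pos v hn
  lift v % n to ℕ using Int.emod_nonneg v hn.ne' with w
  exact card_pos.2 ⟨w, mem_filter.2 ⟨mem_range.2 (by exact_mod_cast hhigh), hvis⟩⟩

lemma numVisible_le : numVisible F ≤ n := by
  classical exact (card_filter_le _ _).trans (card_range n).le

lemma IsVisiblePoint.card_visible_cutAt {v : ℕ} (hv : IsVisiblePoint F v)
    (hR : RotInv (2 * n) n F) :
    #(visible n (cutAt v F)) = numVisible F + 1 := by
  classical
  have hcut : visible n (cutAt v F) = insert n {i ∈ range n | IsVisiblePoint F (v + i : ℕ)} := by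
    ext i
    rw [hv.mem_visible_cutAt hR, mem_insert, mem_filter, mem_range, Nat.cast_add]
    constructor
    · exact fun h => (eq_or_lt_of_le h.1).imp_right fun hi => ⟨hi, h.2⟩
    · rintro (rfl | ⟨hi, hvis⟩)
      · exact ⟨le_rfl, hv.add hR⟩
      · exact ⟨hi.le, hvis⟩
  have hperiodic : Function.Periodic (fun i : ℕ => IsVisiblePoint F i) n := fun i => by
    refine propext ⟨fun h => ?_, fun h => ?_⟩
    · simpa using h.shift hR (-1)
    · simpa using h.add hR
  have hwindow : {i ∈ range n | IsVisiblePoint F (v + i : ℕ)}.image (v + ·)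
      = {i ∈ Ico v (v + n) | IsVisiblePoint F (i : ℕ)} := by
    rw [range_eq_Ico, ← filter_image (p := fun i : ℕ => IsVisiblePoint F i), image_add_left_Ico,
      add_zero]
  rw [hcut, card_insert_of_notMem (by simp), numVisible,
    ← Nat.count_eq_card_filter_range fun i : ℕ => IsVisiblePoint F i,
    ← Nat.filter_Ico_card_eq_of_periodic v n _ hperiodic, ← hwindow,
    card_image_of_injective _ (add_right_injective v)]

end Cut

section Wrap

open scoped Fin.CommRing

variable {n : ℕ} [NeZero n] {E : Finset (ℕ × ℕ)} {F : Finset (Sym2 (Fin (2 * n)))} {v a b : ℤ}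

/-- The arcs of `E` drawn over the half circle `v, …, v + n`, as edges of the circle. -/
def halfWrapAt (n : ℕ) [NeZero n] (v : ℤ) (E : Finset (ℕ × ℕ)) : Finset (Sym2 (Fin (2 * n))) :=
  E.image fun p => s(((v + p.1 : ℤ) : Fin (2 * n)), ((v + p.2 : ℤ) : Fin (2 * n)))

/-- The graph on the circle formed by the arcs of `E`, drawn over the half circle `v, …, v + n`,
together with their antipodes. It inverts `cutAt v`. -/
def wrapAt (n : ℕ) [NeZero n] (v : ℤ) (E : Finset (ℕ × ℕ)) : Finset (Sym2 (Fin (2 * n))) :=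
  halfWrapAt n v E ∪ (halfWrapAt n v E).image (Sym2.map (rotMap (2 * n) n))

lemma mem_halfWrapAt {e : Sym2 (Fin (2 * n))} : e ∈ halfWrapAt n v E ↔
    ∃ i j : ℕ, (i, j) ∈ E ∧ e = s(((v + i : ℤ) : Fin (2 * n)), ((v + j : ℤ) : Fin (2 * n))) := by
  simp only [halfWrapAt, mem_image, Prod.exists, eq_comm]

lemma mem_image_rotMap_halfWrapAt {e : Sym2 (Fin (2 * n))} :
    e ∈ (halfWrapAt n v E).image (Sym2.map (rotMap (2 * n) n)) ↔ ∃ i j : ℕ, (i, j) ∈ E ∧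
      e = s(((v + i + n : ℤ) : Fin (2 * n)), ((v + j + n : ℤ) : Fin (2 * n))) := by
  simp only [halfWrapAt, image_image, mem_image, Prod.exists, Function.comp_apply, Sym2.map_mk,
    rotMap_intCast, eq_comm]

lemma rotInv_wrapAt (v : ℤ) (E : Finset (ℕ × ℕ)) : RotInv (2 * n) n (wrapAt n v E) := by
  intro e he
  rcases mem_union.1 he with he | he
  · exact mem_union_right _ (mem_image_of_mem _ he)
  · obtain ⟨f, hf, rfl⟩ := mem_image.1 he
    rw [Sym2.map_map, rotMap_involutive.comp_self, Sym2.map_id]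
    exact mem_union_left _ hf

lemma exists_of_mem_wrapAt {e : Sym2 (Fin (2 * n))} (he : e ∈ wrapAt n v E) :
    ∃ (t : ℤ) (i j : ℕ), (i, j) ∈ E ∧
      e = s(((v + i + t * n : ℤ) : Fin (2 * n)), ((v + j + t * n : ℤ) : Fin (2 * n))) := by
  rcases mem_union.1 he with he | he
  · obtain ⟨i, j, hij, rfl⟩ := mem_halfWrapAt.1 he
    exact ⟨0, i, j, hij, by simp⟩
  · obtain ⟨i, j, hij, rfl⟩ := mem_image_rotMap_halfWrapAt.1 he
    exact ⟨1, i, j, hij, by simp⟩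

lemma shortArc_wrapAt_iff (hE : ∀ {i j}, (i, j) ∈ E → i < j ∧ j ≤ n) :
    ShortArc (wrapAt n v E) a b ↔
      ∃ (t : ℤ) (i j : ℕ), (i, j) ∈ E ∧ a = v + i + t * n ∧ b = v + j + t * n := by
  constructor
  · rintro ⟨hab, hba, hadj⟩
    obtain ⟨s, i, j, hij, he⟩ := exists_of_mem_wrapAt hadj
    have := hE hij
    obtain ⟨t, ha, hb, -⟩ := exists_shift_of_sym2_eq (by omega) (by omega) hab hba he.symm
    exact ⟨s + t, i, j, hij, by rw [ha]; ring, by rw [hb]; ring⟩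
  · rintro ⟨t, i, j, hij, rfl, rfl⟩
    have := hE hij
    refine (rotInv_wrapAt v E).shortArc_shift ⟨by omega, by omega, ?_⟩ t
    exact mem_union_left _ (mem_halfWrapAt.2 ⟨i, j, hij, rfl⟩)

lemma not_isDiag_of_mem_wrapAt (hE : ∀ {i j}, (i, j) ∈ E → i < j ∧ j ≤ n) :
    ∀ e ∈ wrapAt n v E, ¬e.IsDiag := by
  intro e he hdiag
  obtain ⟨t, i, j, hij, rfl⟩ := exists_of_mem_wrapAt he
  rw [Sym2.mk_isDiag_iff, intCast_fin_eq_iff_dvd_sub] at hdiag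
  have := hE hij
  have := Int.eq_zero_of_abs_lt_dvd hdiag (by rw [abs_lt]; omega)
  omega

lemma eq_zero_of_abs_mul_lt {t : ℤ} (h : |t * n| < n) : t = 0 := by
  have := Int.eq_zero_of_abs_lt_dvd (dvd_mul_left (n : ℤ) t) h
  exact (mul_eq_zero.1 this).resolve_right (by exact_mod_cast NeZero.ne n)

lemma isNC_wrapAt (hE : IsConnArcs n E) : IsNC (wrapAt n v E) := by
  refine isNC_of_shortArc (not_isDiag_of_mem_wrapAt hE.isArc) fun hab hcd hcross => ?_
  obtain ⟨s, i, j, hij, rfl, rfl⟩ := (shortArc_wrapAt_iff hE.isArc).1 hab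
  obtain ⟨t, k, l, hkl, rfl, rfl⟩ := (shortArc_wrapAt_iff hE.isArc).1 hcd
  have := hE.isArc hij
  have := hE.isArc hkl
  have hst : t - s = 0 := eq_zero_of_abs_mul_lt (n := n) (by rw [sub_mul, abs_lt]; omega)
  obtain rfl : t = s := sub_eq_zero.1 hst
  exact hE.noncrossing hij hkl (by omega)

lemma isVisiblePoint_wrapAt (hE : ∀ {i j}, (i, j) ∈ E → i < j ∧ j ≤ n) :
    IsVisiblePoint (wrapAt n v E) v := by
  intro a b hab hover
  obtain ⟨t, i, j, hij, rfl, rfl⟩ := (shortArc_wrapAt_iff hE).1 hab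
  have := hE hij
  obtain rfl : t = 0 := eq_zero_of_abs_mul_lt (n := n) (by rw [abs_lt]; omega)
  omega

lemma cutAt_wrapAt (hE : ∀ {i j}, (i, j) ∈ E → i < j ∧ j ≤ n) : cutAt v (wrapAt n v E) = E := by
  ext ⟨i, j⟩
  rw [mem_cutAt, shortArc_wrapAt_iff hE]
  constructor
  · rintro ⟨hj, t, k, l, hkl, hi', hj'⟩
    have := hE hkl
    obtain rfl : t = 0 := eq_zero_of_abs_mul_lt (n := n) (by rw [abs_lt]; omega)
    obtain rfl : i = k := by omega
    obtain rfl : j = l := by omega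
    exact hkl
  · exact fun hij => ⟨(hE hij).2, 0, i, j, hij, by simp, by simp⟩

lemma IsVisiblePoint.wrapAt_cutAt (hv : IsVisiblePoint F v) (hF : ∀ e ∈ F, ¬e.IsDiag)
    (hR : RotInv (2 * n) n F) : wrapAt n v (cutAt v F) = F := by
  have hshort {a b} : ShortArc (wrapAt n v (cutAt v F)) a b ↔ ShortArc F a b := by
    rw [shortArc_wrapAt_iff isArc_of_mem_cutAt]
    constructor
    · rintro ⟨t, i, j, hij, rfl, rfl⟩
      exact hR.shortArc_shift (mem_cutAt.1 hij).2 t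
    · exact hv.exists_shift_mem_cutAt hR
  exact (subset_of_shortArc (not_isDiag_of_mem_wrapAt isArc_of_mem_cutAt) hshort.1).antisymm
    (subset_of_shortArc hF hshort.2)

lemma card_halfWrapAt (hE : ∀ {i j}, (i, j) ∈ E → i < j ∧ j ≤ n) : #(halfWrapAt n v E) = #E := by
  refine card_image_of_injOn ?_
  rintro ⟨i, j⟩ hij ⟨k, l⟩ hkl heq
  have hij := hE hij
  have hkl := hE hkl
  obtain ⟨t, hk, hl, -⟩ :=
    exists_shift_of_sym2_eq (by omega) (by omega) (by omega) (by omega) heq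
  obtain rfl : t = 0 := eq_zero_of_abs_mul_lt (n := n) (by rw [abs_lt]; omega)
  rw [Prod.mk.injEq]
  omega

lemma card_halfWrapAt_inter_le_one (hE : ∀ {i j}, (i, j) ∈ E → i < j ∧ j ≤ n) :
    #(halfWrapAt n v E ∩ (halfWrapAt n v E).image (Sym2.map (rotMap (2 * n) n))) ≤ 1 := by
  suffices ∀ e ∈ halfWrapAt n v E ∩ (halfWrapAt n v E).image (Sym2.map (rotMap (2 * n) n)),
      e = s((v : Fin (2 * n)), ((v + n : ℤ) : Fin (2 * n))) from
    card_le_one.2 fun e he f hf => (this e he).trans (this f hf).symm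
  intro e he
  obtain ⟨he, he'⟩ := mem_inter.1 he
  obtain ⟨i, j, hij, rfl⟩ := mem_halfWrapAt.1 he
  obtain ⟨k, l, hkl, heq⟩ := mem_image_rotMap_halfWrapAt.1 he'
  have hij := hE hij
  have hkl := hE hkl
  obtain ⟨t, hk, hl, ⟨q, rfl⟩ | hdiam⟩ :=
    exists_shift_of_sym2_eq (by omega) (by omega) (by omega) (by omega) heq
  · rw [add_mul] at hk hl
    obtain rfl : q = 0 := eq_zero_of_abs_mul_lt (n := n) (by rw [abs_lt]; omega)
    omega
  · obtain rfl : i = 0 := by omega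
    obtain rfl : j = n := by omega
    rw [Nat.cast_zero, add_zero]

lemma card_wrapAt (hE : ∀ {i j}, (i, j) ∈ E → i < j ∧ j ≤ n) :
    #(wrapAt n v E) = 2 * #E ∨ #(wrapAt n v E) = 2 * #E - 1 := by
  have hunion := card_union_add_card_inter (halfWrapAt n v E)
    ((halfWrapAt n v E).image (Sym2.map (rotMap (2 * n) n)))
  rw [card_image_of_injective _ (Sym2.map.injective rotMap_involutive.injective),
    card_halfWrapAt hE, ← wrapAt] at hunion
  have := card_halfWrapAt_inter_le_one (v := v) hE
  omega

lemma reachable_wrapAt (hE : IsConnArcs n E) {i : ℕ} (hi : i ≤ n) (t : ℤ) :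
    (graphOf (wrapAt n v E)).Reachable ((v + t * n : ℤ) : Fin (2 * n))
      ((v + i + t * n : ℤ) : Fin (2 * n)) := by
  have hadj {i j : ℕ} (hij : (i, j) ∈ E) : (graphOf (wrapAt n v E)).Adj
      ((v + i + t * n : ℤ) : Fin (2 * n)) ((v + j + t * n : ℤ) : Fin (2 * n)) := by
    have hmem := ((shortArc_wrapAt_iff hE.isArc).2 ⟨t, i, j, hij, rfl, rfl⟩ :
      ShortArc (wrapAt n v E) _ _).2.2
    refine (SimpleGraph.fromEdgeSet_adj _).2 ⟨hmem, fun heq => ?_⟩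
    exact not_isDiag_of_mem_wrapAt hE.isArc _ hmem (Sym2.mk_isDiag_iff.2 heq)
  let f : arcGraph E →g graphOf (wrapAt n v E) :=
    { toFun := fun i => ((v + i + t * n : ℤ) : Fin (2 * n))
      map_rel' := fun h =>
        ((SimpleGraph.fromRel_adj _ _ _).1 h).2.elim hadj fun h => (hadj h).symm }
  simpa [f] using (hE.reachable hi).map f

lemma connected_wrapAt (hE : IsConnArcs n E) : (graphOf (wrapAt n v E)).Connected := by
  refine SimpleGraph.connected_iff_exists_forall_reachable _ |>.2 ⟨v, fun k => ?_⟩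
  obtain ⟨x, hvx, hxv, rfl⟩ := exists_intCast_fin_eq v k
  obtain ⟨i, rfl⟩ := Int.le.dest hvx
  rcases le_or_gt i n with hi | hi
  · simpa using reachable_wrapAt (v := v) hE hi 0
  · obtain ⟨j, rfl⟩ := Nat.exists_eq_add_of_le hi.le
    have hfirst := reachable_wrapAt (v := v) hE le_rfl 0
    have hsecond := reachable_wrapAt (v := v) hE (i := j) (by omega) 1
    rw [zero_mul, add_zero, add_zero] at hfirst
    rw [one_mul, add_right_comm] at hsecond
    rw [Nat.cast_add, ← add_assoc]
    exact hfirst.trans hsecond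

lemma isNCC_wrapAt (hE : IsConnArcs n E) : IsNCC (wrapAt n v E) :=
  ⟨isNC_wrapAt hE, connected_wrapAt hE⟩

end Wrap

section Count

open Classical in
/-- The non-crossing connected graphs on `2 * n` points that are invariant under the half-turn, with
`k` antipodal pairs of edges, a diameter counting as one pair. -/
noncomputable def rotInvNCC (n k : ℕ) : Finset (Finset (Sym2 (Fin (2 * n)))) :=
  {F | IsNCC F ∧ RotInv (2 * n) n F ∧ (#F = 2 * k ∨ #F = 2 * k - 1)}

variable {n k m : ℕ} {F : Finset (Sym2 (Fin (2 * n)))}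

lemma mem_rotInvNCC :
    F ∈ rotInvNCC n k ↔ IsNCC F ∧ RotInv (2 * n) n F ∧ (#F = 2 * k ∨ #F = 2 * k - 1) := by
  simp only [rotInvNCC, mem_filter_univ]

lemma nccRot_add_nccRot (hk : 1 ≤ k) :
    nccRot (2 * n) (2 * k) n + nccRot (2 * n) (2 * k - 1) n = #(rotInvNCC n k) := by
  classical
  rw [nccRot, nccRot, Nat.subtype_card {F ∈ rotInvNCC n k | #F = 2 * k},
    Nat.subtype_card {F ∈ rotInvNCC n k | ¬#F = 2 * k}, card_filter_add_card_filter_not]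
  all_goals
    intro F
    rw [mem_filter, mem_rotInvNCC]
    grind

lemma sum_Icc_choose_sub (h : m ≤ n) (k : ℕ) :
    ∑ i ∈ Icc 1 m, (n - i).choose k + (n - m).choose (k + 1) = n.choose (k + 1) := by
  induction m with
  | zero => simp
  | succ m ih =>
    rw [← ih (by omega), sum_Icc_succ_top (by omega), add_assoc]
    obtain ⟨d, rfl⟩ := Nat.exists_eq_add_of_le h
    rw [show m + 1 + d - (m + 1) = d by omega, show m + 1 + d - m = d + 1 by omega,
      Nat.choose_succ_succ]

variable [NeZero n]

open Classical in
lemma card_filter_isVisiblePoint (hk : 1 ≤ k) (m v : ℕ) :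
    #{F ∈ rotInvNCC n k | numVisible F = m ∧ IsVisiblePoint F v} = numConnArcs n k m := by
  rw [numConnArcs]
  refine card_nbij' (cutAt v) (wrapAt n v) (fun F hF => ?_) (fun E hE => ?_) (fun F hF => ?_)
    (fun E hE => ?_) <;>
    simp only [coe_filter, Set.mem_ofPred_eq, mem_rotInvNCC, mem_connArcs] at *
  · obtain ⟨⟨hNCC, hR, hcard⟩, rfl, hv⟩ := hF
    refine ⟨⟨hv.isConnArcs_cutAt hNCC hR, ?_⟩, hv.card_visible_cutAt hR⟩
    have := card_wrapAt (n := n) (v := v) (isArc_of_mem_cutAt (v := v) (F := F))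
    rw [hv.wrapAt_cutAt hNCC.1.1 hR] at this
    omega
  · obtain ⟨⟨hE, rfl⟩, hm⟩ := hE
    have hv := isVisiblePoint_wrapAt (v := v) hE.isArc
    have hR := rotInv_wrapAt (n := n) v E
    have hvisible := hv.card_visible_cutAt hR
    rw [cutAt_wrapAt hE.isArc, hm] at hvisible
    exact ⟨⟨isNCC_wrapAt hE, hR, card_wrapAt hE.isArc⟩, by omega, hv⟩
  · exact hF.2.2.wrapAt_cutAt hF.1.1.1.1 hF.1.2.1
  · exact cutAt_wrapAt hE.1.1.isArc

open Classical in
lemma mul_card_filter_numVisible (hk : 1 ≤ k) (m : ℕ) :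
    m * #{F ∈ rotInvNCC n k | numVisible F = m} = n * numConnArcs n k m := by
  have hcount := sum_card_bipartiteAbove_eq_sum_card_bipartiteBelow
    (s := {F ∈ rotInvNCC n k | numVisible F = m}) (t := range n)
    fun F v => IsVisiblePoint F (v : ℕ)
  have habove : ∀ F ∈ {F ∈ rotInvNCC n k | numVisible F = m},
      #((range n).bipartiteAbove (fun F v => IsVisiblePoint F (v : ℕ)) F) = m :=
    fun F hF => (mem_filter.1 hF).2
  have hbelow : ∀ v ∈ range n, #({F ∈ rotInvNCC n k | numVisible F = m}.bipartiteBelow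
      (fun F v => IsVisiblePoint F (v : ℕ)) v) = numConnArcs n k m := fun v _ => by
    rw [bipartiteBelow, filter_filter, card_filter_isVisiblePoint hk]
  rw [sum_congr rfl habove, sum_congr rfl hbelow, sum_const, sum_const, card_range] at hcount
  rwa [mul_comm]

open Classical in
lemma card_filter_numVisible (hk : 1 ≤ k) (hm : 1 ≤ m) :
    #{F ∈ rotInvNCC n k | numVisible F = m} =
      (3 * n - 1 - m).choose (n + k - 1) * (k - 1).choose (n - 1) := by
  have hcount := mul_card_filter_numVisible (n := n) hk m
  obtain ⟨N, rfl⟩ : ∃ N, n = N + 1 := Nat.exists_eq_succ_of_ne_zero (NeZero.ne n)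
  obtain ⟨K, rfl⟩ := Nat.exists_eq_add_of_le' hk
  rw [show 3 * (N + 1) - 1 - m = 3 * N + 2 - m by omega,
    show N + 1 + (K + 1) - 1 = N + K + 1 by omega, Nat.add_sub_cancel, Nat.add_sub_cancel]
  have hm0 : (m : ℚ) ≠ 0 := by positivity
  have hN0 : (N + 1 : ℚ) ≠ 0 := by positivity
  have hcountQ : (m : ℚ) * #{F ∈ rotInvNCC (N + 1) (K + 1) | numVisible F = m} =
      (N + 1) * numConnArcs (N + 1) (K + 1) m := by exact_mod_cast hcount
  rw [numConnArcs_eq_formula, connArcsFormula, mul_div_cancel₀ _ hN0, mul_assoc] at hcountQ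
  exact_mod_cast (mul_left_cancel₀ hm0 hcountQ).trans (mul_comm _ _)

lemma numVisible_mem_Icc (hk : 1 ≤ k) (hF : F ∈ rotInvNCC n k) : numVisible F ∈ Icc 1 n := by
  obtain ⟨hNCC, hR, hcard⟩ := mem_rotInvNCC.1 hF
  obtain ⟨v, hv⟩ := hNCC.1.exists_isVisiblePoint (card_pos.1 (by omega))
  exact mem_Icc.2 ⟨hR.numVisible_pos hv, numVisible_le⟩

lemma card_rotInvNCC (hk : 1 ≤ k) :
    #(rotInvNCC n k) = (3 * n - 1).choose (n + k) * (k - 1).choose (n - 1) := by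
  classical
  have hn := NeZero.pos n
  have hsum : ∑ m ∈ Icc 1 n, (3 * n - 1 - m).choose (n + k - 1)
      + (2 * n - 1).choose (n + k) = (3 * n - 1).choose (n + k) := by
    have := sum_Icc_choose_sub (show n ≤ 3 * n - 1 by omega) (n + k - 1)
    rwa [show 3 * n - 1 - n = 2 * n - 1 by omega, show n + k - 1 + 1 = n + k by omega] at this
  calc #(rotInvNCC n k)
      = ∑ m ∈ Icc 1 n, #{F ∈ rotInvNCC n k | numVisible F = m} :=
        card_eq_sum_card_fiberwise fun F hF => numVisible_mem_Icc hk hF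
    _ = ∑ m ∈ Icc 1 n, (3 * n - 1 - m).choose (n + k - 1) * (k - 1).choose (n - 1) :=
        sum_congr rfl fun m hm => card_filter_numVisible hk (mem_Icc.1 hm).1
    _ = (3 * n - 1).choose (n + k) * (k - 1).choose (n - 1) := by
        rw [← sum_mul, ← hsum, add_mul, left_eq_add, mul_eq_zero]
        rcases lt_or_ge k n with hkn | hkn
        · exact Or.inr (Nat.choose_eq_zero_of_lt (by omega))
        · exact Or.inl (Nat.choose_eq_zero_of_lt (by omega))

end Count

theorem stmt11_general (n k : ℕ) (hn : 1 ≤ n) (hk : 1 ≤ k) :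
    nccRot (2 * n) (2 * k) n + nccRot (2 * n) (2 * k - 1) n =
      Nat.choose (3 * n - 1) (n + k) * Nat.choose (k - 1) (n - 1) := by
  have : NeZero n := ⟨by omega⟩
  rw [nccRot_add_nccRot hk, card_rotInvNCC hk]

/-- For `n ≥ 1` and `n-1 ≤ k ≤ 2n-3`, the number of non-crossing connected graphs
on `2n` vertices with `2k` or `2k-1` edges invariant under rotation by `π`
(i.e. by `n` positions) equals `C(3n-1, n+k)·C(k-1, n-1)`. -/
theorem stmt11 (n k : ℕ) (hn : 1 ≤ n) (hnk : (n : ℤ) - 1 ≤ (k : ℤ))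
    (hk : (k : ℤ) ≤ 2 * (n : ℤ) - 3) :
    nccRot (2 * n) (2 * k) n + nccRot (2 * n) (2 * k - 1) n =
      Nat.choose (3 * n - 1) (n + k) * Nat.choose (k - 1) (n - 1) := by
  exact stmt11_general n k hn (by omega)
end

section
/- Let n be even and k odd with n-1 ≤ k ≤ 2n-3. Then the number of non-crossing connected graphs on n vertices with k edges invariant under rotation by π equals (n/2) * f_{n/2+1, (k+1)/2}, where f_{m,j} is the number of non-crossing connected graphs on m vertices with j edges containing the edge {1,m}. -/
/-!
A set of chords is non-crossing iff no two of them separate each other's endpoints in the circular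
order, a condition visibly invariant under rotation. The half-turn permutes the edges of an
invariant graph, so an odd number of edges forces a fixed edge, that is, a diameter; as two
diameters cross, it is unique, and rotating it to `s(0, m)` accounts for the factor `m = n / 2`.
A graph containing `s(0, m)` has every other edge on one side of it, hence is the union of its
restriction to `{0, …, m}` and the half-turn of that restriction, which share only `s(0, m)`.
-/

section Generalities

variable {α β ι : Type*}

lemma card_subtype_eq_sum_of_existsUnique [Finite α] [Fintype ι] {p : α → Prop} {r : ι → α → Prop}
    (h : ∀ x, p x → ∃! i, r i x) :
    Nat.card {x // p x} = ∑ i, Nat.card {x // p x ∧ r i x} := by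
  rw [← Nat.card_sigma]
  refine (Nat.card_eq_of_bijective
    (fun x : Σ i, {x // p x ∧ r i x} ↦ (⟨x.2, x.2.2.1⟩ : {x // p x})) ⟨?_, ?_⟩).symm
  · rintro ⟨i, x, hx, hi⟩ ⟨j, y, hy, hj⟩ hxy
    obtain rfl : x = y := congrArg Subtype.val hxy
    obtain rfl : i = j := (h x hx).unique hi hj
    rfl
  · rintro ⟨x, hx⟩
    obtain ⟨i, hi, -⟩ := h x hx
    exact ⟨⟨i, x, hx, hi⟩, rfl⟩

lemma exists_apply_eq_self_of_odd_card {s : Finset α} {f : α → α} (hs : Odd s.card)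
    (hf : ∀ a ∈ s, f a ∈ s) (hff : ∀ a ∈ s, f (f a) = a) : ∃ a ∈ s, f a = a := by
  by_contra! hne
  have hsum : ∑ _a ∈ s, (1 : ZMod 2) = 0 :=
    Finset.sum_involution (fun a _ ↦ f a) (fun _ _ ↦ CharTwo.add_self_eq_zero 1)
      (fun a ha _ ↦ hne a ha) hf hff
  rw [Finset.sum_const, nsmul_one, ZMod.natCast_eq_zero_iff_even] at hsum
  exact Nat.not_even_iff_odd.2 hs hsum

lemma mk_mem_map_sym2Map {f : α ↪ β} {E : Finset (Sym2 α)} {x y : β} :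
    s(x, y) ∈ E.map f.sym2Map ↔ ∃ a b, s(a, b) ∈ E ∧ f a = x ∧ f b = y := by
  simp only [Finset.mem_map, Function.Embedding.sym2Map_apply]
  constructor
  · rintro ⟨⟨a, b⟩, hab, h⟩
    obtain ⟨ha, hb⟩ | ⟨ha, hb⟩ := Sym2.eq_iff.1 h
    · exact ⟨a, b, hab, ha, hb⟩
    · exact ⟨b, a, Sym2.eq_swap ▸ hab, hb, ha⟩
  · rintro ⟨a, b, hab, rfl, rfl⟩
    exact ⟨s(a, b), hab, rfl⟩

lemma preconnected_of_surjective {G : SimpleGraph α} {H : SimpleGraph β} {f : α → β}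
    (hG : G.Preconnected) (hf : f.Surjective)
    (h : ∀ a b, G.Adj a b → H.Reachable (f a) (f b)) : H.Preconnected := by
  intro x y
  obtain ⟨a, rfl⟩ := hf x
  obtain ⟨b, rfl⟩ := hf y
  obtain ⟨w⟩ := hG a b
  induction w with
  | nil => rfl
  | cons hadj _ ih => exact (h _ _ hadj).trans ih

end Generalities

section CircularOrder

variable {n k : ℕ}

lemma isNC_iff_sbtw {E : Finset (Sym2 (Fin n))} :
    IsNC E ↔ (∀ e ∈ E, ¬ e.IsDiag) ∧
      ∀ a b c d, s(a, b) ∈ E → s(c, d) ∈ E → sbtw a c b → ¬ sbtw b d a := by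
  refine and_congr_right fun _ ↦ ⟨fun h a b c d hab hcd hacb hbda ↦ ?_, ?_⟩
  · have hcross : Crosses s(a, b) s(c, d) ∨ Crosses s(c, d) s(a, b) := by
      rw [Fin.sbtw_iff] at hacb hbda
      rcases hacb with ⟨h₁, h₂⟩ | ⟨h₁, h₂⟩ | ⟨h₁, h₂⟩ <;>
        rcases hbda with ⟨h₃, h₄⟩ | ⟨h₃, h₄⟩ | ⟨h₃, h₄⟩ <;> try omega
      · exact .inr ⟨d, c, a, b, Sym2.eq_swap, rfl, h₃, h₁, h₂⟩
      · exact .inl ⟨a, b, c, d, rfl, rfl, h₁, h₂, h₄⟩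
      · exact .inr ⟨c, d, b, a, rfl, Sym2.eq_swap, h₁, h₃, h₄⟩
      · exact .inl ⟨b, a, d, c, Sym2.eq_swap, Sym2.eq_swap, h₃, h₄, h₂⟩
    exact hcross.elim (h _ hab _ hcd) (h _ hcd _ hab)
  · rintro h _ he _ hf ⟨a, b, c, d, rfl, rfl, hac, hcb, hbd⟩
    exact h a b c d he hf (.inl ⟨hac, hcb⟩) (.inr <| .inr ⟨hac.trans hcb, hbd⟩)

lemma isNC_map_iff {f : Fin n ↪ Fin k} (hf : ∀ a b c, sbtw (f a) (f b) (f c) ↔ sbtw a b c)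
    {E : Finset (Sym2 (Fin n))} : IsNC (E.map f.sym2Map) ↔ IsNC E := by
  rw [isNC_iff_sbtw, isNC_iff_sbtw]
  refine and_congr ?_ ⟨fun h a b c d hab hcd hacb hbda ↦ ?_, fun h x y z w hxy hzw ↦ ?_⟩
  · simp only [Finset.forall_mem_map, Function.Embedding.sym2Map_apply, Sym2.isDiag_map f.injective]
  · exact h (f a) (f b) (f c) (f d) (Finset.mem_map_of_mem f.sym2Map hab)
      (Finset.mem_map_of_mem f.sym2Map hcd) ((hf a c b).2 hacb) ((hf b d a).2 hbda)
  · obtain ⟨a, b, hab, rfl, rfl⟩ := mk_mem_map_sym2Map.1 hxy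
    obtain ⟨c, d, hcd, rfl, rfl⟩ := mk_mem_map_sym2Map.1 hzw
    rw [hf, hf]
    exact h a b c d hab hcd

lemma IsNC.mono {E F : Finset (Sym2 (Fin n))} (h : F ⊆ E) (hE : IsNC E) : IsNC F :=
  ⟨fun e he ↦ hE.1 e (h he), fun e he f hf ↦ hE.2 e (h he) f (h hf)⟩

end CircularOrder

section GraphOf

variable {n k : ℕ}

lemma graphOf_adj {E : Finset (Sym2 (Fin n))} {a b : Fin n} :
    (graphOf E).Adj a b ↔ s(a, b) ∈ E ∧ a ≠ b := by
  simp [graphOf]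

lemma graphOf_reachable_of_mem {E : Finset (Sym2 (Fin n))} {a b : Fin n} (h : s(a, b) ∈ E) :
    (graphOf E).Reachable a b := by
  obtain rfl | hab := eq_or_ne a b
  · rfl
  · exact (graphOf_adj.2 ⟨h, hab⟩).reachable

lemma graphOf_map (f : Fin n ↪ Fin k) (E : Finset (Sym2 (Fin n))) :
    graphOf (E.map f.sym2Map) = (graphOf E).map f := by
  ext x y
  rw [graphOf_adj, mk_mem_map_sym2Map, SimpleGraph.map_adj]
  constructor
  · rintro ⟨⟨a, b, hab, rfl, rfl⟩, hne⟩
    exact ⟨a, b, graphOf_adj.2 ⟨hab, ne_of_apply_ne f hne⟩, rfl, rfl⟩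
  · rintro ⟨a, b, hab, rfl, rfl⟩
    obtain ⟨hab, hne⟩ := graphOf_adj.1 hab
    exact ⟨⟨a, b, hab, rfl, rfl⟩, f.injective.ne hne⟩

lemma graphOf_mono {E F : Finset (Sym2 (Fin n))} (h : F ⊆ E) : graphOf F ≤ graphOf E :=
  SimpleGraph.fromEdgeSet_mono (Finset.coe_subset.2 h)

lemma isNCC_map_equiv_iff {σ : Fin n ≃ Fin k}
    (hσ : ∀ a b c, sbtw (σ a) (σ b) (σ c) ↔ sbtw a b c) {E : Finset (Sym2 (Fin n))} :
    IsNCC (E.map σ.toEmbedding.sym2Map) ↔ IsNCC E := by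
  unfold IsNCC
  rw [isNC_map_iff hσ, graphOf_map]
  exact and_congr_right fun _ ↦ (SimpleGraph.Iso.map σ (graphOf E)).connected_iff.symm

end GraphOf

section Rotation

variable {n : ℕ}

lemma rotMap_rotMap (s t : ℕ) (a : Fin n) : rotMap n s (rotMap n t a) = rotMap n (t + s) a := by
  simp [rotMap, Nat.add_assoc]

lemma rotMap_comm (s t : ℕ) (a : Fin n) :
    rotMap n s (rotMap n t a) = rotMap n t (rotMap n s a) := by
  rw [rotMap_rotMap, rotMap_rotMap, Nat.add_comm]

lemma rotMap_self (a : Fin n) : rotMap n n a = a := by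
  ext
  simp [rotMap, Nat.mod_eq_of_lt]

lemma rotMap_injective (n t : ℕ) : Function.Injective (rotMap n t) := fun a b h ↦
  Fin.ext <| (Nat.ModEq.add_right_cancel' t (congrArg Fin.val h)).eq_of_lt_of_lt a.2 b.2

lemma val_rotMap {t : ℕ} (ht : t ≤ n) (a : Fin n) :
    (rotMap n t a : ℕ) = if (a : ℕ) + t < n then (a : ℕ) + t else a + t - n := by
  change ((a : ℕ) + t) % n = _
  split_ifs with h
  · exact Nat.mod_eq_of_lt h
  · rw [Nat.mod_eq_sub_mod (by omega), Nat.mod_eq_of_lt (by omega)]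

lemma sbtw_rotMap (t : ℕ) (a b c : Fin n) :
    sbtw (rotMap n t a) (rotMap n t b) (rotMap n t c) ↔ sbtw a b c := by
  have hmod : rotMap n t = rotMap n (t % n) := by
    ext; simp [rotMap]
  have ht : t % n ≤ n := (Nat.mod_lt t a.pos).le
  simp only [Fin.sbtw_iff, Fin.lt_def, hmod, val_rotMap ht]
  split_ifs <;> omega

/-- Rotation of the circle of `n` vertices by `t` positions, as a permutation. -/
noncomputable def rotPerm (n t : ℕ) : Equiv.Perm (Fin n) :=
  .ofBijective (rotMap n t) (Finite.injective_iff_bijective.1 (rotMap_injective n t))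

/-- Rotation by `t` positions, acting on the edge sets on `n` vertices. -/
noncomputable def rotEdges (n t : ℕ) : Equiv.Perm (Finset (Sym2 (Fin n))) :=
  .ofBijective (Finset.map (rotPerm n t).toEmbedding.sym2Map)
    (Finite.injective_iff_bijective.1 (Finset.map_injective _))

lemma map_mem_rotEdges {t : ℕ} {E : Finset (Sym2 (Fin n))} {e : Sym2 (Fin n)} :
    e.map (rotMap n t) ∈ rotEdges n t E ↔ e ∈ E :=
  Finset.mem_map' _

lemma card_rotEdges (t : ℕ) (E : Finset (Sym2 (Fin n))) : (rotEdges n t E).card = E.card :=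
  Finset.card_map _

lemma isNCC_rotEdges {t : ℕ} {E : Finset (Sym2 (Fin n))} : IsNCC (rotEdges n t E) ↔ IsNCC E :=
  isNCC_map_equiv_iff (sbtw_rotMap t)

lemma rotInv_rotEdges {s t : ℕ} {E : Finset (Sym2 (Fin n))} :
    RotInv n s (rotEdges n t E) ↔ RotInv n s E := by
  have hcomm (e : Sym2 (Fin n)) :
      (e.map (rotMap n t)).map (rotMap n s) = (e.map (rotMap n s)).map (rotMap n t) := by
    rw [Sym2.map_map, Sym2.map_map]
    exact congrArg (Sym2.map · e) (funext (rotMap_comm s t))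
  calc RotInv n s (rotEdges n t E)
      ↔ ∀ e ∈ E, (e.map (rotMap n t)).map (rotMap n s) ∈ rotEdges n t E := Finset.forall_mem_map
    _ ↔ RotInv n s E := by simp only [hcomm, map_mem_rotEdges, RotInv]

end Rotation

section HalfTurn

variable {m : ℕ}

lemma rotMap_half_involutive (m : ℕ) : Function.Involutive (rotMap (2 * m) m) := fun a ↦ by
  rw [rotMap_rotMap, ← two_mul, rotMap_self]

lemma sym2Map_rotMap_half_involutive (m : ℕ) :
    Function.Involutive (Sym2.map (rotMap (2 * m) m)) := fun e ↦ by
  rw [Sym2.map_map, (rotMap_half_involutive m).comp_self, Sym2.map_id, id]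

lemma rotMap_half_ne (a : Fin (2 * m)) : rotMap (2 * m) m a ≠ a := fun h ↦ by
  have hval := val_rotMap (t := m) (by omega) a
  rw [h] at hval
  split_ifs at hval <;> omega

/-- The diameter joining the vertex `i` of the circle of `2 * m` vertices to its antipode. Every
diameter arises from exactly one `i : Fin m`. -/
def diameter (i : Fin m) : Sym2 (Fin (2 * m)) :=
  s(⟨i, by omega⟩, ⟨i + m, by omega⟩)

lemma map_rotMap_diameter_zero [NeZero m] (i : Fin m) :
    (diameter 0).map (rotMap (2 * m) i) = diameter i := by
  unfold diameter
  rw [Sym2.map_mk]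
  congr 2 <;> ext <;>
    rw [val_rotMap (by omega), if_pos (by simp only [Fin.val_zero]; omega)] <;>
    simp only [Fin.val_zero] <;> omega

lemma exists_eq_diameter_of_map_rotMap_eq {e : Sym2 (Fin (2 * m))}
    (he : e.map (rotMap (2 * m) m) = e) : ∃ i : Fin m, e = diameter i := by
  induction e with | _ a b
  obtain rfl : rotMap (2 * m) m a = b := by
    obtain ⟨ha, -⟩ | ⟨ha, -⟩ := Sym2.eq_iff.1 he
    · exact absurd ha (rotMap_half_ne a)
    · exact ha
  have hval := val_rotMap (t := m) (by omega) a
  obtain ha | ha := lt_or_ge (a : ℕ) m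
  · rw [if_pos (by omega)] at hval
    exact ⟨⟨a, ha⟩, congrArg (s(a, ·)) (Fin.ext hval)⟩
  · rw [if_neg (by omega)] at hval
    refine ⟨⟨a - m, by omega⟩, Sym2.eq_swap.trans (congrArg₂ (s(·, ·)) ?_ ?_)⟩ <;> ext <;>
      simp only [hval] <;> omega

lemma IsNC.diameter_unique {E : Finset (Sym2 (Fin (2 * m)))} (hE : IsNC E) {i j : Fin m}
    (hi : diameter i ∈ E) (hj : diameter j ∈ E) : i = j := by
  have hle {i j : Fin m} (hi : diameter i ∈ E) (hj : diameter j ∈ E) : j ≤ i := by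
    by_contra! hij
    exact hE.2 _ hi _ hj ⟨_, _, _, _, rfl, rfl, hij, by simp only [Fin.lt_def]; omega,
      by simp only [Fin.lt_def]; omega⟩
  exact le_antisymm (hle hj hi) (hle hi hj)

lemma existsUnique_diameter_mem {E : Finset (Sym2 (Fin (2 * m)))} (hE : IsNC E)
    (hinv : RotInv (2 * m) m E) (hodd : Odd E.card) : ∃! i : Fin m, diameter i ∈ E := by
  obtain ⟨e, he, hfix⟩ := exists_apply_eq_self_of_odd_card hodd hinv
    fun e _ ↦ sym2Map_rotMap_half_involutive m e
  obtain ⟨i, rfl⟩ := exists_eq_diameter_of_map_rotMap_eq hfix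
  exact ⟨i, he, fun j hj ↦ hE.diameter_unique hj he⟩

/-- `E` is one of the graphs counted by `nccRot (2 * m) k m`: a non-crossing connected graph on
`2 * m` vertices with `k` edges that is invariant under the half-turn. -/
def IsCentralNCC (m k : ℕ) (E : Finset (Sym2 (Fin (2 * m)))) : Prop :=
  IsNCC E ∧ E.card = k ∧ RotInv (2 * m) m E

lemma isCentralNCC_rotEdges {k t : ℕ} {E : Finset (Sym2 (Fin (2 * m)))} :
    IsCentralNCC m k (rotEdges (2 * m) t E) ↔ IsCentralNCC m k E := by
  unfold IsCentralNCC
  rw [isNCC_rotEdges, card_rotEdges, rotInv_rotEdges]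

lemma card_isCentralNCC_diameter [NeZero m] (k : ℕ) (i : Fin m) :
    Nat.card {E // IsCentralNCC m k E ∧ diameter i ∈ E} =
      Nat.card {E // IsCentralNCC m k E ∧ diameter (0 : Fin m) ∈ E} := by
  refine (Nat.card_congr ((rotEdges (2 * m) i).subtypeEquiv fun E ↦ ?_)).symm
  rw [isCentralNCC_rotEdges, ← map_rotMap_diameter_zero i, map_mem_rotEdges]

lemma nccRot_eq_sum_card_diameter {k : ℕ} (hk : Odd k) :
    nccRot (2 * m) k m = ∑ i : Fin m, Nat.card {E // IsCentralNCC m k E ∧ diameter i ∈ E} :=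
  card_subtype_eq_sum_of_existsUnique fun _ ⟨hE, hcard, hinv⟩ ↦
    existsUnique_diameter_mem hE.1 hinv (hcard ▸ hk)

end HalfTurn

section Halves

variable {m : ℕ}

lemma hasEdge1n_iff {F : Finset (Sym2 (Fin (m + 1)))} : HasEdge1n F ↔ s(0, Fin.last m) ∈ F := by
  constructor
  · rintro ⟨a, b, ha, hb, hab⟩
    rwa [Fin.ext (a := a) (b := 0) ha, Fin.ext (a := b) (b := Fin.last m) hb] at hab
  · exact fun h ↦ ⟨0, Fin.last m, rfl, rfl, h⟩

variable [NeZero m]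

/-- The half `{0, …, m}` of the circle of `2 * m` vertices, on one side of the diameter at `0`. -/
def halfEmb (m : ℕ) [NeZero m] : Fin (m + 1) ↪ Fin (2 * m) :=
  Fin.castLEEmb (by have := NeZero.pos m; omega)

/-- The half `{m, …, 2 * m - 1, 0}` of the circle of `2 * m` vertices, on the other side of the
diameter at `0` and parametrized as the half-turn of `halfEmb m`. -/
noncomputable def oppHalfEmb (m : ℕ) [NeZero m] : Fin (m + 1) ↪ Fin (2 * m) :=
  (halfEmb m).trans (rotPerm (2 * m) m).toEmbedding

lemma val_halfEmb (a : Fin (m + 1)) : (halfEmb m a : ℕ) = a := rfl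

lemma rotMap_halfEmb (a : Fin (m + 1)) : rotMap (2 * m) m (halfEmb m a) = oppHalfEmb m a := rfl

lemma rotMap_oppHalfEmb (a : Fin (m + 1)) : rotMap (2 * m) m (oppHalfEmb m a) = halfEmb m a :=
  rotMap_half_involutive m _

lemma val_oppHalfEmb (a : Fin (m + 1)) :
    (oppHalfEmb m a : ℕ) = if (a : ℕ) < m then (a : ℕ) + m else 0 := by
  rw [← rotMap_halfEmb, val_rotMap (by omega), val_halfEmb]
  split_ifs <;> omega

lemma sbtw_halfEmb (a b c : Fin (m + 1)) :
    sbtw (halfEmb m a) (halfEmb m b) (halfEmb m c) ↔ sbtw a b c :=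
  Iff.rfl

lemma sbtw_oppHalfEmb (a b c : Fin (m + 1)) :
    sbtw (oppHalfEmb m a) (oppHalfEmb m b) (oppHalfEmb m c) ↔ sbtw a b c :=
  sbtw_rotMap m _ _ _

lemma halfEmb_eq_oppHalfEmb_iff {a b : Fin (m + 1)} :
    halfEmb m a = oppHalfEmb m b ↔ a = 0 ∧ b = Fin.last m ∨ a = Fin.last m ∧ b = 0 := by
  have := NeZero.pos m
  simp only [Fin.ext_iff, val_halfEmb, val_oppHalfEmb, Fin.val_zero, Fin.val_last]
  split_ifs <;> omega

lemma map_halfEmb_zero_last : Sym2.map (halfEmb m) s(0, Fin.last m) = diameter (0 : Fin m) := by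
  rw [Sym2.map_mk, diameter]
  congr 2
  ext
  simp [val_halfEmb]

lemma map_halfEmb_eq_map_oppHalfEmb_iff {e e' : Sym2 (Fin (m + 1))} (he : ¬ e.IsDiag) :
    e.map (halfEmb m) = e'.map (oppHalfEmb m) ↔
      e = s(0, Fin.last m) ∧ e' = s(0, Fin.last m) := by
  induction e with | _ a b
  induction e' with | _ c d
  rw [Sym2.mk_isDiag_iff] at he
  simp only [Sym2.map_mk, Sym2.eq_iff, halfEmb_eq_oppHalfEmb_iff]
  grind

lemma mem_range_halfEmb {x : Fin (2 * m)} : x ∈ Set.range (halfEmb m) ↔ (x : ℕ) ≤ m :=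
  ⟨fun ⟨a, ha⟩ ↦ ha ▸ Nat.lt_succ_iff.1 a.2, fun hx ↦ ⟨⟨x, Nat.lt_succ_iff.2 hx⟩, rfl⟩⟩

lemma mem_range_oppHalfEmb {x : Fin (2 * m)} :
    x ∈ Set.range (oppHalfEmb m) ↔ (x : ℕ) = 0 ∨ m ≤ x := by
  constructor
  · rintro ⟨a, rfl⟩
    rw [val_oppHalfEmb]
    split_ifs <;> omega
  · rintro (hx | hx)
    · exact ⟨Fin.last m, Fin.ext <| by simp [val_oppHalfEmb, hx]⟩
    · refine ⟨⟨x - m, by omega⟩, Fin.ext ?_⟩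
      rw [val_oppHalfEmb, if_pos (by simp only; omega)]
      simp only
      omega

/-- The graph on `2 * m` vertices formed by a copy of `F` on either side of the diameter at `0`. -/
noncomputable def double (F : Finset (Sym2 (Fin (m + 1)))) : Finset (Sym2 (Fin (2 * m))) :=
  F.map (halfEmb m).sym2Map ∪ F.map (oppHalfEmb m).sym2Map

/-- The part of a graph on `2 * m` vertices lying on the side `{0, …, m}` of the diameter at `0`,
inverse to `double`. -/
noncomputable def half (E : Finset (Sym2 (Fin (2 * m)))) : Finset (Sym2 (Fin (m + 1))) :=
  E.preimage (halfEmb m).sym2Map (halfEmb m).sym2Map.injective.injOn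

lemma mem_half {E : Finset (Sym2 (Fin (2 * m)))} {e : Sym2 (Fin (m + 1))} :
    e ∈ half E ↔ e.map (halfEmb m) ∈ E :=
  Finset.mem_preimage

lemma mem_double {F : Finset (Sym2 (Fin (m + 1)))} {e : Sym2 (Fin (2 * m))} :
    e ∈ double F ↔ (∃ e' ∈ F, e'.map (halfEmb m) = e) ∨ ∃ e' ∈ F, e'.map (oppHalfEmb m) = e := by
  simp only [double, Finset.mem_union, Finset.mem_map, Function.Embedding.sym2Map_apply]

lemma rotInv_double (F : Finset (Sym2 (Fin (m + 1)))) : RotInv (2 * m) m (double F) := by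
  intro e he
  rw [mem_double] at he ⊢
  rcases he with ⟨e', he', rfl⟩ | ⟨e', he', rfl⟩
  · refine .inr ⟨e', he', ?_⟩
    rw [Sym2.map_map]
    rfl
  · refine .inl ⟨e', he', ?_⟩
    rw [Sym2.map_map]
    exact congrArg (Sym2.map · e') (funext fun a ↦ (rotMap_oppHalfEmb a).symm)

lemma card_double {F : Finset (Sym2 (Fin (m + 1)))} (hF : ∀ e ∈ F, ¬ e.IsDiag)
    (hlast : s(0, Fin.last m) ∈ F) : (double F).card + 1 = 2 * F.card := by
  have hinter : F.map (halfEmb m).sym2Map ∩ F.map (oppHalfEmb m).sym2Map =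
      {(halfEmb m).sym2Map s(0, Fin.last m)} := by
    ext e
    simp only [Finset.mem_inter, Finset.mem_map, Finset.mem_singleton,
      Function.Embedding.sym2Map_apply]
    constructor
    · rintro ⟨⟨e₁, h₁, rfl⟩, e₂, -, h₂⟩
      rw [((map_halfEmb_eq_map_oppHalfEmb_iff (hF e₁ h₁)).1 h₂.symm).1]
    · rintro rfl
      exact ⟨⟨_, hlast, rfl⟩, _, hlast,
        ((map_halfEmb_eq_map_oppHalfEmb_iff (hF _ hlast)).2 ⟨rfl, rfl⟩).symm⟩
  have hcard := Finset.card_union_add_card_inter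
    (F.map (halfEmb m).sym2Map) (F.map (oppHalfEmb m).sym2Map)
  rw [hinter, Finset.card_singleton, Finset.card_map, Finset.card_map] at hcard
  exact hcard.trans (two_mul _).symm

lemma isNC_double_iff {F : Finset (Sym2 (Fin (m + 1)))} : IsNC (double F) ↔ IsNC F := by
  refine ⟨fun h ↦ (isNC_map_iff sbtw_halfEmb).1 (h.mono Finset.subset_union_left), fun h ↦ ?_⟩
  have h₁ := (isNC_map_iff sbtw_halfEmb).2 h
  have h₂ := (isNC_map_iff sbtw_oppHalfEmb).2 h
  refine ⟨fun e he ↦ (Finset.mem_union.1 he).elim (h₁.1 e) (h₂.1 e), ?_⟩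
  rintro _ he _ hf ⟨a, b, c, d, rfl, rfl, hac, hcb, hbd⟩
  rcases Finset.mem_union.1 he with he | he <;> rcases Finset.mem_union.1 hf with hf | hf
  · exact h₁.2 _ he _ hf ⟨a, b, c, d, rfl, rfl, hac, hcb, hbd⟩
  · obtain ⟨-, b', -, -, hb⟩ := mk_mem_map_sym2Map.1 he
    obtain ⟨c', -, -, hc, -⟩ := mk_mem_map_sym2Map.1 hf
    have hbm := mem_range_halfEmb.1 ⟨b', hb⟩
    have hcm := mem_range_oppHalfEmb.1 ⟨c', hc⟩
    omega
  · obtain ⟨-, b', -, -, hb⟩ := mk_mem_map_sym2Map.1 he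
    obtain ⟨-, d', -, -, hd⟩ := mk_mem_map_sym2Map.1 hf
    have hbm := mem_range_oppHalfEmb.1 ⟨b', hb⟩
    have hdm := mem_range_halfEmb.1 ⟨d', hd⟩
    omega
  · exact h₂.2 _ he _ hf ⟨a, b, c, d, rfl, rfl, hac, hcb, hbd⟩

lemma connected_of_connected_double {F : Finset (Sym2 (Fin (m + 1)))} (hlast : s(0, Fin.last m) ∈ F)
    (h : (graphOf (double F)).Connected) : (graphOf F).Connected := by
  let fold (x : Fin (2 * m)) : Fin (m + 1) :=
    ⟨if (x : ℕ) ≤ m then x else x - m, by split_ifs <;> omega⟩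
  have fold_half (a : Fin (m + 1)) : fold (halfEmb m a) = a :=
    Fin.ext <| if_pos (Nat.lt_succ_iff.1 a.2)
  have fold_opp (a : Fin (m + 1)) : (graphOf F).Reachable (fold (oppHalfEmb m a)) a := by
    have hfold : fold (oppHalfEmb m a) = a ∨ s(fold (oppHalfEmb m a), a) = s(0, Fin.last m) := by
      simp only [fold, Sym2.eq_iff, Fin.ext_iff, val_oppHalfEmb, Fin.val_zero, Fin.val_last]
      split_ifs <;> omega
    rcases hfold with hfold | hfold
    · rw [hfold]
    · exact graphOf_reachable_of_mem (hfold ▸ hlast)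
  refine ⟨preconnected_of_surjective h.preconnected (fun a ↦ ⟨_, fold_half a⟩) fun x y hxy ↦ ?_⟩
  rcases Finset.mem_union.1 (graphOf_adj.1 hxy).1 with he | he
  · obtain ⟨a, b, hab, rfl, rfl⟩ := mk_mem_map_sym2Map.1 he
    rw [fold_half, fold_half]
    exact graphOf_reachable_of_mem hab
  · obtain ⟨a, b, hab, rfl, rfl⟩ := mk_mem_map_sym2Map.1 he
    exact (fold_opp a).trans <| (graphOf_reachable_of_mem hab).trans (fold_opp b).symm

lemma connected_double {F : Finset (Sym2 (Fin (m + 1)))} (h : (graphOf F).Connected) :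
    (graphOf (double F)).Connected := by
  have hreach {f : Fin (m + 1) ↪ Fin (2 * m)} (hf : F.map f.sym2Map ⊆ double F)
      (a b : Fin (m + 1)) : (graphOf (double F)).Reachable (f a) (f b) :=
    ((h.preconnected a b).map (SimpleGraph.Embedding.map f _).toHom).mono
      (graphOf_map f F ▸ graphOf_mono hf)
  have hzero (x : Fin (2 * m)) : (graphOf (double F)).Reachable (halfEmb m 0) x := by
    obtain hx | hx := le_total (x : ℕ) m
    · obtain ⟨a, rfl⟩ := mem_range_halfEmb.2 hx
      exact hreach Finset.subset_union_left 0 a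
    · obtain ⟨a, rfl⟩ := mem_range_oppHalfEmb.2 (.inr hx)
      rw [halfEmb_eq_oppHalfEmb_iff.2 (.inl ⟨rfl, rfl⟩)]
      exact hreach Finset.subset_union_right (Fin.last m) a
  have : Nonempty (Fin (2 * m)) := ⟨halfEmb m 0⟩
  exact ⟨fun x y ↦ (hzero x).symm.trans (hzero y)⟩

lemma isNCC_double_iff {F : Finset (Sym2 (Fin (m + 1)))} (hlast : s(0, Fin.last m) ∈ F) :
    IsNCC (double F) ↔ IsNCC F :=
  and_congr isNC_double_iff ⟨connected_of_connected_double hlast, connected_double⟩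

lemma half_double {F : Finset (Sym2 (Fin (m + 1)))} (hF : ∀ e ∈ F, ¬ e.IsDiag)
    (hlast : s(0, Fin.last m) ∈ F) : half (double F) = F := by
  ext e
  rw [mem_half, mem_double]
  refine ⟨?_, fun he ↦ .inl ⟨e, he, rfl⟩⟩
  rintro (⟨e', he', h⟩ | ⟨e', he', h⟩)
  · rwa [← Sym2.map.injective (halfEmb m).injective h]
  · have he : ¬ e.IsDiag := by
      rw [← Sym2.isDiag_map (halfEmb m).injective, ← h, Sym2.isDiag_map (oppHalfEmb m).injective]
      exact hF e' he'
    rwa [((map_halfEmb_eq_map_oppHalfEmb_iff he).1 h.symm).1]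

lemma IsNC.mem_range_map_halfEmb_or {E : Finset (Sym2 (Fin (2 * m)))} (hE : IsNC E)
    (h0 : diameter (0 : Fin m) ∈ E) {e : Sym2 (Fin (2 * m))} (he : e ∈ E) :
    e ∈ Set.range (Sym2.map (halfEmb m)) ∨ e ∈ Set.range (Sym2.map (oppHalfEmb m)) := by
  have hcross {x y : Fin (2 * m)} (hxy : s(x, y) ∈ E) (h : 0 < (x : ℕ) ∧ x < m) :
      (y : ℕ) ≤ m := by
    by_contra! hy
    exact hE.2 _ h0 _ hxy ⟨_, _, x, y, rfl, rfl, h.1, by simpa [Fin.lt_def] using h.2,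
      by simpa [Fin.lt_def] using hy⟩
  induction e with | _ x y
  have hxy := hcross he
  have hyx := hcross (Sym2.eq_swap ▸ he)
  obtain ⟨hx, hy⟩ | ⟨hx, hy⟩ : ((x : ℕ) ≤ m ∧ (y : ℕ) ≤ m) ∨
      (((x : ℕ) = 0 ∨ m ≤ x) ∧ ((y : ℕ) = 0 ∨ m ≤ y)) := by omega
  · obtain ⟨a, rfl⟩ := mem_range_halfEmb.2 hx
    obtain ⟨b, rfl⟩ := mem_range_halfEmb.2 hy
    exact .inl ⟨s(a, b), rfl⟩
  · obtain ⟨a, rfl⟩ := mem_range_oppHalfEmb.2 hx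
    obtain ⟨b, rfl⟩ := mem_range_oppHalfEmb.2 hy
    exact .inr ⟨s(a, b), rfl⟩

lemma double_half {E : Finset (Sym2 (Fin (2 * m)))} (hE : IsNC E) (hinv : RotInv (2 * m) m E)
    (h0 : diameter (0 : Fin m) ∈ E) : double (half E) = E := by
  have hopp (e : Sym2 (Fin (m + 1))) :
      (e.map (oppHalfEmb m)).map (rotMap (2 * m) m) = e.map (halfEmb m) := by
    rw [Sym2.map_map]
    exact congrArg (Sym2.map · e) (funext rotMap_oppHalfEmb)
  ext e
  simp only [mem_double, mem_half]
  constructor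
  · rintro (⟨e, he, rfl⟩ | ⟨e, he, rfl⟩)
    · exact he
    · rw [← sym2Map_rotMap_half_involutive m (e.map (oppHalfEmb m)), hopp]
      exact hinv _ he
  · intro he
    rcases hE.mem_range_map_halfEmb_or h0 he with ⟨e, rfl⟩ | ⟨e, rfl⟩
    · exact .inl ⟨e, he, rfl⟩
    · exact .inr ⟨e, hopp e ▸ hinv _ he, rfl⟩

lemma isCentralNCC_double_iff {F : Finset (Sym2 (Fin (m + 1)))} {j : ℕ}
    (hlast : s(0, Fin.last m) ∈ F) :
    IsCentralNCC m (2 * j + 1) (double F) ↔ IsNCC F ∧ F.card = j + 1 := by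
  unfold IsCentralNCC
  rw [isNCC_double_iff hlast]
  refine and_congr_right fun hF ↦ ?_
  have hcard := card_double hF.1.1 hlast
  exact ⟨fun h ↦ by omega, fun h ↦ ⟨by omega, rotInv_double F⟩⟩

lemma card_isCentralNCC_diameter_zero (j : ℕ) :
    Nat.card {E // IsCentralNCC m (2 * j + 1) E ∧ diameter (0 : Fin m) ∈ E} =
      nccEdge (m + 1) (j + 1) := by
  have hmem {E : Finset (Sym2 (Fin (2 * m)))} :
      s(0, Fin.last m) ∈ half E ↔ diameter (0 : Fin m) ∈ E := by
    rw [mem_half, map_halfEmb_zero_last]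
  have hhalf {E} (h : IsCentralNCC m (2 * j + 1) E ∧ diameter (0 : Fin m) ∈ E) :
      IsNCC (half E) ∧ (half E).card = j + 1 ∧ HasEdge1n (half E) := by
    obtain ⟨hE, h0⟩ := h
    have hlast := hmem.2 h0
    rw [← double_half hE.1.1 hE.2.2 h0, isCentralNCC_double_iff hlast] at hE
    exact ⟨hE.1, hE.2, hasEdge1n_iff.2 hlast⟩
  have hdouble {F : Finset (Sym2 (Fin (m + 1)))}
      (h : IsNCC F ∧ F.card = j + 1 ∧ HasEdge1n F) :
      IsCentralNCC m (2 * j + 1) (double F) ∧ diameter (0 : Fin m) ∈ double F := by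
    obtain ⟨hF, hcard, hedge⟩ := h
    have hlast := hasEdge1n_iff.1 hedge
    refine ⟨(isCentralNCC_double_iff hlast).2 ⟨hF, hcard⟩, hmem.1 ?_⟩
    rwa [half_double hF.1.1 hlast]
  exact Nat.card_congr
    { toFun := fun E ↦ ⟨half E, hhalf E.2⟩
      invFun := fun F ↦ ⟨double F, hdouble F.2⟩
      left_inv := fun ⟨_, hE, h0⟩ ↦ Subtype.ext (double_half hE.1.1 hE.2.2 h0)
      right_inv := fun ⟨_, hF, _, hedge⟩ ↦
        Subtype.ext (half_double hF.1.1 (hasEdge1n_iff.1 hedge)) }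

end Halves

theorem stmt13_general (n k : ℕ) (hne : Even n) (hko : Odd k) :
    nccRot n k (n / 2) = (n / 2) * nccEdge (n / 2 + 1) ((k + 1) / 2) := by
  obtain ⟨m, rfl⟩ := hne.exists_two_nsmul
  obtain ⟨j, rfl⟩ := hko
  rw [smul_eq_mul, Nat.mul_div_cancel_left m two_pos,
    show (2 * j + 1 + 1) / 2 = j + 1 by omega, nccRot_eq_sum_card_diameter ⟨j, rfl⟩]
  obtain rfl | hm := eq_zero_or_neZero m
  · simp
  · simp_rw [card_isCentralNCC_diameter, card_isCentralNCC_diameter_zero, Finset.sum_const,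
      Finset.card_univ, Fintype.card_fin, smul_eq_mul]

/-- For `n` even, `k` odd, `n-1 ≤ k ≤ 2n-3`: the number of non-crossing connected
graphs on `n` vertices with `k` edges invariant under rotation by `π` equals
`(n/2)·f_{n/2+1, (k+1)/2}`. -/
theorem stmt13 (n k : ℕ) (hne : Even n) (hko : Odd k)
    (hnk : (n : ℤ) - 1 ≤ (k : ℤ)) (hk : (k : ℤ) ≤ 2 * (n : ℤ) - 3) :
    nccRot n k (n / 2) = (n / 2) * nccEdge (n / 2 + 1) ((k + 1) / 2) :=
  stmt13_general n k hne hko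
end

section
/- Let d ≥ 3 divide n and let d divide k, with n' = n/d, k' = k/d. Then the number of non-crossing connected graphs on n vertices with k edges invariant under rotation by 2π/d equals n' * f_{n'+1, k'} + s_2(2n', 2k'), where f_{m,j} counts non-crossing connected graphs on m vertices with j edges containing edge {1,m}, and s_2(2n',2k') counts non-crossing connected graphs on 2n' vertices with 2k' edges invariant under rotation by π. -/
/-!
Let `n = d * N`. A graph on the circle that is invariant under rotation by `N` lifts to a graph of
period `N` on the universal cover `ℤ`, each chord being lifted to its shorter arcs. An arc longer
than `N` would cross its own translate by `N`, so for `d ≥ 3` no choice of arc is ever ambiguous and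
the graphs to be counted correspond to the connected non-crossing graphs on `ℤ` with period `N` and
`k / d` edges per period, whatever `d` is.

For `d = 2` the same holds away from diameters, whose two arcs have the same length `N`. A diameter
is unique and is the only edge fixed by the rotation, so it makes the number of edges odd; hence
`s₂(2N, 2K)` counts exactly the periodic graphs without an edge of length `N`. In a periodic graph
with such an edge, the edge is unique up to translation, which leaves `N` positions for it, and its
translates cut the graph into copies of a connected non-crossing graph on `N + 1` vertices that
contains the edge joining its two extreme vertices.
-/

section NonCrossing

variable {α β : Type*} [LinearOrder α] [LinearOrder β] {G : SimpleGraph α}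

/-- A graph on a linearly ordered set is non-crossing if no two of its edges interleave. For a
cyclic arrangement of `Fin n` this is the usual planarity condition on chords. -/
def NonCrossing (G : SimpleGraph α) : Prop :=
  ∀ ⦃a b c d : α⦄, a < b → b < c → c < d → G.Adj a c → ¬ G.Adj b d

theorem NonCrossing.comap (hG : NonCrossing G) {f : β → α} (hf : StrictMono f) :
    NonCrossing (G.comap f) :=
  fun _ _ _ _ hab hbc hcd hac hbd => hG (hf hab) (hf hbc) (hf hcd) hac hbd

theorem exists_adj_of_reachable_of_mem_of_notMem {V : Type*} {G : SimpleGraph V} {u v : V}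
    {S : Set V} (h : G.Reachable u v) (hu : u ∈ S) (hv : v ∉ S) :
    ∃ x ∈ S, ∃ y ∉ S, G.Adj x y ∧ G.Reachable u x := by
  classical
  obtain ⟨p⟩ := h
  obtain ⟨e, he, he_fst, he_snd⟩ := p.exists_boundary_dart S hu hv
  exact ⟨e.fst, he_fst, e.snd, he_snd, e.adj,
    ⟨p.takeUntil e.fst (p.dart_fst_mem_support_of_mem_darts he)⟩⟩

theorem NonCrossing.reachable_left_of_mem_Ioo (hG : NonCrossing G) {p q x y : α}
    (hpq : G.Adj p q) (hx : x ∈ Set.Ioo p q) (hy : y ∉ Set.Ioo p q) (hxy : G.Reachable x y) :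
    G.Reachable x p := by
  obtain ⟨u, ⟨hpu, huq⟩, v, hv, huv, hxu⟩ := exists_adj_of_reachable_of_mem_of_notMem hxy hx hy
  refine (hxu.trans huv.reachable).trans ?_
  rcases lt_trichotomy v p with hvp | rfl | hpv
  · exact absurd hpq (hG hvp hpu huq huv.symm)
  · exact .rfl
  · rcases (not_lt.mp fun hvq => hv ⟨hpv, hvq⟩).eq_or_lt with rfl | hqv
    · exact hpq.symm.reachable
    · exact absurd huv (hG hpu huq hqv hpq)

theorem NonCrossing.reachable_of_interleaved (hG : NonCrossing G) {a b c d : α} (hab : a < b)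
    (hbc : b < c) (hcd : c < d) (hac : G.Reachable a c) (hbd : G.Reachable b d) :
    G.Reachable a b := by
  obtain ⟨x, ⟨hax, hxc⟩, y, hy, hxy, hbx⟩ := exists_adj_of_reachable_of_mem_of_notMem hbd
    (S := Set.Ioo a c) ⟨hab, hbc⟩ fun h => h.2.not_gt hcd
  suffices G.Reachable a x from this.trans hbx.symm
  rcases lt_trichotomy y a with hya | rfl | hay
  · exact (hG.reachable_left_of_mem_Ioo hxy.symm ⟨hya, hax⟩ (fun h => h.2.not_gt hxc) hac).trans
      hxy.symm.reachable
  · exact hxy.symm.reachable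
  · rcases (not_lt.mp fun hyc => hy ⟨hay, hyc⟩).eq_or_lt with rfl | hcy
    · exact hac.trans hxy.symm.reachable
    · exact hac.trans <|
        hG.reachable_left_of_mem_Ioo hxy ⟨hxc, hcy⟩ (fun h => h.1.not_gt hax) hac.symm

end NonCrossing

section Periods

variable {A : Type*} [AddGroup A] {G : SimpleGraph A} {c : A}

/-- The group of translations that preserve a graph on an additive group: the periods of a graph
on `ℤ`, the rotational symmetries of a graph on `Fin n`. -/
def periods (G : SimpleGraph A) : AddSubgroup A where
  carrier := {c | ∀ a b, G.Adj (a + c) (b + c) ↔ G.Adj a b}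
  add_mem' {c c'} hc hc' a b := by rw [← add_assoc, ← add_assoc, hc', hc]
  zero_mem' a b := by rw [add_zero, add_zero]
  neg_mem' {c} hc a b := by
    simpa only [neg_add_cancel_right] using (hc (a + -c) (b + -c)).symm

theorem adj_add_right_iff (hc : c ∈ periods G) (a b : A) : G.Adj (a + c) (b + c) ↔ G.Adj a b :=
  hc a b

theorem mem_periods_of_forall_adj [Finite A] (h : ∀ a b, G.Adj a b → G.Adj (a + c) (b + c)) :
    c ∈ periods G := by
  have adj_nsmul (m : ℕ) (a b : A) (hab : G.Adj a b) : G.Adj (a + m • c) (b + m • c) := by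
    induction m with
    | zero => simpa only [zero_nsmul, add_zero] using hab
    | succ m ih => simpa only [succ_nsmul, add_assoc] using h _ _ ih
  have h_neg : (addOrderOf c - 1) • c = -c := by
    refine eq_neg_of_add_eq_zero_left ?_
    rw [← succ_nsmul, Nat.sub_add_cancel (addOrderOf_pos c), addOrderOf_nsmul_eq_zero]
  refine fun a b => ⟨fun hab => ?_, h a b⟩
  simpa only [h_neg, add_neg_cancel_right] using adj_nsmul (addOrderOf c - 1) _ _ hab

theorem reachable_add_right (hc : c ∈ periods G) {a b : A} (h : G.Reachable a b) :
    G.Reachable (a + c) (b + c) :=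
  h.map ⟨(· + c), (adj_add_right_iff hc _ _).mpr⟩

theorem ncard_neighborSet_add_right (hc : c ∈ periods G) (a : A) :
    (G.neighborSet (a + c)).ncard = (G.neighborSet a).ncard := by
  have h_image : G.neighborSet (a + c) = (· + c) '' G.neighborSet a := by
    ext b
    simp only [Set.image_add_right, Set.mem_preimage, SimpleGraph.mem_neighborSet]
    rw [← adj_add_right_iff hc a, neg_add_cancel_right]
  rw [h_image, Set.ncard_image_of_injective _ (add_left_injective c)]

end Periods

section PeriodicInt

variable {H : SimpleGraph ℤ} {N : ℤ}

theorem adj_add_mul_iff (hN : N ∈ periods H) (t a b : ℤ) :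
    H.Adj (a + t * N) (b + t * N) ↔ H.Adj a b :=
  adj_add_right_iff (by simpa only [smul_eq_mul] using zsmul_mem hN t) a b

theorem reachable_add_mul (hN : N ∈ periods H) (t : ℤ) {a b : ℤ} (h : H.Reachable a b) :
    H.Reachable (a + t * N) (b + t * N) :=
  reachable_add_right (by simpa only [smul_eq_mul] using zsmul_mem hN t) h

theorem reachable_add_mul_self (hN : N ∈ periods H) {v : ℤ} (h : H.Reachable v (v + N)) (t : ℤ) :
    H.Reachable v (v + t * N) := by
  induction t using Int.induction_on with
  | zero => simp only [zero_mul, add_zero, SimpleGraph.Reachable.rfl]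
  | succ t ih =>
    rw [add_one_mul, ← add_assoc]
    exact h.trans (reachable_add_right hN ih)
  | pred t ih =>
    refine ih.trans ?_
    convert (reachable_add_mul hN (-t - 1) h).symm using 1
    ring

theorem NonCrossing.le_add_of_adj (hH : NonCrossing H) (hN : N ∈ periods H) (hN0 : 0 < N)
    {a b : ℤ} (hab : H.Adj a b) : b ≤ a + N := by
  by_contra! hlt
  exact hH (by lia) hlt (by lia) hab ((adj_add_right_iff hN a b).mpr hab)

/-- Of the shifts of `v` by multiples of `N`, consecutive pairs interleave with pairs at a larger
distance, so their components merge. -/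
theorem NonCrossing.reachable_add_period (hH : NonCrossing H) (hN : N ∈ periods H) (hN0 : 0 < N)
    {v m : ℤ} (hm : m ≠ 0) (h : H.Reachable v (v + m * N)) : H.Reachable v (v + N) := by
  wlog hm_pos : 0 < m generalizing m
  · refine this (m := -m) (by lia) ?_ (by lia)
    convert (reachable_add_mul hN (-m) h).symm using 1
    ring
  obtain rfl | hm1 : m = 1 ∨ 1 < m := by lia
  · rwa [one_mul] at h
  · have hmN : N < m * N := by nlinarith
    refine hH.reachable_of_interleaved (by lia) (by lia) (by lia) h (d := v + m * N + N) ?_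
    convert reachable_add_right hN h using 1

end PeriodicInt

section EdgeSets

open scoped Fin.CommRing

variable {n : ℕ}

open Classical in
theorem card_finset_sym2_eq_ncard {P : Finset (Sym2 (Fin n)) → Prop}
    (hP : ∀ E, P E → ∀ e ∈ E, ¬ e.IsDiag) :
    Nat.card {E // P E} = {G : SimpleGraph (Fin n) | P G.edgeFinset}.ncard := by
  refine (Set.BijOn.ncard_eq (f := fun G : SimpleGraph (Fin n) => G.edgeFinset)
    ⟨fun _ => id, ?_, fun E hE => ?_⟩).symm
  · exact fun G _ G' _ hGG' => SimpleGraph.edgeFinset_inj.mp hGG'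
  · have h_edges : (graphOf E).edgeFinset = E := by
      ext e
      rw [SimpleGraph.mem_edgeFinset, graphOf, SimpleGraph.edgeSet_fromEdgeSet]
      exact and_iff_left_of_imp (hP E hE e)
    exact ⟨graphOf E, (congrArg P h_edges).mpr hE, h_edges⟩

variable (G : SimpleGraph (Fin n)) [Fintype G.edgeSet]

theorem isNC_edgeFinset_iff : IsNC G.edgeFinset ↔ NonCrossing G := by
  constructor
  · rintro ⟨-, hG⟩ a b c d hab hbc hcd hac hbd
    exact hG s(a, c) (by simpa) s(b, d) (by simpa) ⟨a, c, b, d, rfl, rfl, hab, hbc, hcd⟩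
  · refine fun hG => ⟨fun e he => G.not_isDiag_of_mem_edgeFinset he, ?_⟩
    rintro _ he _ hf ⟨a, c, b, d, rfl, rfl, hab, hbc, hcd⟩
    exact hG hab hbc hcd (by simpa using he) (by simpa using hf)

theorem isNCC_edgeFinset_iff : IsNCC G.edgeFinset ↔ NonCrossing G ∧ G.Connected := by
  rw [IsNCC, isNC_edgeFinset_iff, graphOf, SimpleGraph.coe_edgeFinset,
    SimpleGraph.fromEdgeSet_edgeSet]

theorem rotInv_edgeFinset_iff [NeZero n] (m : ℕ) :
    RotInv n m G.edgeFinset ↔ (m : Fin n) ∈ periods G := by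
  have h_rot (i : Fin n) : rotMap n m i = i + (m : Fin n) := by
    ext
    simp only [rotMap, Fin.val_add, Fin.val_natCast, Nat.add_mod_mod]
  constructor
  · intro hG
    refine mem_periods_of_forall_adj fun a b hab => ?_
    simpa [h_rot] using hG s(a, b) (by simpa)
  · rintro hG ⟨a, b⟩ hab
    simpa [h_rot, adj_add_right_iff hG] using hab

theorem hasEdge1n_edgeFinset_iff {N : ℕ} (G : SimpleGraph (Fin (N + 1))) [Fintype G.edgeSet] :
    HasEdge1n G.edgeFinset ↔ G.Adj 0 (Fin.last N) := by
  constructor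
  · rintro ⟨a, b, ha, hb, hab⟩
    obtain rfl : a = 0 := Fin.ext ha
    obtain rfl : b = Fin.last N := Fin.ext hb
    simpa using hab
  · exact fun h => ⟨0, Fin.last N, rfl, rfl, by simpa using h⟩

theorem nccRot_eq_ncard (n k m : ℕ) [NeZero n] :
    nccRot n k m = {G : SimpleGraph (Fin n) |
      NonCrossing G ∧ G.Connected ∧ G.edgeSet.ncard = k ∧ (m : Fin n) ∈ periods G}.ncard := by
  rw [nccRot, card_finset_sym2_eq_ncard fun E hE => hE.1.1.1]
  simp only [isNCC_edgeFinset_iff, rotInv_edgeFinset_iff, and_assoc]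
  simp only [SimpleGraph.edgeFinset, ← Set.ncard_eq_toFinset_card']

theorem nccEdge_succ_eq_ncard (N K : ℕ) :
    nccEdge (N + 1) K = {G : SimpleGraph (Fin (N + 1)) |
      NonCrossing G ∧ G.Connected ∧ G.edgeSet.ncard = K ∧ G.Adj 0 (Fin.last N)}.ncard := by
  rw [nccEdge, card_finset_sym2_eq_ncard fun E hE => hE.1.1.1]
  simp only [isNCC_edgeFinset_iff, hasEdge1n_edgeFinset_iff, and_assoc]
  simp only [SimpleGraph.edgeFinset, ← Set.ncard_eq_toFinset_card']

theorem nccRot_zero_left (k m : ℕ) : nccRot 0 k m = 0 := by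
  have : IsEmpty {E : Finset (Sym2 (Fin 0)) // IsNCC E ∧ E.card = k ∧ RotInv 0 m E} :=
    ⟨fun E => E.2.1.2.nonempty.elim Fin.elim0⟩
  rw [nccRot, Nat.card_of_isEmpty]

theorem sum_ncard_neighborSet {V : Type*} [Fintype V] (G : SimpleGraph V) :
    ∑ v, (G.neighborSet v).ncard = 2 * G.edgeSet.ncard := by
  classical
  rw [← SimpleGraph.coe_edgeFinset, Set.ncard_coe_finset,
    ← SimpleGraph.sum_degrees_eq_twice_card_edges]
  simp only [← SimpleGraph.coe_neighborFinset, Set.ncard_coe_finset,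
    SimpleGraph.card_neighborFinset_eq_degree]

end EdgeSets

section Unroll

open scoped Fin.CommRing

variable {n : ℕ} [NeZero n]

theorem intCast_add_mul_self (a t : ℤ) : ((a + t * n : ℤ) : Fin n) = a := by
  simp

theorem intCast_val (v : Fin n) : (((v : ℕ) : ℤ) : Fin n) = v := by
  simp

theorem exists_eq_add_mul_of_intCast_eq {a b : ℤ} (h : (a : Fin n) = b) :
    ∃ t : ℤ, b = a + t * n := by
  obtain ⟨t, ht⟩ := ((CharP.intCast_eq_intCast (Fin n) n).mp h).dvd
  exact ⟨t, by linarith [mul_comm t (n : ℤ)]⟩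

theorem eq_of_intCast_eq_of_abs_sub_le {M : ℕ} (hMn : 2 * M < n) {a b c : ℤ}
    (h : (b : Fin n) = c) (hab : |b - a| ≤ M) (hac : |c - a| ≤ M) : b = c := by
  have h_dvd := ((CharP.intCast_eq_intCast (Fin n) n).mp h).dvd
  rw [abs_le] at hab hac
  linarith [Int.eq_zero_of_abs_lt_dvd h_dvd (abs_lt.mpr ⟨by lia, by lia⟩)]

variable {M : ℕ} {G : SimpleGraph (Fin n)} {H : SimpleGraph ℤ}

/-- The lift of a graph on the circle `Fin n` to its universal cover `ℤ`, each chord being lifted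
to the arcs of length at most `M` that span it. -/
def unroll (M : ℕ) (G : SimpleGraph (Fin n)) : SimpleGraph ℤ where
  Adj a b := |b - a| ≤ M ∧ G.Adj a b
  symm := ⟨fun a b h => ⟨abs_sub_comm a b ▸ h.1, h.2.symm⟩⟩
  loopless := ⟨fun _ h => h.2.ne rfl⟩

/-- All edges of a graph on `ℤ` have length at most `M`. -/
def BandwidthLE (M : ℕ) (H : SimpleGraph ℤ) : Prop :=
  ∀ ⦃a b : ℤ⦄, H.Adj a b → |b - a| ≤ M

/-- Each chord of a graph on the circle `Fin n` spans an arc of length at most `M`. This is phrased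
as a lifting property along `ℤ → Fin n`. -/
def CircularBandwidthLE (M : ℕ) (G : SimpleGraph (Fin n)) : Prop :=
  ∀ ⦃a : ℤ⦄ ⦃v : Fin n⦄, G.Adj a v → ∃ b : ℤ, (b : Fin n) = v ∧ |b - a| ≤ M

theorem CircularBandwidthLE.exists_unroll_adj (hG : CircularBandwidthLE M G) {a : ℤ} {v : Fin n}
    (h : G.Adj a v) : ∃ b : ℤ, (b : Fin n) = v ∧ (unroll M G).Adj a b := by
  obtain ⟨b, rfl, hab⟩ := hG h
  exact ⟨b, rfl, hab, h⟩

theorem CircularBandwidthLE.exists_unroll_reachable (hG : CircularBandwidthLE M G) {a : ℤ}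
    {v : Fin n} (h : G.Reachable a v) :
    ∃ b : ℤ, (b : Fin n) = v ∧ (unroll M G).Reachable a b := by
  rw [SimpleGraph.reachable_iff_reflTransGen] at h
  induction h with
  | refl => exact ⟨a, rfl, .rfl⟩
  | tail _ huv ih =>
    obtain ⟨b, rfl, hab⟩ := ih
    obtain ⟨c, rfl, hbc⟩ := hG.exists_unroll_adj huv
    exact ⟨c, rfl, hab.trans hbc.reachable⟩

theorem intCast_mem_periods_unroll {c : ℤ} (hc : (c : Fin n) ∈ periods G) :
    c ∈ periods (unroll M G) := by
  intro a b
  simp only [unroll, add_sub_add_right_eq_sub, Int.cast_add, adj_add_right_iff hc]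

theorem self_mem_periods_unroll : (n : ℤ) ∈ periods (unroll M G) :=
  intCast_mem_periods_unroll (G := G) (by simp [zero_mem])

theorem CircularBandwidthLE.intCast_mem_periods (hG : CircularBandwidthLE M G) {c : ℤ}
    (hc : c ∈ periods (unroll M G)) : (c : Fin n) ∈ periods G := by
  refine mem_periods_of_forall_adj fun u v huv => ?_
  obtain ⟨a, rfl⟩ : ∃ a : ℤ, (a : Fin n) = u := ⟨_, intCast_val u⟩
  obtain ⟨b, rfl, hab⟩ := hG.exists_unroll_adj huv
  simpa only [unroll, Int.cast_add] using ((adj_add_right_iff hc a b).mpr hab).2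

theorem CircularBandwidthLE.map_unroll (hG : CircularBandwidthLE M G) :
    (unroll M G).map (Int.cast : ℤ → Fin n) = G := by
  ext u v
  rw [SimpleGraph.map_adj']
  constructor
  · rintro ⟨-, a, b, hab, rfl, rfl⟩
    exact hab.2
  · intro huv
    obtain ⟨a, rfl⟩ : ∃ a : ℤ, (a : Fin n) = u := ⟨_, intCast_val u⟩
    obtain ⟨b, rfl, hab⟩ := hG.exists_unroll_adj huv
    exact ⟨huv.ne, a, b, hab, rfl, rfl⟩

theorem exists_adj_of_map_intCast_adj (hH : (n : ℤ) ∈ periods H) {a : ℤ} {v : Fin n}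
    (h : (H.map (Int.cast : ℤ → Fin n)).Adj a v) : ∃ b : ℤ, (b : Fin n) = v ∧ H.Adj a b := by
  obtain ⟨-, a', b', hab, ha, rfl⟩ := h
  obtain ⟨t, rfl⟩ := exists_eq_add_mul_of_intCast_eq ha
  refine ⟨b' + t * n, intCast_add_mul_self b' t, (adj_add_mul_iff hH t a' b').mpr hab⟩

theorem BandwidthLE.circularBandwidthLE_map (hM : BandwidthLE M H) (hH : (n : ℤ) ∈ periods H) :
    CircularBandwidthLE M (H.map (Int.cast : ℤ → Fin n)) := by
  intro a v h
  obtain ⟨b, rfl, hab⟩ := exists_adj_of_map_intCast_adj hH h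
  exact ⟨b, rfl, hM hab⟩

theorem BandwidthLE.unroll_map (hM : BandwidthLE M H) (hH : (n : ℤ) ∈ periods H)
    (hMn : 2 * M < n) : unroll M (H.map (Int.cast : ℤ → Fin n)) = H := by
  ext a b
  constructor
  · rintro ⟨hab, h⟩
    obtain ⟨b', hb', hab'⟩ := exists_adj_of_map_intCast_adj hH h
    rwa [← eq_of_intCast_eq_of_abs_sub_le hMn hb' (hM hab') hab]
  · intro hab
    refine ⟨hM hab, fun h => hab.ne ?_, a, b, hab, rfl, rfl⟩
    exact eq_of_intCast_eq_of_abs_sub_le hMn h (by simp) (hM hab)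

theorem bijOn_unroll (hMn : 2 * M < n) :
    Set.BijOn (unroll M) {G : SimpleGraph (Fin n) | CircularBandwidthLE M G}
      {H | BandwidthLE M H ∧ (n : ℤ) ∈ periods H} :=
  Set.InvOn.bijOn ⟨fun _ hG => hG.map_unroll, fun _ hH => hH.1.unroll_map hH.2 hMn⟩
    (fun _ _ => ⟨fun _ _ h => h.1, self_mem_periods_unroll⟩)
    fun _ hH => hH.1.circularBandwidthLE_map hH.2

theorem CircularBandwidthLE.ncard_neighborSet_unroll (hG : CircularBandwidthLE M G)
    (hMn : 2 * M < n) (a : ℤ) :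
    ((unroll M G).neighborSet a).ncard = (G.neighborSet a).ncard := by
  refine Set.BijOn.ncard_eq (f := Int.cast)
    ⟨fun b hb => hb.2, fun b hb c hc h => ?_, fun v hv => ?_⟩
  · exact eq_of_intCast_eq_of_abs_sub_le hMn h hb.1 hc.1
  · obtain ⟨b, hbv, hab⟩ := hG.exists_unroll_adj hv
    exact ⟨b, hab, hbv⟩

theorem connected_of_unroll (h : (unroll M G).Connected) : G.Connected :=
  h.map (⟨Int.cast, And.right⟩ : unroll M G →g G) fun v => ⟨(v : ℕ), intCast_val v⟩

/-- A walk once around the circle lifts to a walk in `ℤ` that joins `v` to a nontrivial translate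
of itself. -/
theorem CircularBandwidthLE.connected_unroll (hG : CircularBandwidthLE M G) {d N : ℕ}
    (hn : n = d * N) (hd : 2 ≤ d) (hN : (N : ℤ) ∈ periods (unroll M G))
    (h_nc : NonCrossing (unroll M G)) (h : G.Connected) : (unroll M G).Connected := by
  have hN0 : 0 < N := Nat.pos_of_mul_pos_left (hn ▸ NeZero.pos n)
  have h_lift (a b : ℤ) : ∃ t : ℤ, (unroll M G).Reachable a (b + t * d * N) := by
    obtain ⟨b', hb', hab'⟩ := hG.exists_unroll_reachable (h.preconnected a b)
    obtain ⟨t, rfl⟩ := exists_eq_add_mul_of_intCast_eq hb'.symm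
    exact ⟨t, by simpa only [hn, Nat.cast_mul, mul_assoc] using hab'⟩
  have h_period (v : ℤ) : (unroll M G).Reachable v (v + N) := by
    obtain ⟨t, ht⟩ := h_lift v (v + N)
    refine h_nc.reachable_add_period hN (by lia) (m := 1 + t * d) (fun h0 => ?_) ?_
    · have : (d : ℤ) ∣ 1 := ⟨-t, by linarith⟩
      have := Int.le_of_dvd one_pos this
      lia
    · convert ht using 1
      ring
  refine ⟨fun a b => ?_⟩
  obtain ⟨t, ht⟩ := h_lift a b
  exact ht.trans (reachable_add_mul_self hN (h_period b) (t * d)).symm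

theorem intCast_lt_intCast {a b : ℤ} (ha : 0 ≤ a) (hab : a < b) (hb : b < n) :
    (a : Fin n) < b := by
  lift a to ℕ using ha
  lift b to ℕ using by lia
  rw [Int.cast_natCast, Int.cast_natCast, Fin.lt_def, Fin.val_natCast, Fin.val_natCast,
    Nat.mod_eq_of_lt (by lia), Nat.mod_eq_of_lt (by lia)]
  lia

theorem NonCrossing.not_adj_intCast (hG : NonCrossing G) {a b c d : ℤ} (hab : a < b) (hbc : b < c)
    (hcd : c < d) (hda : d < a + n) (hac : G.Adj a c) : ¬ G.Adj b d := by
  intro hbd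
  have cast_sub_mul (x t : ℤ) : ((x - t * n : ℤ) : Fin n) = x := by simp
  wlog ha : 0 ≤ a ∧ a < n generalizing a b c d
  · have hn : (n : ℤ) ≠ 0 := Nat.cast_ne_zero.mpr (NeZero.ne n)
    have ha_mod : a - a / n * n = a % n := by linarith [Int.mul_ediv_add_emod a n]
    refine this (a := a - a / n * n) (b := b - a / n * n) (c := c - a / n * n)
      (d := d - a / n * n) (by lia) (by lia) (by lia) (by lia) ?_ ?_ ?_
    · rwa [cast_sub_mul, cast_sub_mul]
    · rwa [cast_sub_mul, cast_sub_mul]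
    · rw [ha_mod]
      exact ⟨Int.emod_nonneg a hn, Int.emod_lt_of_pos a (by lia)⟩
  have cast_sub (x : ℤ) : ((x - n : ℤ) : Fin n) = x := by simp
  have lt {x y : ℤ} := intCast_lt_intCast (n := n) (a := x) (b := y)
  obtain hdn | ⟨hcn, hnd⟩ | ⟨hbn, hnc⟩ | hnb :
    d < n ∨ (c < n ∧ n ≤ d) ∨ (b < n ∧ n ≤ c) ∨ n ≤ b := by lia
  · exact hG (lt (by lia) hab (by lia)) (lt (by lia) hbc (by lia)) (lt (by lia) hcd hdn) hac hbd
  · rw [← cast_sub d] at hbd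
    exact hG (lt (by lia) (by lia) (by lia)) (lt (by lia) hab (by lia)) (lt (by lia) hbc hcn)
      hbd.symm hac
  · rw [← cast_sub c] at hac
    rw [← cast_sub d] at hbd
    exact hG (lt (by lia) (by lia) (by lia)) (lt (by lia) (by lia) (by lia)) (lt (by lia) hab hbn)
      hac.symm hbd.symm
  · rw [← cast_sub c] at hac
    rw [← cast_sub b, ← cast_sub d] at hbd
    exact hG (lt (by lia) (by lia) (by lia)) (lt (by lia) (by lia) (by lia))
      (lt (by lia) (by lia) (by lia)) hbd hac.symm

theorem nonCrossing_unroll (hG : NonCrossing G) (hMn : 2 * M < n) :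
    NonCrossing (unroll M G) := by
  intro a b c d hab hbc hcd hac hbd
  refine hG.not_adj_intCast hab hbc hcd ?_ hac.2 hbd.2
  have hac_len := (abs_le.mp hac.1).2
  have hbd_len := (abs_le.mp hbd.1).2
  lia

theorem CircularBandwidthLE.unroll_adj_or (hG : CircularBandwidthLE M G) (hMn : 2 * M < n)
    {u v : Fin n} (huv : u < v) (h : G.Adj u v) :
    (unroll M G).Adj (u : ℕ) (v : ℕ) ∨ (unroll M G).Adj ((v : ℕ) - n) (u : ℕ) := by
  rw [← intCast_val u] at h
  obtain ⟨b, hb, hub⟩ := hG.exists_unroll_adj h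
  rw [← intCast_val v] at hb
  obtain ⟨t, rfl⟩ := exists_eq_add_mul_of_intCast_eq hb.symm
  have h_len := abs_le.mp hub.1
  have ht_lower : -2 < t := by nlinarith [v.isLt]
  have ht_upper : t < 1 := by nlinarith [Fin.lt_def.mp huv]
  obtain rfl | rfl : t = 0 ∨ t = -1 := by lia
  · left
    simpa using hub
  · right
    simpa [sub_eq_add_neg] using hub.symm

theorem CircularBandwidthLE.nonCrossing_of_unroll (hG : CircularBandwidthLE M G)
    (hMn : 2 * M < n) (h : NonCrossing (unroll M G)) : NonCrossing G := by
  intro a b c d hab hbc hcd hac hbd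
  have shift (x y : ℤ) : (unroll M G).Adj x y → (unroll M G).Adj (x - n) (y - n) := by
    simpa only [neg_one_mul, sub_eq_add_neg] using
      (adj_add_mul_iff (H := unroll M G) self_mem_periods_unroll (-1) x y).mpr
  rcases hG.unroll_adj_or hMn (hab.trans hbc) hac with hac | hac <;>
    rcases hG.unroll_adj_or hMn (hbc.trans hcd) hbd with hbd | hbd <;>
    rw [Fin.lt_def] at hab hbc hcd
  · exact h (by lia) (by lia) (by lia) hac hbd
  · exact h (by lia) (by lia) (by lia) hbd hac
  · exact h (by lia) (by lia) (by lia) (shift _ _ hbd) hac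
  · exact h (by lia) (by lia) (by lia) hac hbd

end Unroll

section Period

variable {N : ℕ} {f : ℤ → ℕ}

theorem sum_range_mul_of_periodic (hf : Function.Periodic f N) (d : ℕ) :
    ∑ i ∈ Finset.range (d * N), f i = d * ∑ i ∈ Finset.range N, f i := by
  induction d with
  | zero => simp
  | succ d ih =>
    have h_shift (i : ℕ) : f ((d * N + i : ℕ) : ℤ) = f i := by
      simpa only [Nat.cast_add, Nat.cast_mul, add_comm] using hf.nat_mul d i
    simp only [add_one_mul, Finset.sum_range_add, ih, h_shift]

theorem sum_range_natCast_add_of_periodic (hf : Function.Periodic f N) (v : ℕ) :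
    ∑ i ∈ Finset.range N, f (v + i) = ∑ i ∈ Finset.range N, f i := by
  induction v with
  | zero => simp
  | succ v ih =>
    have h_succ := Finset.sum_range_succ' (fun i : ℕ => f (v + i)) N
    rw [Finset.sum_range_succ, Nat.cast_zero, add_zero, hf v, Nat.add_right_cancel_iff] at h_succ
    rw [← ih, h_succ]
    exact Finset.sum_congr rfl fun i _ => congrArg f (by push_cast; ring)

variable {H : SimpleGraph ℤ}

theorem periodic_ncard_neighborSet {c : ℤ} (hc : c ∈ periods H) :
    Function.Periodic (fun a => (H.neighborSet a).ncard) c :=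
  ncard_neighborSet_add_right hc

/-- The connected non-crossing graphs on `ℤ` that have period `N` and `K` edges per period. Edges
are counted by the handshake lemma: the degrees over one period sum to `2 * K`. -/
def periodicGraphs (N K : ℕ) : Set (SimpleGraph ℤ) :=
  {H | NonCrossing H ∧ H.Connected ∧ (N : ℤ) ∈ periods H ∧
    ∑ i ∈ Finset.range N, (H.neighborSet i).ncard = 2 * K}

theorem bandwidthLE_of_mem_periodicGraphs {K : ℕ} (hH : H ∈ periodicGraphs N K) (hN : 0 < N) :
    BandwidthLE N H := by
  intro a b hab
  have h_right := hH.1.le_add_of_adj hH.2.2.1 (by lia) hab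
  have h_left := hH.1.le_add_of_adj hH.2.2.1 (by lia) hab.symm
  exact abs_le.mpr ⟨by lia, by lia⟩

end Period

section Circle

open scoped Fin.CommRing

variable {n d N K M : ℕ} [NeZero n] {G : SimpleGraph (Fin n)}

theorem CircularBandwidthLE.ncard_edgeSet_eq_mul_iff (hG : CircularBandwidthLE M G)
    (hMn : 2 * M < n) (hn : n = d * N) (hN : (N : Fin n) ∈ periods G) :
    G.edgeSet.ncard = d * K ↔
      ∑ i ∈ Finset.range N, ((unroll M G).neighborSet i).ncard = 2 * K := by
  have hd : 0 < d := Nat.pos_of_mul_pos_right (hn ▸ NeZero.pos n)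
  have h_periodic : Function.Periodic (fun a => ((unroll M G).neighborSet a).ncard) (N : ℤ) :=
    periodic_ncard_neighborSet (intCast_mem_periods_unroll (by simpa using hN))
  have h_sum := calc
    2 * G.edgeSet.ncard = ∑ v, (G.neighborSet v).ncard := (sum_ncard_neighborSet G).symm
    _ = ∑ v : Fin n, ((unroll M G).neighborSet (v : ℕ)).ncard := by
      simp only [hG.ncard_neighborSet_unroll hMn, intCast_val]
    _ = ∑ i ∈ Finset.range n, ((unroll M G).neighborSet i).ncard :=
      Fin.sum_univ_eq_sum_range (fun i => ((unroll M G).neighborSet i).ncard) n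
    _ = d * ∑ i ∈ Finset.range N, ((unroll M G).neighborSet i).ncard := by
      rw [← sum_range_mul_of_periodic h_periodic, ← hn]
  constructor
  · intro h
    exact Nat.eq_of_mul_eq_mul_left hd (by rw [← h_sum, h]; ring)
  · intro h
    rw [h] at h_sum
    linarith

theorem CircularBandwidthLE.unroll_mem_periodicGraphs_iff (hG : CircularBandwidthLE M G)
    (hMn : 2 * M < n) (hn : n = d * N) (hd : 2 ≤ d) :
    unroll M G ∈ periodicGraphs N K ↔ NonCrossing G ∧ G.Connected ∧
      G.edgeSet.ncard = d * K ∧ (N : Fin n) ∈ periods G := by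
  constructor
  · rintro ⟨h_nc, h_conn, h_period, h_edges⟩
    have hN : (N : Fin n) ∈ periods G := by simpa using hG.intCast_mem_periods h_period
    exact ⟨hG.nonCrossing_of_unroll hMn h_nc, connected_of_unroll h_conn,
      (hG.ncard_edgeSet_eq_mul_iff hMn hn hN).mpr h_edges, hN⟩
  · rintro ⟨h_nc, h_conn, h_edges, hN⟩
    have h_period : (N : ℤ) ∈ periods (unroll M G) :=
      intCast_mem_periods_unroll (by simpa using hN)
    have h_nc' := nonCrossing_unroll h_nc hMn
    exact ⟨h_nc', hG.connected_unroll hn hd h_period h_nc' h_conn, h_period,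
      (hG.ncard_edgeSet_eq_mul_iff hMn hn hN).mp h_edges⟩

theorem nccRot_eq_ncard_bandwidthLE (hMn : 2 * M < n) (hn : n = d * N) (hd : 2 ≤ d)
    (h_short : ∀ G : SimpleGraph (Fin n), NonCrossing G → (N : Fin n) ∈ periods G →
      G.edgeSet.ncard = d * K → CircularBandwidthLE M G) :
    nccRot n (d * K) N = {H ∈ periodicGraphs N K | BandwidthLE M H}.ncard := by
  have h_bij := bijOn_unroll hMn
  rw [nccRot_eq_ncard]
  refine Set.BijOn.ncard_eq (f := unroll M) ⟨?_, ?_, ?_⟩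
  · intro G hG
    have hGM := h_short G hG.1 hG.2.2.2 hG.2.2.1
    exact ⟨(hGM.unroll_mem_periodicGraphs_iff hMn hn hd).mpr hG, (h_bij.mapsTo hGM).1⟩
  · exact h_bij.injOn.mono fun G hG => h_short G hG.1 hG.2.2.2 hG.2.2.1
  · rintro H ⟨hH, hM⟩
    have hnH : (n : ℤ) ∈ periods H := by
      rw [hn, Nat.cast_mul, ← smul_eq_mul]
      exact zsmul_mem hH.2.2.1 d
    obtain ⟨G, hGM, rfl⟩ := h_bij.surjOn ⟨hM, hnH⟩
    exact ⟨G, (hGM.unroll_mem_periodicGraphs_iff hMn hn hd).mp hH, rfl⟩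

end Circle

section ShortChords

theorem sym2_map_add_right_eq_self_iff {A : Type*} [AddGroup A] {a b c : A} (hc : c ≠ 0)
    (h2 : c + c = 0) : Sym2.map (· + c) s(a, b) = s(a, b) ↔ b = a + c := by
  rw [Sym2.map_mk, Sym2.eq_iff]
  constructor
  · rintro (⟨h, -⟩ | ⟨h, -⟩)
    · exact absurd (add_eq_left.mp h) hc
    · exact h.symm
  · rintro rfl
    exact .inr ⟨rfl, by rw [add_assoc, h2, add_zero]⟩

theorem odd_ncard_edgeSet_of_unique_adj_add {A : Type*} [AddGroup A] [Finite A]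
    {G : SimpleGraph A} {c v : A} (hc : c ∈ periods G) (h2 : c + c = 0) (hv : G.Adj v (v + c))
    (h_unique : ∀ u, G.Adj u (u + c) → s(u, u + c) = s(v, v + c)) : Odd G.edgeSet.ncard := by
  classical
  have := Fintype.ofFinite G.edgeSet
  let rotate : Function.End G.edgeSet :=
    SimpleGraph.Hom.mapEdgeSet ⟨(· + c), (adj_add_right_iff hc _ _).mpr⟩
  have coe_rotate (e : G.edgeSet) : (rotate e : Sym2 A) = e.1.map (· + c) := rfl
  have h_sq : rotate ^ 2 ^ 1 = 1 := by
    refine funext fun ⟨e, he⟩ => Subtype.ext ?_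
    induction e with | _ a b =>
    simp only [pow_one, pow_two]
    change (rotate (rotate _) : Sym2 A) = s(a, b)
    simp only [coe_rotate, Sym2.map_mk, add_assoc, h2, add_zero]
  have h_fixed (e : G.edgeSet) : e ∈ Function.fixedPoints rotate ↔ e = ⟨s(v, v + c), hv⟩ := by
    obtain ⟨e, he⟩ := e
    induction e with | _ a b =>
    have hc0 : c ≠ 0 := by
      rintro rfl
      exact hv.ne (add_zero v).symm
    rw [Function.mem_fixedPoints, Function.IsFixedPt, Subtype.ext_iff, Subtype.ext_iff, coe_rotate,
      sym2_map_add_right_eq_self_iff hc0 h2]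
    constructor
    · rintro rfl
      exact h_unique a he
    · intro h
      rcases Sym2.eq_iff.mp h with ⟨rfl, rfl⟩ | ⟨rfl, rfl⟩
      · rfl
      · rw [add_assoc, h2, add_zero]
  have h_mod : Fintype.card G.edgeSet ≡ 1 [MOD 2] := by
    rw [← Fintype.card_unique (α := {e // e = (⟨s(v, v + c), hv⟩ : G.edgeSet)}),
      ← Fintype.card_congr (Equiv.subtypeEquivRight h_fixed)]
    exact Equiv.Perm.card_fixedPoints_modEq h_sq
  rw [← Nat.card_coe_set_eq, Nat.card_eq_fintype_card]
  exact Nat.odd_iff.mpr h_mod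

open scoped Fin.CommRing

variable {n N : ℕ} [NeZero n] {G : SimpleGraph (Fin n)}

theorem exists_intCast_eq_two_mul_abs_sub_le (a : ℤ) (v : Fin n) :
    ∃ b : ℤ, (b : Fin n) = v ∧ 2 * |b - a| ≤ n := by
  have hn : 0 < n := NeZero.pos n
  obtain ⟨t, ht⟩ : (n : ℤ) ∣ Int.bmod ((v : ℕ) - a) n - ((v : ℕ) - a) := Int.dvd_bmod_sub_self
  refine ⟨a + Int.bmod ((v : ℕ) - a) n, ?_, ?_⟩
  · rw [show a + Int.bmod ((v : ℕ) - a) n = (v : ℕ) + t * n by linarith, intCast_add_mul_self,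
      intCast_val]
  · have h_lower := Int.le_bmod (x := (v : ℕ) - a) hn
    have h_upper := Int.bmod_le (x := (v : ℕ) - a) hn
    rw [add_sub_cancel_left]
    have : |Int.bmod ((v : ℕ) - a) n| ≤ (n : ℤ) / 2 := abs_le.mpr ⟨by lia, by lia⟩
    lia

theorem NonCrossing.circularBandwidthLE_of_mem_periods (hG : NonCrossing G)
    (hN : (N : Fin n) ∈ periods G) (hN0 : 0 < N) : CircularBandwidthLE N G := by
  have h_rotate (x y : ℤ) (hxy : x + N < y) (h_len : 2 * (y - x) ≤ n) : ¬ G.Adj x y := by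
    intro h
    refine hG.not_adj_intCast (b := x + N) (d := y + N) (by lia) hxy (by lia) (by lia) h ?_
    simpa using (adj_add_right_iff hN (x : Fin n) y).mpr h
  intro a v hav
  obtain ⟨b, rfl, hab⟩ := exists_intCast_eq_two_mul_abs_sub_le a v
  refine ⟨b, rfl, abs_le.mpr ⟨?_, ?_⟩⟩ <;> by_contra! h_long
  · exact h_rotate b a (by lia) (by linarith [neg_abs_le (b - a)]) hav.symm
  · exact h_rotate a b (by lia) (by linarith [le_abs_self (b - a)]) hav

theorem natCast_add_self (hn : n = 2 * N) : (N : Fin n) + N = 0 := by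
  rw [← Nat.cast_add, ← two_mul, ← hn, CharP.cast_eq_zero]

theorem NonCrossing.unique_diameter (hG : NonCrossing G) (hn : n = 2 * N) {u v : Fin n}
    (hu : G.Adj u (u + N)) (hv : G.Adj v (v + N)) : s(u, u + N) = s(v, v + N) := by
  have h_two := natCast_add_self hn
  obtain ⟨a, rfl⟩ : ∃ a : ℤ, (a : Fin n) = v := ⟨_, intCast_val v⟩
  obtain ⟨i, h_in, rfl⟩ : ∃ i : ℕ, i < n ∧ (a : Fin n) + i = u :=
    ⟨(u - a : Fin n), Fin.isLt _, by rw [Fin.cast_val_eq_self, add_sub_cancel]⟩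
  have h_cross (x : ℤ) (hax : a < x) (hxa : x < a + N) : ¬ G.Adj x (x + N) := by
    simpa using hG.not_adj_intCast (d := x + N) hax hxa (by lia) (by lia) (by simpa using hv)
  obtain rfl | ⟨hi, hiN⟩ | rfl | hNi : i = 0 ∨ (0 < i ∧ i < N) ∨ i = N ∨ N < i := by lia
  · simp
  · exact absurd hu (by simpa using h_cross (a + i) (by lia) (by lia))
  · rw [add_assoc, h_two, add_zero, Sym2.eq_swap]
  · refine absurd hu.symm ?_
    have h_neg : -(N : Fin n) = N := neg_eq_of_add_eq_zero_left h_two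
    simpa [sub_eq_add_neg, h_neg, add_assoc, h_two] using h_cross (a + i - N) (by lia) (by lia)

theorem NonCrossing.circularBandwidthLE_of_even (hG : NonCrossing G) (hn : n = 2 * N)
    (hN : (N : Fin n) ∈ periods G) (h_even : Even G.edgeSet.ncard) :
    CircularBandwidthLE (N - 1) G := by
  have h_diameter (u : Fin n) : ¬ G.Adj u (u + N) := fun hu =>
    Nat.not_odd_iff_even.mpr h_even <|
      odd_ncard_edgeSet_of_unique_adj_add hN (natCast_add_self hn) hu
        fun w hw => hG.unique_diameter hn hw hu
  have hN0 : 0 < N := by have := NeZero.pos n; lia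
  intro a v hav
  obtain ⟨b, rfl, hab⟩ := exists_intCast_eq_two_mul_abs_sub_le a v
  refine ⟨b, rfl, ?_⟩
  by_contra! h_long
  have h_abs : |b - a| = N := by lia
  rcases eq_or_eq_neg_of_abs_eq h_abs with h | h
  · exact h_diameter a (by simpa [show b = a + N by linarith] using hav)
  · exact h_diameter b (by simpa [show a = b + N by linarith] using hav.symm)

end ShortChords

section Tiling

variable {N : ℕ} {v : ℤ} {H : SimpleGraph ℤ}

/-- The restriction of a graph on `ℤ` to the block `v, v + 1, …, v + N`, relabelled by
`Fin (N + 1)`. -/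
def block (N : ℕ) (v : ℤ) (H : SimpleGraph ℤ) : SimpleGraph (Fin (N + 1)) :=
  H.comap fun i => v + (i : ℕ)

/-- The graph on `ℤ` obtained by placing a copy of `G` on each block
`v + j * N, …, v + j * N + N`; consecutive blocks share an endpoint. -/
def tile (v : ℤ) (G : SimpleGraph (Fin (N + 1))) : SimpleGraph ℤ where
  Adj a b := ∃ j : ℤ, ∃ u w, G.Adj u w ∧ a = v + (u : ℕ) + j * N ∧ b = v + (w : ℕ) + j * N
  symm := ⟨fun _ _ ⟨j, u, w, huw, ha, hb⟩ => ⟨j, w, u, huw.symm, hb, ha⟩⟩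
  loopless := ⟨fun _ ⟨_, _, _, huw, ha, hb⟩ => huw.ne (Fin.ext (by lia))⟩

/-- `N` is a period of `H` and each edge of `H` lies within one of the blocks
`v + j * N, …, v + j * N + N`. -/
structure IsTiled (N : ℕ) (v : ℤ) (H : SimpleGraph ℤ) : Prop where
  period : (N : ℤ) ∈ periods H
  exists_eq_of_adj : ∀ ⦃a b : ℤ⦄, H.Adj a b →
    ∃ j : ℤ, ∃ u w : Fin (N + 1), a = v + (u : ℕ) + j * N ∧ b = v + (w : ℕ) + j * N

theorem IsTiled.exists_block_adj (h : IsTiled N v H) {a b : ℤ} (hab : H.Adj a b) :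
    ∃ j : ℤ, ∃ u w, (block N v H).Adj u w ∧ a = v + (u : ℕ) + j * N ∧ b = v + (w : ℕ) + j * N := by
  obtain ⟨j, u, w, rfl, rfl⟩ := h.exists_eq_of_adj hab
  exact ⟨j, u, w, (adj_add_mul_iff h.period j _ _).mp hab, rfl, rfl⟩

theorem isTiled_tile (G : SimpleGraph (Fin (N + 1))) : IsTiled N v (tile v G) where
  period a b := by
    constructor
    · rintro ⟨j, u, w, huw, ha, hb⟩
      exact ⟨j - 1, u, w, huw, by linarith, by linarith⟩
    · rintro ⟨j, u, w, huw, rfl, rfl⟩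
      exact ⟨j + 1, u, w, huw, by ring, by ring⟩
  exists_eq_of_adj := by
    rintro a b ⟨j, u, w, -, ha, hb⟩
    exact ⟨j, u, w, ha, hb⟩

theorem IsTiled.tile_block (h : IsTiled N v H) : tile v (block N v H) = H := by
  ext a b
  constructor
  · rintro ⟨j, u, w, huw, rfl, rfl⟩
    exact (adj_add_mul_iff h.period j _ _).mpr huw
  · exact h.exists_block_adj

theorem eq_of_mul_lt_mul_add {i j : ℤ} (hij : i * N < j * N + N) (hji : j * N < i * N + N) :
    i = j := by
  rw [← add_one_mul] at hij hji
  have := lt_of_mul_lt_mul_right hij (Int.natCast_nonneg N)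
  have := lt_of_mul_lt_mul_right hji (Int.natCast_nonneg N)
  lia

theorem block_tile (G : SimpleGraph (Fin (N + 1))) : block N v (tile v G) = G := by
  ext x y
  constructor
  · rintro ⟨j, u, w, huw, hx, hy⟩
    have huw_val := Fin.val_ne_of_ne huw.ne
    dsimp only at hx hy
    obtain rfl : j = 0 := eq_of_mul_lt_mul_add (N := N) (by omega) (by omega)
    obtain rfl : x = u := Fin.ext (by lia)
    obtain rfl : y = w := Fin.ext (by lia)
    exact huw
  · intro hxy
    exact ⟨0, x, y, hxy, by simp, by simp⟩

theorem IsTiled.nonCrossing_of_block (h : IsTiled N v H) (h_block : NonCrossing (block N v H)) :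
    NonCrossing H := by
  intro a b c d hab hbc hcd hac hbd
  obtain ⟨i, p, r, hpr, rfl, rfl⟩ := h.exists_block_adj hac
  obtain ⟨j, q, s, hqs, rfl, rfl⟩ := h.exists_block_adj hbd
  obtain rfl : i = j := eq_of_mul_lt_mul_add (N := N) (by omega) (by omega)
  simp only [add_lt_add_iff_right, add_lt_add_iff_left, Nat.cast_lt, Fin.val_fin_lt] at hab hbc hcd
  exact h_block hab hbc hcd hpr hqs

theorem exists_eq_add_mul_of_pos (v : ℤ) (hN : 0 < N) (a : ℤ) :
    ∃ j : ℤ, ∃ u : Fin (N + 1), (u : ℕ) < N ∧ a = v + (u : ℕ) + j * N := by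
  have h_lt := Int.emod_lt_of_pos (a - v) (b := N) (by lia)
  have h_nonneg := Int.emod_nonneg (a - v) (b := N) (by lia)
  refine ⟨(a - v) / N, ⟨((a - v) % N).toNat, by lia⟩, by lia, ?_⟩
  rw [Int.toNat_of_nonneg h_nonneg]
  linarith [Int.emod_add_mul_ediv (a - v) N]

theorem IsTiled.connected_of_block (h : IsTiled N v H) (hN : 0 < N)
    (h_block : (block N v H).Connected) : H.Connected := by
  have h_shift (u w : Fin (N + 1)) (j : ℤ) :
      H.Reachable (v + (u : ℕ) + j * N) (v + (w : ℕ) + j * N) :=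
    reachable_add_mul h.period j ((h_block.preconnected u w).map (SimpleGraph.Hom.comap _ H))
  have h_period : H.Reachable v (v + N) := by simpa using h_shift 0 (Fin.last N) 0
  suffices h_all : ∀ a, H.Reachable v a from
    ⟨fun a b => (h_all a).symm.trans (h_all b)⟩
  intro a
  obtain ⟨j, u, -, rfl⟩ := exists_eq_add_mul_of_pos v hN a
  exact (reachable_add_mul_self h.period h_period j).trans (by simpa using h_shift 0 u j)

/-- Clamping to the block maps each edge of the block to itself and contracts all others. -/
theorem IsTiled.connected_block (h : IsTiled N v H) (hH : H.Connected) :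
    (block N v H).Connected := by
  let clamp (a : ℤ) : Fin (N + 1) := Fin.clamp (a - v).toNat N
  have clamp_val (u : Fin (N + 1)) : clamp (v + (u : ℕ)) = u := by
    ext
    simp only [clamp, Fin.coe_clamp]
    omega
  have h_adj (a b : ℤ) (hab : H.Adj a b) : (block N v H).Reachable (clamp a) (clamp b) := by
    obtain ⟨j, u, w, huw, rfl, rfl⟩ := h.exists_block_adj hab
    obtain rfl | hj := eq_or_ne j 0
    · simpa [clamp_val] using huw.reachable
    · have h_far : j * N ≤ -N ∨ N ≤ j * N := by
        rcases hj.lt_or_gt with hj | hj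
        · exact .inl (by nlinarith)
        · exact .inr (by nlinarith)
      have h_eq : clamp (v + (u : ℕ) + j * N) = clamp (v + (w : ℕ) + j * N) := by
        ext
        simp only [clamp, Fin.coe_clamp]
        omega
      rw [h_eq]
  refine ⟨fun u w => ?_⟩
  have h_reach := hH.preconnected (v + (u : ℕ)) (v + (w : ℕ))
  simp only [SimpleGraph.reachable_iff_reflTransGen] at h_adj h_reach ⊢
  simpa only [Function.onFun, clamp_val] using h_reach.lift' clamp h_adj

theorem IsTiled.bijOn_neighborSet_of_mem_Ioo (h : IsTiled N v H) {i : Fin (N + 1)}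
    (hi : i ∈ Set.Ioo 0 (Fin.last N)) :
    Set.BijOn (fun w : Fin (N + 1) => v + (w : ℕ)) ((block N v H).neighborSet i)
      (H.neighborSet (v + (i : ℕ))) := by
  refine ⟨fun w hw => hw, fun u _ w _ huw => Fin.ext (by simpa using huw), ?_⟩
  intro b hb
  obtain ⟨j, u, w, huw, hi', rfl⟩ := h.exists_block_adj hb
  have h_pos : 0 < (i : ℕ) := hi.1
  have h_lt : (i : ℕ) < N := hi.2
  obtain rfl : j = 0 := eq_of_mul_lt_mul_add (N := N) (by omega) (by omega)
  obtain rfl : i = u := Fin.ext (by lia)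
  exact ⟨w, huw, by simp⟩

theorem IsTiled.neighborSet_left (h : IsTiled N v H) (hN : 0 < N) :
    H.neighborSet v = (fun w : Fin (N + 1) => v + (w : ℕ)) '' (block N v H).neighborSet 0 ∪
      (fun w : Fin (N + 1) => v + (w : ℕ) - N) '' (block N v H).neighborSet (Fin.last N) := by
  ext b
  constructor
  · intro hb
    obtain ⟨j, u, w, huw, hv, rfl⟩ := h.exists_block_adj hb
    obtain ⟨rfl, rfl⟩ | ⟨rfl, rfl⟩ : (j = 0 ∧ u = 0) ∨ (j = -1 ∧ u = Fin.last N) := by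
      rcases (Nat.zero_le u).eq_or_lt with hu0 | hu0
      · left
        have : j * N = 0 := by lia
        exact ⟨by simpa [hN.ne'] using this, Fin.ext hu0.symm⟩
      · right
        obtain rfl : j = -1 := eq_of_mul_lt_mul_add (N := N) (by omega) (by omega)
        exact ⟨rfl, Fin.ext (by simp only [Fin.val_last]; lia)⟩
    · exact .inl ⟨w, huw, by simp⟩
    · exact .inr ⟨w, huw, by ring⟩
  · rintro (⟨w, hw, rfl⟩ | ⟨w, hw, rfl⟩)
    · simpa [block] using hw
    · simpa [sub_eq_add_neg] using (adj_add_mul_iff h.period (-1) _ _).mpr hw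

theorem IsTiled.ncard_neighborSet_left (h : IsTiled N v H) (hN : 0 < N) :
    (H.neighborSet v).ncard =
      ((block N v H).neighborSet 0).ncard + ((block N v H).neighborSet (Fin.last N)).ncard := by
  rw [h.neighborSet_left hN, Set.ncard_union_eq, Set.ncard_image_of_injective,
    Set.ncard_image_of_injective]
  · exact fun u w huw => Fin.ext (by simpa using huw)
  · exact fun u w huw => Fin.ext (by simpa using huw)
  · rw [Set.disjoint_left]
    rintro - ⟨u, hu, rfl⟩ ⟨w, hw, huw⟩
    have hu0 := Fin.val_ne_of_ne ((block N v H).ne_of_adj hu)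
    have hwN := Fin.val_ne_of_ne ((block N v H).ne_of_adj hw)
    simp only [Fin.val_zero, Fin.val_last] at hu0 hwN
    dsimp only at huw
    omega

theorem IsTiled.sum_range_ncard_neighborSet (h : IsTiled N v H) (hN : 0 < N) :
    ∑ i ∈ Finset.range N, (H.neighborSet (v + i)).ncard = 2 * (block N v H).edgeSet.ncard := by
  obtain ⟨m, rfl⟩ := Nat.exists_eq_add_one.mpr hN
  have h_interior (i : Fin m) : (H.neighborSet (v + (i + 1 : ℕ))).ncard =
      ((block (m + 1) v H).neighborSet i.succ.castSucc).ncard := by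
    symm
    exact (h.bijOn_neighborSet_of_mem_Ioo ⟨i.succ_pos, i.succ.castSucc_lt_last⟩).ncard_eq
  rw [Finset.sum_range_succ', Nat.cast_zero, add_zero, h.ncard_neighborSet_left hN,
    ← Fin.sum_univ_eq_sum_range (fun i => (H.neighborSet (v + (i + 1 : ℕ))).ncard)]
  simp only [h_interior]
  rw [← sum_ncard_neighborSet, Fin.sum_univ_castSucc, Fin.sum_univ_succ]
  simp only [Fin.castSucc_zero]
  ring

theorem NonCrossing.isTiled (hH : NonCrossing H) (hN : (N : ℤ) ∈ periods H) (hN0 : 0 < N)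
    (hv : H.Adj v (v + N)) : IsTiled N v H := by
  refine ⟨hN, fun a b hab => ?_⟩
  wlog hlt : a < b generalizing a b
  · obtain ⟨j, u, w, hu, hw⟩ := this b a hab.symm (lt_of_le_of_ne (not_lt.mp hlt) hab.ne')
    exact ⟨j, w, u, hw, hu⟩
  obtain ⟨j, u, hu, rfl⟩ := exists_eq_add_mul_of_pos v hN0 a
  have hb : b ≤ v + j * N + N := by
    by_cases hu0 : (u : ℕ) = 0
    · have := hH.le_add_of_adj hN (by lia) hab
      lia
    · by_contra! h_far
      have hv_shift : H.Adj (v + j * N) (v + j * N + N) := by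
        simpa only [add_right_comm] using (adj_add_mul_iff hN j _ _).mpr hv
      exact hH (by lia) (by lia) h_far hv_shift hab
  exact ⟨j, u, ⟨(b - v - j * N).toNat, by lia⟩, rfl, by dsimp only; lia⟩

end Tiling

section Counting

theorem NonCrossing.eq_of_adj_add {H : SimpleGraph ℤ} (hH : NonCrossing H) {v w N : ℤ}
    (hv : H.Adj v (v + N)) (hw : H.Adj w (w + N)) (h : |w - v| < N) : v = w := by
  rw [abs_lt] at h
  rcases lt_trichotomy v w with hvw | hvw | hwv
  · exact absurd hw (hH hvw (by lia) (by lia) hv)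
  · exact hvw
  · exact absurd hv (hH hwv (by lia) (by lia) hw)

theorem IsTiled.mem_periodicGraphs_iff {N K v : ℕ} {H : SimpleGraph ℤ} (h : IsTiled N v H)
    (hN : 0 < N) : H ∈ periodicGraphs N K ↔ NonCrossing (block N v H) ∧
      (block N v H).Connected ∧ (block N v H).edgeSet.ncard = K := by
  have h_sum : ∑ i ∈ Finset.range N, (H.neighborSet i).ncard =
      2 * (block N v H).edgeSet.ncard := by
    rw [← h.sum_range_ncard_neighborSet hN]
    exact (sum_range_natCast_add_of_periodic (periodic_ncard_neighborSet h.period) v).symm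
  have h_strictMono : StrictMono fun i : Fin (N + 1) => (v + (i : ℕ) : ℤ) := fun i j hij => by
    simpa using hij
  constructor
  · rintro ⟨h_nc, h_conn, -, h_edges⟩
    exact ⟨h_nc.comap h_strictMono, h.connected_block h_conn, by lia⟩
  · rintro ⟨h_nc, h_conn, h_edges⟩
    exact ⟨h.nonCrossing_of_block h_nc, h.connected_of_block hN h_conn, h.period, by lia⟩

theorem ncard_periodicGraphs_adj_add {N : ℕ} (hN : 0 < N) (K v : ℕ) :
    {H ∈ periodicGraphs N K | H.Adj v (v + N)}.ncard = nccEdge (N + 1) K := by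
  rw [nccEdge_succ_eq_ncard]
  refine (Set.InvOn.bijOn (f := block N v) (f' := tile v) ⟨?_, fun G _ => block_tile G⟩
    ?_ ?_).ncard_eq
  · rintro H ⟨hH, hv⟩
    exact (hH.1.isTiled hH.2.2.1 hN hv).tile_block
  · rintro H ⟨hH, hv⟩
    obtain ⟨h_nc, h_conn, h_edges⟩ :=
      ((hH.1.isTiled hH.2.2.1 hN hv).mem_periodicGraphs_iff hN).mp hH
    exact ⟨h_nc, h_conn, h_edges, by simpa [block] using hv⟩
  · rintro G ⟨h_nc, h_conn, h_edges, h_last⟩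
    refine ⟨((isTiled_tile G).mem_periodicGraphs_iff hN).mpr ?_, ?_⟩
    · rw [block_tile]
      exact ⟨h_nc, h_conn, h_edges⟩
    · exact ⟨0, 0, Fin.last N, h_last, by simp, by simp⟩

variable {N : ℕ} [NeZero N]

theorem finite_periodicGraphs (K : ℕ) : (periodicGraphs N K).Finite := by
  have hN : 0 < N := NeZero.pos N
  have h_bij := bijOn_unroll (n := 3 * N) (M := N) (by lia)
  refine (h_bij.finite_iff_finite.mp (Set.toFinite _)).subset fun H hH => ?_
  exact ⟨bandwidthLE_of_mem_periodicGraphs hH hN, by simpa using zsmul_mem hH.2.2.1 3⟩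

theorem ncard_periodicGraphs_exists_adj_add (K : ℕ) :
    {H ∈ periodicGraphs N K | ∃ a, H.Adj a (a + N)}.ncard = N * nccEdge (N + 1) K := by
  have hN : 0 < N := NeZero.pos N
  have h_iUnion : {H ∈ periodicGraphs N K | ∃ a, H.Adj a (a + N)} =
      ⋃ v : Fin N, {H ∈ periodicGraphs N K | H.Adj (v : ℕ) ((v : ℕ) + N)} := by
    ext H
    simp only [Set.mem_ofPred_eq, Set.mem_iUnion, exists_and_left]
    refine and_congr_right fun hH => ⟨?_, fun ⟨v, hv⟩ => ⟨_, hv⟩⟩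
    rintro ⟨a, ha⟩
    obtain ⟨j, u, hu, rfl⟩ := exists_eq_add_mul_of_pos 0 hN a
    refine ⟨⟨u, hu⟩, (adj_add_mul_iff hH.2.2.1 j _ _).mp ?_⟩
    simpa [add_right_comm] using ha
  rw [h_iUnion,
    Set.ncard_iUnion_of_finite fun v => (finite_periodicGraphs K).subset fun H hH => hH.1]
  · simp only [ncard_periodicGraphs_adj_add hN, finsum_eq_sum_of_fintype, Finset.sum_const,
      Finset.card_univ, Fintype.card_fin, smul_eq_mul]
  · intro v w hvw
    refine Set.disjoint_left.mpr fun H hv hw => hvw (Fin.ext ?_)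
    exact_mod_cast hv.1.1.eq_of_adj_add hv.2 hw.2 (abs_lt.mpr ⟨by omega, by omega⟩)

theorem bandwidthLE_sub_one_iff {K : ℕ} {H : SimpleGraph ℤ} (hH : H ∈ periodicGraphs N K) :
    BandwidthLE (N - 1) H ↔ ¬ ∃ a, H.Adj a (a + N) := by
  have hN : 0 < N := NeZero.pos N
  constructor
  · rintro hM ⟨a, ha⟩
    have := abs_le.mp (hM ha)
    lia
  · intro h_arc a b hab
    by_contra! h_long
    have h_abs : |b - a| = N := by
      have := bandwidthLE_of_mem_periodicGraphs hH hN hab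
      lia
    rcases eq_or_eq_neg_of_abs_eq h_abs with h | h
    · exact h_arc ⟨a, by simpa [show b = a + N by linarith] using hab⟩
    · exact h_arc ⟨b, by simpa [show a = b + N by linarith] using hab.symm⟩

theorem nccRot_mul_eq_ncard_periodicGraphs {d : ℕ} (hd : 3 ≤ d) (K : ℕ) :
    nccRot (d * N) (d * K) N = (periodicGraphs N K).ncard := by
  have hN : 0 < N := NeZero.pos N
  have : NeZero (d * N) := ⟨by positivity⟩
  rw [nccRot_eq_ncard_bandwidthLE (M := N) (by nlinarith) rfl (by lia)
    fun G hG hN_period _ => hG.circularBandwidthLE_of_mem_periods hN_period hN]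
  congr 1
  exact Set.sep_eq_self_iff_mem_true.mpr fun H hH => bandwidthLE_of_mem_periodicGraphs hH hN

theorem nccRot_two_mul_eq_ncard_periodicGraphs (K : ℕ) :
    nccRot (2 * N) (2 * K) N = {H ∈ periodicGraphs N K | ¬ ∃ a, H.Adj a (a + N)}.ncard := by
  have hN : 0 < N := NeZero.pos N
  rw [nccRot_eq_ncard_bandwidthLE (M := N - 1) (by lia) rfl le_rfl
    fun G hG hN_period h_edges =>
      hG.circularBandwidthLE_of_even rfl hN_period (by rw [h_edges]; exact even_two_mul K)]
  congr 1
  exact Set.sep_ext_iff.mpr fun H hH => bandwidthLE_sub_one_iff hH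

end Counting

/-- For `d ≥ 3` dividing both `n` and `k`, with `n' = n/d`, `k' = k/d`: the number
of non-crossing connected graphs on `n` vertices with `k` edges invariant under
rotation by `2π/d` equals `n'·f_{n'+1, k'} + s₂(2n', 2k')`. -/
theorem stmt14 (n k d : ℕ) (hd : 3 ≤ d) (hdn : d ∣ n) (hdk : d ∣ k) :
    nccRot n k (n / d) =
      (n / d) * nccEdge (n / d + 1) (k / d) +
        nccRot (2 * (n / d)) (2 * (k / d)) (n / d) := by
  obtain ⟨N, rfl⟩ := hdn
  obtain ⟨K, rfl⟩ := hdk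
  rw [Nat.mul_div_cancel_left N (by lia), Nat.mul_div_cancel_left K (by lia)]
  rcases eq_zero_or_neZero N with rfl | _
  · simp only [mul_zero, zero_mul, zero_add, nccRot_zero_left]
  · rw [nccRot_mul_eq_ncard_periodicGraphs hd, nccRot_two_mul_eq_ncard_periodicGraphs,
      ← ncard_periodicGraphs_exists_adj_add]
    exact (Set.ncard_inter_add_ncard_sdiff_eq_ncard _ _ (finite_periodicGraphs K)).symm
end
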